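/- Let d ≥ 2 and 2(d+1)/(d−1) ≤ q ≤ ∞. Then there is a constant C such that for all j ≥ 0 and all f ∈ L^2(ℝ^d), ‖𝒜_j f‖_{L^q(L^2)} ≤ C 2^{−jd/q} ‖f‖_{L^2(ℝ^d)}. -/

import Mathlib

open MeasureTheory Metric Set
open scoped ENNReal NNReal FourierTransform

noncomputable section

/-- Euclidean `d`-space. -/
abbrev Euc (d : ℕ) : Type := EuclideanSpace ℝ (Fin d)

/-- The normalized surface measure `σ` on the unit sphere `S^{d-1} ⊆ ℝ^d`. -/
def sphereMeasure (d : ℕ) : Measure (Euc d) :=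
  (((volume : Measure (Euc d)).toSphere Set.univ)⁻¹ : ℝ≥0∞) •
    ((volume : Measure (Euc d)).toSphere.map Subtype.val)

/-- The spherical average `A_t f(x) = ∫_{S^{d-1}} f(x - t y) dσ(y)`. -/
def sphAvg {d : ℕ} (f : Euc d → ℂ) (t : ℝ) (x : Euc d) : ℂ :=
  ∫ y, f (x - t • y) ∂(sphereMeasure d)

/-- The dyadic symbols `β_j` built from the bump `β₀`:
`β_j(s) = β₀(2^{-j} s) - β₀(2^{1-j} s)` for `j ≥ 1`. -/
def betaJ (β₀ : ℝ → ℝ) : ℕ → ℝ → ℝ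
  | 0 => β₀
  | (j + 1) => fun s => β₀ ((2 : ℝ) ^ (-(j + 1 : ℤ)) * s) - β₀ ((2 : ℝ) ^ (-(j : ℤ)) * s)

/-- The frequency localization `L_j` with symbol `β_j(|ξ|)`. -/
def freqLoc (d : ℕ) (β₀ : ℝ → ℝ) (j : ℕ) (f : Euc d → ℂ) : Euc d → ℂ :=
  𝓕⁻ (fun ξ => (betaJ β₀ j ‖ξ‖ : ℂ) * 𝓕 f ξ)

/-- `χ` is an admissible time cutoff: smooth, `χ = 1` on a neighborhood of `[1,2]`,
supported in `[1/2,4]`. -/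
def IsCutoff (χ : ℝ → ℝ) : Prop :=
  ContDiff ℝ (⊤ : ℕ∞) χ ∧ (∃ U : Set ℝ, IsOpen U ∧ Set.Icc 1 2 ⊆ U ∧ Set.EqOn χ 1 U) ∧
    Function.support χ ⊆ Set.Icc (1 / 2 : ℝ) 4

/-- `β₀` is an admissible frequency bump: smooth, `β₀(s) = 1` for `|s| < 1/2` and
`β₀(s) = 0` for `|s| > 1`. -/
def IsBump (β₀ : ℝ → ℝ) : Prop :=
  ContDiff ℝ (⊤ : ℕ∞) β₀ ∧ (∀ s : ℝ, |s| < 1 / 2 → β₀ s = 1) ∧ ∀ s : ℝ, 1 < |s| → β₀ s = 0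

/-- The frequency-localized operator `𝒜_j f(x,t) = χ(t) A_t L_j f(x)`. -/
def Aj (d : ℕ) (χ β₀ : ℝ → ℝ) (j : ℕ) (f : Euc d → ℂ) (x : Euc d) (t : ℝ) : ℂ :=
  (χ t : ℂ) * sphAvg (freqLoc d β₀ j f) t x

/-- `L^q` norm (with respect to `μ`) of an `ℝ≥0∞`-valued function, `1 ≤ q ≤ ∞`. -/
def lqNorm {α : Type*} [MeasurableSpace α] (q : ℝ≥0∞) (g : α → ℝ≥0∞)
    (μ : Measure α) : ℝ≥0∞ :=
  if q = ∞ then essSup g μ else (∫⁻ x, g x ^ q.toReal ∂μ) ^ (1 / q.toReal)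

/-- The mixed norm `‖F‖_{L^q(L^r)}` of `F : ℝ^d × ℝ → ℂ`. -/
def mixedNorm (d : ℕ) (q r : ℝ≥0∞) (F : Euc d → ℝ → ℂ) : ℝ≥0∞ :=
  lqNorm q (fun x => lqNorm r (fun t => (‖F x t‖₊ : ℝ≥0∞)) volume) volume

/-!
Polar coordinates in frequency write a spherical mean as `A_t f(x) = ∫ σ̂(tρ) H_x(ρ) dρ`, where
`H_x(ρ)` is `ρ^{d-1}` times the extension operator of the sphere applied to `f̂(ρ ·)`, evaluated
at `ρx`. Since `σ̂(r)` is `r^{-(d-1)/2}` times a pure oscillation up to a lower order error,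
Plancherel in `t` bounds `∫_{1/2}^4 |A_t f(x)|² dt` by `∫ |H_x(ρ)|² (1 + ρ)^{-(d-1)} dρ`.
Minkowski's inequality in `L^{q/2}` moves the `L^q(dx)` norm inside the `ρ`-integral, where the
Stein–Tomas extension theorem, rescaled, applies for each `ρ`; polar coordinates again turn the
result into `∫ |f̂(ξ)|² (1 + |ξ|)^{-2d/q} dξ`, and the weight is `≲ 2^{-2jd/q}` on the `j`-th
dyadic shell.

The Stein–Tomas theorem itself is proved by slicing `ℝ^d` into hyperplanes `x_i = s`: convolution
with a slice of the Fourier transform of `ωᵢ² dσ` is bounded on `L²` uniformly in `s` and maps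
`L¹` to `L^∞` with norm `≲ |s|^{-(d-1)/2}`; interpolation and the one-dimensional
Hardy–Littlewood–Sobolev inequality give the endpoint exponent.
-/

/-! ### Polar coordinates and the normalized surface measure -/

theorem lintegral_eq_lintegral_Ioi_lintegral_sphere {E : Type*} [NormedAddCommGroup E]
    [NormedSpace ℝ E] [FiniteDimensional ℝ E] [Nontrivial E] [MeasurableSpace E] [BorelSpace E]
    (μ : Measure E) [μ.IsAddHaarMeasure] {g : E → ℝ≥0∞} (hg : Measurable g) :
    ∫⁻ x, g x ∂μ = ∫⁻ ρ in Ioi (0 : ℝ), ENNReal.ofReal (ρ ^ (Module.finrank ℝ E - 1)) *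
      ∫⁻ ω : sphere (0 : E) 1, g (ρ • ω.1) ∂μ.toSphere := by
  have hinner : Measurable fun ρ : Ioi (0 : ℝ) ↦
      ∫⁻ ω : sphere (0 : E) 1, g (ρ.1 • ω.1) ∂μ.toSphere :=
    Measurable.lintegral_prod_right'
      (f := fun z : Ioi (0 : ℝ) × sphere (0 : E) 1 ↦ g (z.1.1 • z.2.1)) (by fun_prop)
  calc ∫⁻ x, g x ∂μ = ∫⁻ x : ({0}ᶜ : Set E), g x ∂μ.comap (↑) := by
        rw [lintegral_subtype_comap (measurableSet_singleton _).compl, restrict_compl_singleton]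
    _ = ∫⁻ p : sphere (0 : E) 1 × Ioi (0 : ℝ), g (p.2.1 • p.1.1)
          ∂μ.toSphere.prod (.volumeIoiPow (Module.finrank ℝ E - 1)) := by
        rw [← (Measure.measurePreserving_homeomorphUnitSphereProd μ).lintegral_comp (by fun_prop)]
        refine lintegral_congr fun x ↦ congrArg g ?_
        exact congrArg Subtype.val ((homeomorphUnitSphereProd E).symm_apply_apply x).symm
    _ = ∫⁻ ρ : Ioi (0 : ℝ), ∫⁻ ω : sphere (0 : E) 1, g (ρ.1 • ω.1) ∂μ.toSphere
          ∂.volumeIoiPow (Module.finrank ℝ E - 1) := lintegral_prod_symm' _ (by fun_prop)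
    _ = ∫⁻ ρ : Ioi (0 : ℝ), ENNReal.ofReal (ρ.1 ^ (Module.finrank ℝ E - 1)) *
          ∫⁻ ω : sphere (0 : E) 1, g (ρ.1 • ω.1) ∂μ.toSphere
          ∂.comap (Subtype.val : Ioi (0 : ℝ) → ℝ) volume := by
        rw [Measure.volumeIoiPow, lintegral_withDensity_eq_lintegral_mul _ (by fun_prop) hinner]
        rfl
    _ = _ := lintegral_subtype_comap measurableSet_Ioi fun ρ ↦
        ENNReal.ofReal (ρ ^ (Module.finrank ℝ E - 1)) * ∫⁻ ω, g (ρ • ω.1) ∂μ.toSphere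

/-- The surface area of the unit sphere in `ℝ^d`. -/
def sphereArea (d : ℕ) : ℝ≥0∞ := (volume : Measure (Euc d)).toSphere univ

section SphereMeasure

variable {d : ℕ}

theorem sphereArea_ne_top (d : ℕ) : sphereArea d ≠ ∞ := measure_ne_top _ _

/-- The radial factor `|S^{d-1}| ρ^{d-1} dρ` of Lebesgue measure on `ℝ^d` in polar coordinates. -/
def radialMeasure (d : ℕ) : Measure ℝ :=
  (volume.restrict (Ioi (0 : ℝ))).withDensity fun ρ ↦ sphereArea d * ENNReal.ofReal (ρ ^ (d - 1))

theorem integral_radialMeasure {F : Type*} [NormedAddCommGroup F] [NormedSpace ℝ F]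
    (g : ℝ → F) : ∫ ρ, g ρ ∂radialMeasure d =
      ∫ ρ in Ioi (0 : ℝ), ((sphereArea d).toReal * ρ ^ (d - 1)) • g ρ := by
  rw [radialMeasure, integral_withDensity_eq_integral_toReal_smul (by fun_prop) <| .of_forall
    fun _ ↦ ENNReal.mul_lt_top (sphereArea_ne_top d).lt_top ENNReal.ofReal_lt_top]
  refine setIntegral_congr_fun measurableSet_Ioi fun ρ (hρ : 0 < ρ) ↦ ?_
  simp only [ENNReal.toReal_mul, ENNReal.toReal_ofReal (pow_nonneg hρ.le _)]

instance : SFinite (radialMeasure d) := by unfold radialMeasure; infer_instance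

theorem sphereMeasure_ae_norm_eq_one (d : ℕ) : ∀ᵐ ω ∂sphereMeasure d, ‖ω‖ = 1 := by
  refine Measure.ae_smul_measure ?_ _
  rw [ae_map_iff measurable_subtype_coe.aemeasurable
    (measurableSet_eq_fun measurable_norm measurable_const)]
  exact .of_forall fun ω ↦ norm_eq_of_mem_sphere ω

theorem sphereMeasure_ae_abs_inner_le (v : Euc d) : ∀ᵐ ω ∂sphereMeasure d, |inner ℝ ω v| ≤ ‖v‖ := by
  filter_upwards [sphereMeasure_ae_norm_eq_one d] with ω hω
  simpa [hω] using abs_real_inner_le_norm ω v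

theorem sphereMeasure_ae_abs_apply_le_one (i : Fin d) : ∀ᵐ ω ∂sphereMeasure d, |ω i| ≤ 1 := by
  filter_upwards [sphereMeasure_ae_norm_eq_one d] with ω hω
  exact hω ▸ PiLp.norm_apply_le ω i

open scoped Pointwise in
theorem map_sphereMeasure (R : Euc d ≃ₗᵢ[ℝ] Euc d) : (sphereMeasure d).map R = sphereMeasure d := by
  have hR : MeasurableEmbedding R := R.toHomeomorph.measurableEmbedding
  have h_apply (s : Set (Euc d)) (hs : MeasurableSet s) : sphereMeasure d s =
      (sphereArea d)⁻¹ * (d * volume (Ioo (0 : ℝ) 1 • (sphere (0 : Euc d) 1 ∩ s))) := by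
    rw [sphereMeasure, Measure.smul_apply, Measure.map_apply measurable_subtype_coe hs,
      Measure.toSphere_apply' _ (measurable_subtype_coe hs), Subtype.image_preimage_coe,
      finrank_euclideanSpace_fin, smul_eq_mul, sphereArea]
  refine Measure.ext fun s hs ↦ ?_
  have hcone : Ioo (0 : ℝ) 1 • (sphere (0 : Euc d) 1 ∩ R ⁻¹' s) =
      R ⁻¹' (Ioo (0 : ℝ) 1 • (sphere (0 : Euc d) 1 ∩ s)) := by
    ext x
    simp only [mem_smul, mem_preimage, mem_inter_iff]
    constructor
    · rintro ⟨a, ha, y, ⟨hy, hys⟩, rfl⟩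
      exact ⟨a, ha, R y, ⟨by simpa using hy, hys⟩, (map_smul R a y).symm⟩
    · rintro ⟨a, ha, y, ⟨hy, hys⟩, hx⟩
      exact ⟨a, ha, R.symm y, ⟨by simpa using hy, by simpa using hys⟩, by
        rw [← map_smul, hx, R.symm_apply_apply]⟩
  rw [hR.map_apply, h_apply _ hs, h_apply _ (hR.measurable hs), hcone,
    R.measurePreserving.measure_preimage_emb hR]

variable [NeZero d]

theorem sphereArea_ne_zero (d : ℕ) [NeZero d] : sphereArea d ≠ 0 :=
  fun h ↦ Measure.toSphere_ne_zero (volume : Measure (Euc d)) (Measure.measure_univ_eq_zero.1 h)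

instance : IsProbabilityMeasure (sphereMeasure d) where
  measure_univ := by
    rw [sphereMeasure, Measure.smul_apply, Measure.map_apply measurable_subtype_coe .univ]
    exact ENNReal.inv_mul_cancel (sphereArea_ne_zero d) (sphereArea_ne_top d)

theorem sphereArea_mul_lintegral_sphereMeasure {g : Euc d → ℝ≥0∞} (hg : Measurable g) :
    sphereArea d * ∫⁻ ω, g ω ∂sphereMeasure d =
      ∫⁻ ω : sphere (0 : Euc d) 1, g ω ∂(volume : Measure (Euc d)).toSphere := by
  rw [sphereMeasure, lintegral_smul_measure, lintegral_map hg measurable_subtype_coe, smul_eq_mul,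
    ← sphereArea, ← mul_assoc, ENNReal.mul_inv_cancel (sphereArea_ne_zero d) (sphereArea_ne_top d),
    one_mul]

theorem lintegral_eq_sphereArea_mul_lintegral {g : Euc d → ℝ≥0∞} (hg : Measurable g) :
    ∫⁻ ξ, g ξ = sphereArea d * ∫⁻ ρ in Ioi (0 : ℝ), ENNReal.ofReal (ρ ^ (d - 1)) *
      ∫⁻ ω, g (ρ • ω) ∂sphereMeasure d := by
  rw [lintegral_eq_lintegral_Ioi_lintegral_sphere _ hg,
    ← lintegral_const_mul' _ _ (sphereArea_ne_top d), finrank_euclideanSpace_fin]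
  refine lintegral_congr fun ρ ↦ ?_
  rw [← sphereArea_mul_lintegral_sphereMeasure (g := fun ω ↦ g (ρ • ω)) (by fun_prop),
    mul_left_comm]

theorem map_smul_radialMeasure_prod_sphereMeasure :
    ((radialMeasure d).prod (sphereMeasure d)).map (fun z : ℝ × Euc d ↦ z.1 • z.2) = volume := by
  refine Measure.ext_of_lintegral _ fun g hg ↦ ?_
  rw [lintegral_map hg (by fun_prop), lintegral_prod _ (by fun_prop), radialMeasure,
    lintegral_withDensity_eq_lintegral_mul _ (by fun_prop)
      (Measurable.lintegral_prod_right' (f := fun z : ℝ × Euc d ↦ g (z.1 • z.2)) (by fun_prop)),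
    lintegral_eq_sphereArea_mul_lintegral hg, ← lintegral_const_mul' _ _ (sphereArea_ne_top d)]
  simp only [Pi.mul_apply, mul_assoc]

theorem integral_eq_integral_Ioi_integral_sphereMeasure {F : Type*} [NormedAddCommGroup F]
    [NormedSpace ℝ F] {g : Euc d → F} (hg : Integrable g) :
    ∫ ξ, g ξ = ∫ ρ in Ioi (0 : ℝ), ((sphereArea d).toReal * ρ ^ (d - 1)) •
      ∫ ω, g (ρ • ω) ∂sphereMeasure d := by
  rw [← map_smul_radialMeasure_prod_sphereMeasure] at hg ⊢
  have hprod := (integrable_map_measure hg.1 (by fun_prop)).1 hg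
  rw [integral_map (by fun_prop) hg.1, ← integral_radialMeasure]
  exact integral_prod _ hprod

end SphereMeasure

/-! ### Asymptotics of the Fourier transform of the sphere -/

section OscillatoryODE

open Real

theorem exists_norm_sub_le_div_of_norm_deriv_le {F : Type*} [NormedAddCommGroup F]
    [NormedSpace ℝ F] [CompleteSpace F] {u u' : ℝ → F} {C : ℝ}
    (hu : ∀ r, 1 ≤ r → HasDerivAt u (u' r) r) (hu' : ∀ r, 1 ≤ r → ‖u' r‖ ≤ C / r ^ 2) :
    ∃ L, ∀ r, 1 ≤ r → ‖u r - L‖ ≤ C / r := by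
  have hC : 0 ≤ C := by simpa using (norm_nonneg _).trans (hu' 1 le_rfl)
  have hdist (r s : ℝ) (hr : 1 ≤ r) (hrs : r ≤ s) : ‖u s - u r‖ ≤ C / r := by
    have hbound : ‖u s - u r‖ ≤ C / r - C / s := by
      refine image_norm_le_of_norm_deriv_right_le_deriv_boundary' (f := fun s ↦ u s - u r)
        (f' := u') (a := r) (b := s) (B := fun s ↦ C / r - C / s) (B' := fun s ↦ C / s ^ 2)
        (fun t ht ↦ ((hu t (hr.trans ht.1)).sub_const _).continuousAt.continuousWithinAt)
        (fun t ht ↦ ((hu t (hr.trans ht.1)).sub_const _).hasDerivWithinAt) (by simp)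
        (fun t ht ↦ ?_) (fun t ht ↦ ?_) (fun t ht ↦ hu' t (hr.trans ht.1)) ⟨hrs, le_rfl⟩
      · have : t ≠ 0 := by linarith [ht.1]
        fun_prop (disch := assumption)
      · have ht0 : t ≠ 0 := by linarith [ht.1]
        simpa [div_eq_mul_inv] using
          (((hasDerivAt_inv ht0).const_mul C).const_sub (C / r)).hasDerivWithinAt
    exact hbound.trans (sub_le_self _ (div_nonneg hC (by linarith)))
  have hlim : Filter.Tendsto (fun r : ℝ ↦ C / r) .atTop (nhds 0) :=
    tendsto_const_nhds.div_atTop Filter.tendsto_id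
  have hcauchy : CauchySeq u := by
    refine Metric.cauchySeq_iff'.2 fun ε hε ↦ ?_
    obtain ⟨N, hN, hN1⟩ := ((hlim.eventually_lt_const hε).and (Filter.eventually_ge_atTop 1)).exists
    exact ⟨N, fun s hs ↦ (dist_eq_norm (u s) _).trans_lt ((hdist N s hN1 hs).trans_lt hN)⟩
  obtain ⟨L, hL⟩ := cauchySeq_tendsto_of_complete hcauchy
  refine ⟨L, fun r hr ↦ ?_⟩
  rw [norm_sub_rev]
  exact le_of_tendsto (hL.sub_const (u r)).norm
    ((Filter.eventually_ge_atTop r).mono fun s hs ↦ hdist r s hr hs)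

theorem exists_norm_le_of_norm_deriv_le_div_sq_mul {F : Type*} [NormedAddCommGroup F]
    [NormedSpace ℝ F] {u u' : ℝ → F} {κ : ℝ} (hκ : 0 ≤ κ)
    (hu : ∀ r, 1 ≤ r → HasDerivAt u (u' r) r) (hu' : ∀ r, 1 ≤ r → ‖u' r‖ ≤ κ / r ^ 2 * ‖u r‖) :
    ∃ D, ∀ r, 1 ≤ r → ‖u r‖ ≤ D := by
  set A := ‖u 1‖ + 1
  have hA : 0 < A := by positivity
  refine ⟨A * exp (κ + 1), fun r hr ↦ ?_⟩
  have hB (t : ℝ) (ht : 1 ≤ t) : HasDerivAt (fun t ↦ A * exp ((κ + 1) * (1 - t⁻¹)))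
      ((κ + 1) / t ^ 2 * (A * exp ((κ + 1) * (1 - t⁻¹)))) t := by
    have ht0 : t ≠ 0 := by linarith
    refine ((((hasDerivAt_inv ht0).const_sub 1).const_mul (κ + 1)).exp.const_mul A).congr_deriv ?_
    field_simp
  have hgronwall : ‖u r‖ ≤ A * exp ((κ + 1) * (1 - r⁻¹)) := by
    refine image_norm_le_of_norm_deriv_right_lt_deriv_boundary' (f' := u')
      (fun t ht ↦ (hu t ht.1).continuousAt.continuousWithinAt)
      (fun t ht ↦ (hu t ht.1).hasDerivWithinAt) (by simp [A])
      (fun t ht ↦ (hB t ht.1).continuousAt.continuousWithinAt)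
      (fun t ht ↦ (hB t ht.1).hasDerivWithinAt) (fun t ht heq ↦ ?_) ⟨hr, le_rfl⟩
    have ht0 : 0 < t := by linarith [ht.1]
    have : 0 < A * exp ((κ + 1) * (1 - t⁻¹)) := by positivity
    refine (hu' t ht.1).trans_lt ?_
    rw [heq]
    gcongr
    linarith
  refine hgronwall.trans ?_
  gcongr
  exact mul_le_of_le_one_right (by linarith) (sub_le_self 1 (by positivity))

theorem hasDerivAt_exp_neg_mul_I_mul {w w' : ℝ → ℝ} {w'' r : ℝ} (hw : HasDerivAt w (w' r) r)
    (hw' : HasDerivAt w' w'' r) :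
    HasDerivAt (fun r : ℝ ↦ Complex.exp (↑(-r) * Complex.I) * (w' r + w r * Complex.I))
      (Complex.exp (↑(-r) * Complex.I) * (w'' + w r : ℝ)) r := by
  have hexp : HasDerivAt (fun r : ℝ ↦ Complex.exp (↑(-r) * Complex.I))
      (Complex.exp (↑(-r) * Complex.I) * (-1 * Complex.I)) r := by
    simpa using ((hasDerivAt_neg r).ofReal_comp.mul_const Complex.I).cexp
  refine (hexp.mul (hw'.ofReal_comp.add (hw.ofReal_comp.mul_const Complex.I))).congr_deriv ?_
  simp only [Pi.add_apply]
  push_cast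
  linear_combination -Complex.exp (-r * Complex.I) * w r * Complex.I_mul_I

/- In the variable `u = e^{-ir} (w' + i w)` the equation `w'' = (p - 1) w` becomes
`u' = e^{-ir} p w`; since `|u'| ≤ (κ / r²) |u|`, `u` has a limit, attained at rate `1 / r`. -/
theorem exists_abs_sub_cos_sin_le_of_hasDerivAt {w w' p : ℝ → ℝ} {κ : ℝ} (hκ : 0 ≤ κ)
    (hw : ∀ r, 1 ≤ r → HasDerivAt w (w' r) r)
    (hw' : ∀ r, 1 ≤ r → HasDerivAt w' ((p r - 1) * w r) r) (hp : ∀ r, 1 ≤ r → |p r| ≤ κ / r ^ 2) :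
    ∃ A B C, 0 ≤ C ∧ (∀ r, 1 ≤ r → |w r| ≤ C ∧ |w' r| ≤ C) ∧
      ∀ r, 1 ≤ r → |w r - (A * cos r + B * sin r)| ≤ C / r := by
  set z : ℝ → ℂ := fun r ↦ w' r + w r * Complex.I
  set u : ℝ → ℂ := fun r ↦ Complex.exp (↑(-r) * Complex.I) * z r
  have hnorm (r : ℝ) : ‖u r‖ = ‖z r‖ := by
    simp only [u, norm_mul, Complex.norm_exp_ofReal_mul_I, one_mul]
  have hzre (r : ℝ) : (z r).re = w' r := by simp [z]
  have hzim (r : ℝ) : (z r).im = w r := by simp [z]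
  have hu (r : ℝ) (hr : 1 ≤ r) :
      HasDerivAt u (Complex.exp (↑(-r) * Complex.I) * (p r * w r : ℝ)) r :=
    (hasDerivAt_exp_neg_mul_I_mul (hw r hr) (hw' r hr)).congr_deriv (by ring_nf)
  have hu' (r : ℝ) (hr : 1 ≤ r) :
      ‖Complex.exp (↑(-r) * Complex.I) * (p r * w r : ℝ)‖ ≤ κ / r ^ 2 * ‖u r‖ := by
    rw [norm_mul, Complex.norm_exp_ofReal_mul_I, one_mul, Complex.norm_real, norm_mul, hnorm]
    exact mul_le_mul (hp r hr) (hzim r ▸ Complex.abs_im_le_norm (z r)) (norm_nonneg _)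
      (by positivity)
  obtain ⟨D, hD⟩ := exists_norm_le_of_norm_deriv_le_div_sq_mul hκ hu hu'
  have hD0 : 0 ≤ D := (norm_nonneg _).trans (hD 1 le_rfl)
  obtain ⟨L, hL⟩ := exists_norm_sub_le_div_of_norm_deriv_le (C := κ * D) hu fun r hr ↦
    (hu' r hr).trans <| by rw [mul_div_right_comm]; gcongr; exact hD r hr
  refine ⟨L.im, L.re, D + κ * D, by positivity, fun r hr ↦ ?_, fun r hr ↦ ?_⟩
  · have hz : ‖z r‖ ≤ D + κ * D := by nlinarith [hD r hr, hnorm r]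
    exact ⟨hzim r ▸ (Complex.abs_im_le_norm _).trans hz,
      hzre r ▸ (Complex.abs_re_le_norm _).trans hz⟩
  · have hexp : Complex.exp (r * Complex.I) * (u r - L) =
        z r - Complex.exp (r * Complex.I) * L := by
      simp only [u]
      rw [mul_sub, ← mul_assoc, ← Complex.exp_add]
      simp
    have him : w r - (L.im * cos r + L.re * sin r) =
        (Complex.exp (r * Complex.I) * (u r - L)).im := by
      rw [hexp, Complex.sub_im, hzim, Complex.mul_im, Complex.exp_ofReal_mul_I_re,
        Complex.exp_ofReal_mul_I_im]
      ring
    calc |w r - (L.im * cos r + L.re * sin r)| ≤ ‖u r - L‖ := by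
          rw [him, ← one_mul ‖u r - L‖, ← Complex.norm_exp_ofReal_mul_I r, ← norm_mul]
          exact Complex.abs_im_le_norm _
      _ ≤ κ * D / r := hL r hr
      _ ≤ (D + κ * D) / r := by gcongr; linarith

end OscillatoryODE

section ParametricTrig

variable {X : Type*} [MeasurableSpace X] {μ : Measure X} {P α β : X → ℝ}

theorem hasDerivAt_integral_mul_cos (hP : Integrable P μ) (hPβ : Integrable (fun x ↦ P x * β x) μ)
    (hα : AEStronglyMeasurable α μ) (hβ : AEStronglyMeasurable β μ) (ε : ℝ) :
    HasDerivAt (fun ε ↦ ∫ x, P x * Real.cos (α x + ε * β x) ∂μ)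
      (-∫ x, P x * β x * Real.sin (α x + ε * β x) ∂μ) ε := by
  rw [← integral_neg]
  refine (hasDerivAt_integral_of_dominated_loc_of_deriv_le (s := univ)
    (bound := fun x ↦ ‖P x * β x‖) (F := fun ε x ↦ P x * Real.cos (α x + ε * β x))
    (F' := fun ε x ↦ -(P x * β x * Real.sin (α x + ε * β x)))
    Filter.univ_mem (.of_forall fun _ ↦ hP.1.mul (by fun_prop)) ?_
    (hPβ.1.mul (by fun_prop)).neg ?_ hPβ.norm ?_).2
  · refine hP.norm.mono' (hP.1.mul (by fun_prop)) (.of_forall fun x ↦ ?_)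
    rw [norm_mul]
    exact mul_le_of_le_one_right (norm_nonneg _) (Real.abs_cos_le_one _)
  · refine .of_forall fun x ε _ ↦ ?_
    rw [norm_neg, norm_mul]
    exact mul_le_of_le_one_right (norm_nonneg _) (Real.abs_sin_le_one _)
  · refine .of_forall fun x ε _ ↦ ?_
    have h : HasDerivAt (fun ε : ℝ ↦ α x + ε * β x) (β x) ε := by
      simpa using ((hasDerivAt_id ε).mul_const (β x)).const_add (α x)
    exact (h.cos.const_mul (P x)).congr_deriv (by ring)

theorem hasDerivAt_integral_mul_sin (hP : Integrable P μ) (hPβ : Integrable (fun x ↦ P x * β x) μ)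
    (hα : AEStronglyMeasurable α μ) (hβ : AEStronglyMeasurable β μ) (ε : ℝ) :
    HasDerivAt (fun ε ↦ ∫ x, P x * Real.sin (α x + ε * β x) ∂μ)
      (∫ x, P x * β x * Real.cos (α x + ε * β x) ∂μ) ε := by
  have hshift (x : X) (ε : ℝ) :
      α x - Real.pi / 2 + ε * β x = α x + ε * β x - Real.pi / 2 := by ring
  simpa only [hshift, Real.cos_sub_pi_div_two, Real.sin_sub_pi_div_two, mul_neg, integral_neg,
    neg_neg] using hasDerivAt_integral_mul_cos (α := fun x ↦ α x - Real.pi / 2) hP hPβ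
      (by fun_prop) hβ ε

end ParametricTrig

theorem hasDerivAt_norm_add_smul {E : Type*} [NormedAddCommGroup E] [InnerProductSpace ℝ E]
    {x v : E} {ε : ℝ} (h : x + ε • v ≠ 0) :
    HasDerivAt (fun ε : ℝ ↦ ‖x + ε • v‖) (inner ℝ (x + ε • v) v / ‖x + ε • v‖) ε := by
  have hline : HasDerivAt (fun ε : ℝ ↦ x + ε • v) v ε := by
    simpa using ((hasDerivAt_id ε).smul_const v).const_add x
  have : 0 < ‖x + ε • v‖ := norm_pos_iff.2 h
  simpa [Real.sqrt_sq, mul_div_mul_left] using hline.norm_sq.sqrt (by positivity)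

section SphereFourier

variable {d : ℕ} [NeZero d]

/-- The radial profile of the Fourier transform of the normalized surface measure:
`∫ e^{i⟨ω, x⟩} dσ(ω) = sphereFourier d ‖x‖`. -/
def sphereFourier (d : ℕ) [NeZero d] (r : ℝ) : ℝ := ∫ ω, Real.cos (r * ω 0) ∂sphereMeasure d

/-- The (real) Fourier transform of the weighted surface measure `⟨ω, v⟩² dσ(ω)`. The weights for
`v` in an orthonormal basis add up to `1` and each vanishes where the tangent space of the sphere
contains `v`. -/
def sphereKernel (v x : Euc d) : ℝ :=
  ∫ ω, inner ℝ ω v ^ 2 * Real.cos (inner ℝ ω x) ∂sphereMeasure d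

theorem integral_cos_inner_sphereMeasure (x : Euc d) :
    ∫ ω, Real.cos (inner ℝ ω x) ∂sphereMeasure d = sphereFourier d ‖x‖ := by
  set v : Euc d := EuclideanSpace.single 0 ‖x‖
  have hv : ‖x‖ = ‖v‖ := by simp [v]
  set R := (ℝ ∙ (x - v))ᗮ.reflection
  have hR : R x = v := Submodule.reflection_sub hv
  have hm : Measurable R := R.continuous.measurable
  rw [sphereFourier]
  conv_rhs => rw [← map_sphereMeasure R]
  rw [integral_map hm.aemeasurable (by fun_prop)]
  refine integral_congr_ae (.of_forall fun ω ↦ ?_)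
  dsimp only
  rw [← R.inner_map_map ω x, hR, EuclideanSpace.inner_single_right]
  rfl

theorem integrable_inner_sphereMeasure (v : Euc d) :
    Integrable (fun ω ↦ inner ℝ ω v) (sphereMeasure d) :=
  .of_bound (by fun_prop) _ (sphereMeasure_ae_abs_inner_le v)

theorem integrable_inner_mul_inner_sphereMeasure (v : Euc d) :
    Integrable (fun ω ↦ inner ℝ ω v * inner ℝ ω v) (sphereMeasure d) := by
  refine .of_bound (by fun_prop) (‖v‖ * ‖v‖) ?_
  filter_upwards [sphereMeasure_ae_abs_inner_le v] with ω hω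
  rw [norm_mul]
  exact mul_le_mul hω hω (norm_nonneg _) (norm_nonneg _)

theorem hasDerivAt_integral_cos_inner_add_smul (x v : Euc d) (ε : ℝ) :
    HasDerivAt (fun ε ↦ sphereFourier d ‖x + ε • v‖)
      (-∫ ω, inner ℝ ω v * Real.sin (inner ℝ ω (x + ε • v)) ∂sphereMeasure d) ε := by
  simpa only [inner_add_right, inner_smul_right, one_mul, ← integral_cos_inner_sphereMeasure] using
    hasDerivAt_integral_mul_cos (P := fun _ ↦ 1) (α := fun ω : Euc d ↦ inner ℝ ω x)
      (integrable_const 1) (by simpa using integrable_inner_sphereMeasure v)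
      (by fun_prop) (by fun_prop) ε

theorem hasDerivAt_integral_inner_mul_sin_inner_add_smul (x v : Euc d) (ε : ℝ) :
    HasDerivAt (fun ε ↦ ∫ ω, inner ℝ ω v * Real.sin (inner ℝ ω (x + ε • v)) ∂sphereMeasure d)
      (sphereKernel v (x + ε • v)) ε := by
  simpa only [inner_add_right, inner_smul_right, sphereKernel, sq] using
    hasDerivAt_integral_mul_sin (α := fun ω : Euc d ↦ inner ℝ ω x)
      (integrable_inner_sphereMeasure v) (integrable_inner_mul_inner_sphereMeasure v)
      (by fun_prop) (by fun_prop) ε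

theorem hasDerivAt_sphereFourier (r : ℝ) :
    HasDerivAt (sphereFourier d) (-∫ ω, ω 0 * Real.sin (r * ω 0) ∂sphereMeasure d) r := by
  have hint : Integrable (fun ω : Euc d ↦ ω 0) (sphereMeasure d) :=
    .of_bound (by fun_prop) 1 (sphereMeasure_ae_abs_apply_le_one 0)
  have h := hasDerivAt_integral_mul_cos (P := fun _ ↦ 1) (α := fun _ ↦ 0) (integrable_const 1)
    (by simpa using hint) (by fun_prop) (by fun_prop) r
  simp only [one_mul, zero_add] at h
  exact h

theorem differentiable_sphereFourier : Differentiable ℝ (sphereFourier d) :=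
  fun r ↦ (hasDerivAt_sphereFourier r).differentiableAt

theorem differentiable_deriv_sphereFourier : Differentiable ℝ (deriv (sphereFourier d)) := by
  intro r
  have hint : Integrable (fun ω : Euc d ↦ ω 0) (sphereMeasure d) :=
    .of_bound (by fun_prop) 1 (sphereMeasure_ae_abs_apply_le_one 0)
  have hint' : Integrable (fun ω : Euc d ↦ ω 0 * ω 0) (sphereMeasure d) := by
    simpa [EuclideanSpace.inner_single_right] using
      integrable_inner_mul_inner_sphereMeasure (EuclideanSpace.single (0 : Fin d) (1 : ℝ))
  have h := (hasDerivAt_integral_mul_sin (α := fun _ ↦ 0) hint hint' (by fun_prop)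
    (by fun_prop) r).neg.differentiableAt
  simp only [zero_add] at h
  rwa [funext fun r ↦ (hasDerivAt_sphereFourier (d := d) r).deriv]

theorem sphereKernel_eq (v : Euc d) {x : Euc d} (hx : x ≠ 0) :
    sphereKernel v x = -(deriv (deriv (sphereFourier d)) ‖x‖ * (inner ℝ x v / ‖x‖) ^ 2 +
      deriv (sphereFourier d) ‖x‖ * (‖v‖ ^ 2 - (inner ℝ x v / ‖x‖) ^ 2) / ‖x‖) := by
  have hne : ∀ᶠ ε in nhds (0 : ℝ), x + ε • v ≠ 0 :=
    ContinuousAt.eventually_ne (by fun_prop) (by simpa using hx)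
  have hfirst : ∀ᶠ ε in nhds (0 : ℝ),
      -∫ ω, inner ℝ ω v * Real.sin (inner ℝ ω (x + ε • v)) ∂sphereMeasure d =
        deriv (sphereFourier d) ‖x + ε • v‖ * (inner ℝ (x + ε • v) v / ‖x + ε • v‖) := by
    filter_upwards [hne] with ε hε
    exact (hasDerivAt_integral_cos_inner_add_smul x v ε).unique
      ((differentiable_sphereFourier _).hasDerivAt.comp ε (hasDerivAt_norm_add_smul hε))
  have hnorm : HasDerivAt (fun ε : ℝ ↦ ‖x + ε • v‖) (inner ℝ x v / ‖x‖) 0 := by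
    simpa using hasDerivAt_norm_add_smul (v := v) (ε := 0) (by simpa using hx)
  have hinner : HasDerivAt (fun ε : ℝ ↦ inner ℝ (x + ε • v) v) (‖v‖ ^ 2) 0 := by
    simpa [inner_add_left, inner_smul_left] using
      ((hasDerivAt_id (0 : ℝ)).mul_const (inner ℝ v v)).const_add (inner ℝ x v)
  have hcomp : HasDerivAt (fun ε : ℝ ↦ deriv (sphereFourier d) ‖x + ε • v‖)
      (deriv (deriv (sphereFourier d)) ‖x‖ * (inner ℝ x v / ‖x‖)) 0 := by
    have h := (differentiable_deriv_sphereFourier (d := d) ‖x + (0 : ℝ) • v‖).hasDerivAt.comp 0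
      hnorm
    rwa [zero_smul, add_zero] at h
  have hsecond :=
    ((hasDerivAt_integral_inner_mul_sin_inner_add_smul x v 0).neg.congr_of_eventuallyEq
      (Filter.EventuallyEq.symm hfirst)).unique (hcomp.mul (hinner.div hnorm (by simpa using hx)))
  have : ‖x‖ ≠ 0 := norm_ne_zero_iff.2 hx
  simp only [zero_smul, add_zero] at hsecond
  rw [← neg_eq_iff_eq_neg, hsecond]
  field_simp

theorem integrable_inner_sq_mul_cos_inner_sphereMeasure (v x : Euc d) :
    Integrable (fun ω ↦ inner ℝ ω v ^ 2 * Real.cos (inner ℝ ω x)) (sphereMeasure d) := by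
  refine (integrable_inner_mul_inner_sphereMeasure v).mono (by fun_prop) (.of_forall fun ω ↦ ?_)
  rw [norm_mul, sq]
  exact mul_le_of_le_one_right (norm_nonneg _) (Real.abs_cos_le_one _)

theorem sum_sphereKernel_basis {ι : Type*} [Fintype ι] (b : OrthonormalBasis ι ℝ (Euc d))
    (x : Euc d) : ∑ i, sphereKernel (b i) x = sphereFourier d ‖x‖ := by
  simp only [sphereKernel]
  rw [← integral_finsetSum _ fun i _ ↦ integrable_inner_sq_mul_cos_inner_sphereMeasure (b i) x,
    ← integral_cos_inner_sphereMeasure]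
  refine integral_congr_ae ?_
  filter_upwards [sphereMeasure_ae_norm_eq_one d] with ω hω
  rw [← Finset.sum_mul, b.sum_sq_inner_left, hω, one_pow, one_mul]

theorem deriv_deriv_sphereFourier {r : ℝ} (hr : 0 < r) :
    deriv (deriv (sphereFourier d)) r =
      -sphereFourier d r - (d - 1) / r * deriv (sphereFourier d) r := by
  set b := EuclideanSpace.basisFun (Fin d) ℝ
  set x : Euc d := r • b 0
  have hxr : ‖x‖ = r := by simp [x, norm_smul, abs_of_pos hr, b]
  have hx : x ≠ 0 := by rw [← norm_pos_iff, hxr]; exact hr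
  have hsum := sum_sphereKernel_basis b x
  simp only [sphereKernel_eq _ hx, hxr, b.orthonormal.norm_eq_one] at hsum
  have hsq : ∑ i, (inner ℝ x (b i) / r) ^ 2 = 1 := by
    simp only [div_pow, ← Finset.sum_div]
    rw [OrthonormalBasis.sum_sq_inner_left, hxr, div_self (by positivity)]
  rw [Finset.sum_neg_distrib, Finset.sum_add_distrib, ← Finset.mul_sum, hsq, ← Finset.sum_div,
    ← Finset.mul_sum, Finset.sum_sub_distrib, hsq] at hsum
  simp only [one_pow, Finset.sum_const, Finset.card_univ, Fintype.card_fin, nsmul_eq_mul] at hsum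
  linear_combination -hsum

theorem abs_sphereFourier_le_one (r : ℝ) : |sphereFourier d r| ≤ 1 := by
  have h := norm_integral_le_of_norm_le_const (μ := sphereMeasure d)
    (f := fun ω ↦ Real.cos (r * ω 0)) (.of_forall fun ω ↦ Real.abs_cos_le_one (r * ω 0))
  rwa [probReal_univ, mul_one] at h

theorem abs_sphereKernel_le (v x : Euc d) : |sphereKernel v x| ≤ ‖v‖ ^ 2 := by
  have h := norm_integral_le_of_norm_le_const (μ := sphereMeasure d) (C := ‖v‖ ^ 2)
    (f := fun ω ↦ inner ℝ ω v ^ 2 * Real.cos (inner ℝ ω x)) ?_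
  · rwa [probReal_univ, mul_one] at h
  · filter_upwards [sphereMeasure_ae_abs_inner_le v] with ω hω
    rw [norm_mul, norm_pow]
    exact (mul_le_of_le_one_right (by positivity) (Real.abs_cos_le_one _)).trans
      (pow_le_pow_left₀ (norm_nonneg _) hω 2)

theorem hasDerivAt_rpow_mul_sphereFourier (a : ℝ) {r : ℝ} (hr : 0 < r) :
    HasDerivAt (fun r ↦ r ^ a * sphereFourier d r)
      (r ^ a * (deriv (sphereFourier d) r + a / r * sphereFourier d r)) r := by
  refine ((Real.hasDerivAt_rpow_const (p := a) (.inl hr.ne')).mul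
    (differentiable_sphereFourier r).hasDerivAt).congr_deriv ?_
  rw [Real.rpow_sub_one hr.ne']
  field_simp
  ring

theorem hasDerivAt_rpow_mul_deriv_sphereFourier {a r : ℝ} (hr : 0 < r) (ha : a = (d - 1) / 2) :
    HasDerivAt (fun r ↦ r ^ a * (deriv (sphereFourier d) r + a / r * sphereFourier d r))
      (((a ^ 2 - a) / r ^ 2 - 1) * (r ^ a * sphereFourier d r)) r := by
  have hinv : HasDerivAt (fun r : ℝ ↦ a / r) (-(a / r ^ 2)) r := by
    simpa [div_eq_mul_inv] using (hasDerivAt_inv hr.ne').const_mul a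
  refine ((Real.hasDerivAt_rpow_const (p := a) (.inl hr.ne')).mul
    ((differentiable_deriv_sphereFourier r).hasDerivAt.add
      (hinv.mul (differentiable_sphereFourier r).hasDerivAt))).congr_deriv ?_
  rw [Real.rpow_sub_one hr.ne', deriv_deriv_sphereFourier hr,
    show (d - 1 : ℝ) = 2 * a by linear_combination -2 * ha]
  simp only [Pi.add_apply, Pi.mul_apply]
  field_simp
  ring

/- `r ^ a * sphereFourier d r` with `a = (d - 1) / 2` removes the first order term of the Bessel
equation `deriv_deriv_sphereFourier`, leaving `w'' = (O(r⁻²) - 1) w`. -/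
theorem exists_abs_sphereFourier_sub_cos_sin_le : ∃ A B C : ℝ, 0 ≤ C ∧
    (∀ r ≥ 1, |sphereFourier d r| ≤ C * r ^ (-((d - 1) / 2 : ℝ)) ∧
      |deriv (sphereFourier d) r| ≤ C * r ^ (-((d - 1) / 2 : ℝ))) ∧
    ∀ r ≥ 1, |sphereFourier d r - r ^ (-((d - 1) / 2 : ℝ)) * (A * Real.cos r + B * Real.sin r)| ≤
      C * r ^ (-((d - 1) / 2 : ℝ)) / r := by
  obtain ⟨a, ha⟩ : ∃ a : ℝ, a = (d - 1) / 2 := ⟨_, rfl⟩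
  rw [← ha]
  have ha0 : 0 ≤ a := by
    have : (1 : ℝ) ≤ d := mod_cast NeZero.one_le
    rw [ha]
    linarith
  obtain ⟨A, B, C, hC, hbdd, hasymp⟩ := exists_abs_sub_cos_sin_le_of_hasDerivAt
    (κ := |a ^ 2 - a|) (abs_nonneg _)
    (fun r hr ↦ hasDerivAt_rpow_mul_sphereFourier (d := d) a (zero_lt_one.trans_le hr))
    (fun r hr ↦ hasDerivAt_rpow_mul_deriv_sphereFourier (zero_lt_one.trans_le hr) ha)
    (fun r _ ↦ by rw [abs_div, abs_of_nonneg (sq_nonneg r)])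
  have hcancel {r y c : ℝ} (hr : 1 ≤ r) (h : |r ^ a * y| ≤ c) : |y| ≤ c * r ^ (-a) := by
    have : 0 < r ^ a := by positivity
    rw [abs_mul, abs_of_pos this] at h
    rwa [Real.rpow_neg (by positivity), ← div_eq_mul_inv, le_div_iff₀' this]
  refine ⟨A, B, C * (1 + a), by positivity, fun r hr ↦ ?_, fun r hr ↦ ?_⟩
  · have hM : |sphereFourier d r| ≤ C * r ^ (-a) := hcancel hr (hbdd r hr).1
    have hlow : |a / r * sphereFourier d r| ≤ a * (C * r ^ (-a)) := by
      rw [abs_mul, abs_of_nonneg (by positivity)]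
      gcongr
      exact div_le_self ha0 hr
    refine ⟨hM.trans (by gcongr; nlinarith), ?_⟩
    calc |deriv (sphereFourier d) r|
        ≤ |deriv (sphereFourier d) r + a / r * sphereFourier d r| +
            |a / r * sphereFourier d r| := by
          simpa using abs_sub (deriv (sphereFourier d) r + a / r * sphereFourier d r)
            (a / r * sphereFourier d r)
      _ ≤ C * r ^ (-a) + a * (C * r ^ (-a)) := add_le_add (hcancel hr (hbdd r hr).2) hlow
      _ = C * (1 + a) * r ^ (-a) := by ring
  · have : sphereFourier d r - r ^ (-a) * (A * Real.cos r + B * Real.sin r) =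
        r ^ (-a) * (r ^ a * sphereFourier d r - (A * Real.cos r + B * Real.sin r)) := by
      rw [Real.rpow_neg (by positivity)]
      field_simp
    rw [this, abs_mul, abs_of_nonneg (by positivity)]
    calc _ ≤ r ^ (-a) * (C / r) := by gcongr; exact hasymp r hr
      _ = C * r ^ (-a) / r := by ring
      _ ≤ C * (1 + a) * r ^ (-a) / r := by gcongr; nlinarith

theorem exists_abs_sphereKernel_le_rpow : ∃ C : ℝ, 0 < C ∧ ∀ v : Euc d, ‖v‖ = 1 →
    ∀ x : Euc d, x ≠ 0 → |sphereKernel v x| ≤ C * ‖x‖ ^ (-((d - 1) / 2 : ℝ)) := by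
  obtain ⟨A, B, C, hC, hM, -⟩ := exists_abs_sphereFourier_sub_cos_sin_le (d := d)
  have hd : (1 : ℝ) ≤ d := mod_cast NeZero.one_le
  refine ⟨C * (d + 1) + 1, by positivity, fun v hv x hx ↦ ?_⟩
  have hr : 0 < ‖x‖ := norm_pos_iff.2 hx
  rcases le_total 1 ‖x‖ with h | h
  · obtain ⟨hM, hM'⟩ := hM ‖x‖ h
    set D := C * ‖x‖ ^ (-((d - 1) / 2 : ℝ))
    set c := (inner ℝ x v / ‖x‖) ^ 2
    have hc : c ≤ 1 := by
      rw [sq_le_one_iff_abs_le_one, abs_div, abs_norm, div_le_one hr]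
      simpa [hv] using abs_real_inner_le_norm x v
    have hc0 : 0 ≤ c := sq_nonneg _
    have hcoef : |(1 - d * c) / ‖x‖| ≤ d := by
      rw [abs_div, abs_norm, div_le_iff₀ hr, abs_le]
      constructor <;> nlinarith
    have hK : sphereKernel v x = sphereFourier d ‖x‖ * c -
        deriv (sphereFourier d) ‖x‖ * ((1 - d * c) / ‖x‖) := by
      rw [sphereKernel_eq v hx, deriv_deriv_sphereFourier hr, hv]
      ring
    have : 0 ≤ D := (abs_nonneg _).trans hM
    calc |sphereKernel v x|
        ≤ |sphereFourier d ‖x‖| * c + |deriv (sphereFourier d) ‖x‖| * |(1 - d * c) / ‖x‖| := by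
          rw [hK, ← abs_of_nonneg hc0, ← abs_mul, ← abs_mul, abs_of_nonneg hc0]
          exact abs_sub _ _
      _ ≤ D * 1 + D * d := by gcongr
      _ = C * (d + 1) * ‖x‖ ^ (-((d - 1) / 2 : ℝ)) := by ring
      _ ≤ (C * (d + 1) + 1) * ‖x‖ ^ (-((d - 1) / 2 : ℝ)) := by gcongr; linarith
  · calc |sphereKernel v x| ≤ 1 := by simpa [hv] using abs_sphereKernel_le v x
      _ ≤ ‖x‖ ^ (-((d - 1) / 2 : ℝ)) :=
        Real.one_le_rpow_of_pos_of_le_one_of_nonpos hr h (by linarith)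
      _ ≤ _ := le_mul_of_one_le_left (by positivity) (by nlinarith)

end SphereFourier

/-! ### Plancherel's theorem for integrable functions -/

section FourierIntegral

variable {E F : Type*} [NormedAddCommGroup E] [InnerProductSpace ℝ E] [FiniteDimensional ℝ E]
  [MeasurableSpace E] [BorelSpace E] [NormedAddCommGroup F] [NormedSpace ℂ F]

theorem fourier_of_not_integrable {f : E → F} (hf : ¬Integrable f) : 𝓕 f = 0 :=
  funext fun ξ ↦ integral_undef fun h ↦ hf <| (VectorFourier.fourierIntegral_convergent_iff
    (L := innerₗ E) Real.continuous_fourierChar continuous_inner ξ).1 h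

theorem continuous_fourier (f : E → F) : Continuous (𝓕 f) := by
  by_cases hf : Integrable f
  · exact VectorFourier.fourierIntegral_continuous (L := innerₗ E) Real.continuous_fourierChar
      continuous_inner hf
  · rw [fourier_of_not_integrable hf]
    exact continuous_zero

end FourierIntegral

section Plancherel

variable {E F : Type*} [NormedAddCommGroup E] [InnerProductSpace ℝ E] [FiniteDimensional ℝ E]
  [MeasurableSpace E] [BorelSpace E] [NormedAddCommGroup F] [InnerProductSpace ℂ F]
  [CompleteSpace F] {f : E → F}

open scoped SchwartzMap in
theorem fourier_ae_eq_fourier_toLp (hf : Integrable f) (hf2 : MemLp f 2) :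
    𝓕 f =ᵐ[volume] (𝓕 (hf2.toLp f) : Lp F 2 (volume : Measure E)) := by
  refine ae_eq_of_integral_contDiff_smul_eq
    (continuous_fourier f).locallyIntegrable
    ((Lp.memLp _).locallyIntegrable (by norm_num)) fun g g_smooth g_cpt ↦ ?_
  have hsupp : HasCompactSupport (Complex.ofRealCLM ∘ g) := g_cpt.comp_left rfl
  set G : 𝓢(E, ℂ) := hsupp.toSchwartzMap (Complex.ofRealCLM.contDiff.comp g_smooth)
  have hdistrib := congrArg (fun T : 𝓢'(E, F) ↦ T G)
    (Lp.fourier_toTemperedDistribution_eq (hf2.toLp f))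
  simp only [TemperedDistribution.fourier_apply, Lp.toTemperedDistribution_apply] at hdistrib
  calc ∫ x, g x • 𝓕 f x = ∫ x, G x • 𝓕 f x := rfl
    _ = ∫ x, 𝓕 G x • f x := by
      have h := VectorFourier.integral_fourierIntegral_smul_eq_flip (L := innerₗ E)
        Real.continuous_fourierChar continuous_inner (G.integrable (μ := volume)) hf
      rw [flip_innerₗ] at h
      exact h.symm
    _ = ∫ x, 𝓕 G x • hf2.toLp f x := by
      refine integral_congr_ae ?_
      filter_upwards [hf2.coeFn_toLp] with x hx
      rw [hx]
    _ = ∫ x, g x • (𝓕 (hf2.toLp f) : Lp F 2 (volume : Measure E)) x := hdistrib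

theorem eLpNorm_fourier_eq (hf : Integrable f) (hf2 : MemLp f 2) :
    eLpNorm (𝓕 f) 2 volume = eLpNorm f 2 volume := by
  rw [eLpNorm_congr_ae (fourier_ae_eq_fourier_toLp hf hf2), ← Lp.enorm_def, ← ofReal_norm,
    Lp.norm_fourier_eq, ofReal_norm, Lp.enorm_toLp]

theorem lintegral_enorm_fourier_rpow_two (hf : Integrable f) (hf2 : MemLp f 2) :
    ∫⁻ ξ, ‖𝓕 f ξ‖ₑ ^ (2 : ℝ) = ∫⁻ x, ‖f x‖ₑ ^ (2 : ℝ) := by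
  have h := eLpNorm_fourier_eq hf hf2
  simp only [eLpNorm_eq_lintegral_rpow_enorm_toReal two_ne_zero ENNReal.ofNat_ne_top,
    ENNReal.toReal_ofNat] at h
  exact ENNReal.rpow_left_injective (by norm_num) h

theorem lintegral_enorm_fourier_rpow_two_le (f : E → F) :
    ∫⁻ ξ, ‖𝓕 f ξ‖ₑ ^ (2 : ℝ) ≤ ∫⁻ x, ‖f x‖ₑ ^ (2 : ℝ) := by
  by_cases hf : Integrable f
  · by_cases hf2 : eLpNorm f 2 volume < ∞
    · exact (lintegral_enorm_fourier_rpow_two hf ⟨hf.1, hf2⟩).le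
    · rw [eLpNorm_lt_top_iff_lintegral_rpow_enorm_lt_top two_ne_zero ENNReal.ofNat_ne_top,
        ENNReal.toReal_ofNat, not_lt_top_iff] at hf2
      exact hf2 ▸ le_top
  · simp [fourier_of_not_integrable hf]

end Plancherel

/-! ### Coordinate slices of the sphere -/

section Slices

variable {n : ℕ}

/-- The projection `ℝ^{n+1} → ℝ^n` that forgets the `i`-th coordinate. -/
def dropCoord (i : Fin (n + 1)) : Euc (n + 1) →L[ℝ] Euc n :=
  (EuclideanSpace.equiv (Fin n) ℝ).symm.toContinuousLinearMap ∘L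
    ContinuousLinearMap.pi fun j ↦ EuclideanSpace.proj (i.succAbove j)

/-- The identification of `ℝ × ℝ^n` with `ℝ^{n+1}` that inserts the first component as the `i`-th
coordinate. -/
def insertCoord (i : Fin (n + 1)) : ℝ × Euc n ≃ᵐ Euc (n + 1) :=
  ((MeasurableEquiv.refl ℝ).prodCongr (MeasurableEquiv.toLp 2 (Fin n → ℝ)).symm).trans
    ((MeasurableEquiv.piFinSuccAbove (fun _ ↦ ℝ) i).symm.trans
      (MeasurableEquiv.toLp 2 (Fin (n + 1) → ℝ)))

theorem measurePreserving_insertCoord (i : Fin (n + 1)) : MeasurePreserving (insertCoord i) :=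
  (PiLp.volume_preserving_toLp (Fin (n + 1))).comp
    ((volume_preserving_piFinSuccAbove (fun _ ↦ ℝ) i).symm.comp
      ((MeasurePreserving.id _).prod (PiLp.volume_preserving_ofLp (Fin n))))

@[simp]
theorem insertCoord_apply_self (i : Fin (n + 1)) (p : ℝ × Euc n) : insertCoord i p i = p.1 :=
  Fin.insertNth_apply_same (α := fun _ ↦ ℝ) i p.1 _

@[simp]
theorem dropCoord_insertCoord (i : Fin (n + 1)) (p : ℝ × Euc n) :
    dropCoord i (insertCoord i p) = p.2 := by
  ext j
  exact Fin.insertNth_apply_succAbove (α := fun _ ↦ ℝ) i p.1 _ j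

theorem inner_insertCoord (i : Fin (n + 1)) (p : ℝ × Euc n) (ω : Euc (n + 1)) :
    inner ℝ (insertCoord i p) ω = p.1 * ω i + inner ℝ p.2 (dropCoord i ω) := by
  rw [← dropCoord_insertCoord i p, ← insertCoord_apply_self i p]
  simp [PiLp.inner_apply, Fin.sum_univ_succAbove _ i, dropCoord, mul_comm]

theorem norm_insertCoord (i : Fin (n + 1)) (p : ℝ × Euc n) :
    ‖insertCoord i p‖ = √(p.1 ^ 2 + ‖p.2‖ ^ 2) := by
  rw [← Real.sqrt_sq (norm_nonneg (insertCoord i p)), ← real_inner_self_eq_norm_sq,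
    inner_insertCoord, dropCoord_insertCoord, insertCoord_apply_self, real_inner_self_eq_norm_sq,
    sq p.1]

end Slices

theorem setLIntegral_comp_sqrt_sq_add_le {S : Set ℝ} (hS : MeasurableSet S) (h0 : 0 ∉ S)
    (hinj : InjOn (fun s ↦ s ^ 2) S) (b : ℝ) (g : ℝ → ℝ≥0∞) :
    ∫⁻ s in S, .ofReal (|s| / √(s ^ 2 + b ^ 2)) * g √(s ^ 2 + b ^ 2) ≤ ∫⁻ τ in Ioi 0, g τ := by
  have hderiv (s : ℝ) (hs : s ∈ S) :
      HasDerivWithinAt (fun s ↦ √(s ^ 2 + b ^ 2)) (s / √(s ^ 2 + b ^ 2)) S s := by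
    have hs0 : s ≠ 0 := fun h ↦ h0 (h ▸ hs)
    have h := ((hasDerivAt_pow 2 s).add_const (b ^ 2)).sqrt (by positivity)
    refine (h.congr_deriv ?_).hasDerivWithinAt
    field_simp
    norm_num
  have hinj' : InjOn (fun s ↦ √(s ^ 2 + b ^ 2)) S := fun s hs t ht hst ↦
    hinj hs ht (by simpa using (Real.sqrt_inj (by positivity) (by positivity)).1 hst)
  calc _ = ∫⁻ s in S, .ofReal |s / √(s ^ 2 + b ^ 2)| * g √(s ^ 2 + b ^ 2) := by
        simp only [abs_div, abs_of_nonneg (Real.sqrt_nonneg _)]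
    _ = ∫⁻ τ in (fun s ↦ √(s ^ 2 + b ^ 2)) '' S, g τ :=
      (lintegral_image_eq_lintegral_abs_deriv_mul hS hderiv hinj' g).symm
    _ ≤ ∫⁻ τ in Ioi 0, g τ := lintegral_mono_set <| image_subset_iff.2 fun s hs ↦ by
      have : s ≠ 0 := fun h ↦ h0 (h ▸ hs)
      simp only [mem_preimage, mem_Ioi]
      positivity

theorem lintegral_comp_sqrt_sq_add_le (b : ℝ) (g : ℝ → ℝ≥0∞) :
    ∫⁻ s, .ofReal (|s| / √(s ^ 2 + b ^ 2)) * g √(s ^ 2 + b ^ 2) ≤ 2 * ∫⁻ τ in Ioi 0, g τ := by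
  rw [← lintegral_add_compl _ (measurableSet_Iio (a := (0 : ℝ))), compl_Iio,
    setLIntegral_congr Ioi_ae_eq_Ici.symm, two_mul]
  refine add_le_add (setLIntegral_comp_sqrt_sq_add_le measurableSet_Iio (by simp) ?_ b g)
    (setLIntegral_comp_sqrt_sq_add_le measurableSet_Ioi (by simp) ?_ b g)
  all_goals
    intro s hs t ht h
    simp only [mem_Iio, mem_Ioi] at hs ht h
    nlinarith

theorem lintegral_comp_inv_smul {E : Type*} [NormedAddCommGroup E] [NormedSpace ℝ E]
    [FiniteDimensional ℝ E] [MeasurableSpace E] [BorelSpace E] (μ : Measure E) [μ.IsAddHaarMeasure]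
    (G : E → ℝ≥0∞) {τ : ℝ} (hτ : 0 < τ) :
    ∫⁻ y, G (τ⁻¹ • y) ∂μ = .ofReal (τ ^ Module.finrank ℝ E) * ∫⁻ y, G y ∂μ := by
  calc ∫⁻ y, G (τ⁻¹ • y) ∂μ = ∫⁻ y, G y ∂μ.map (τ⁻¹ • ·) :=
        (lintegral_map_equiv G (Homeomorph.smulOfNeZero τ⁻¹ (by positivity)).toMeasurableEquiv).symm
    _ = _ := by
      rw [Measure.map_addHaar_smul μ (by positivity), lintegral_smul_measure, inv_pow, inv_inv,
        abs_of_pos (by positivity), smul_eq_mul]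

/- Writing `ξ = (s, y)`, the substitution `s ↦ √(s² + ‖y‖²) = τ` on each line turns the volume
element into `dτ dy` up to the factor `|s| / τ = |ω i|`; a dilation of `y` by `τ` then separates the
variables. -/
theorem lintegral_radial_mul_abs_apply_mul_dropCoord_le {n : ℕ} (i : Fin (n + 1)) {h : ℝ → ℝ≥0∞}
    (hh : Measurable h) {G : Euc n → ℝ≥0∞} (hG : Measurable G) :
    ∫⁻ ξ, h ‖ξ‖ * (.ofReal (|ξ i| / ‖ξ‖) * G (‖ξ‖⁻¹ • dropCoord i ξ)) ≤
      2 * ((∫⁻ τ in Ioi 0, h τ * .ofReal (τ ^ n)) * ∫⁻ y, G y) := by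
  rw [← (measurePreserving_insertCoord i).lintegral_comp_emb (insertCoord i).measurableEmbedding,
    Measure.volume_eq_prod, lintegral_prod_symm _ (by
      have := (insertCoord i).measurable
      fun_prop)]
  calc _ ≤ ∫⁻ y : Euc n, 2 * ∫⁻ τ in Ioi 0, h τ * G (τ⁻¹ • y) := by
        refine lintegral_mono fun y ↦ ?_
        refine le_of_eq_of_le (lintegral_congr fun s ↦ ?_) (lintegral_comp_sqrt_sq_add_le ‖y‖ _)
        simp only [norm_insertCoord, insertCoord_apply_self, dropCoord_insertCoord]
        ring
    _ = 2 * ∫⁻ τ in Ioi 0, ∫⁻ y : Euc n, h τ * G (τ⁻¹ • y) := by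
        rw [lintegral_const_mul' _ _ (by simp), lintegral_lintegral_swap (by fun_prop)]
    _ = 2 * ∫⁻ τ in Ioi 0, h τ * .ofReal (τ ^ n) * ∫⁻ y, G y := by
        congr 1
        refine setLIntegral_congr_fun measurableSet_Ioi fun τ (hτ : 0 < τ) ↦ ?_
        rw [lintegral_const_mul _ (by fun_prop), lintegral_comp_inv_smul _ _ hτ, mul_assoc,
          finrank_euclideanSpace_fin]
    _ = _ := by rw [lintegral_mul_const _ (by fun_prop)]

theorem lintegral_radial_mul_abs_apply_mul_dropCoord {n : ℕ} (i : Fin (n + 1)) {h : ℝ → ℝ≥0∞}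
    (hh : Measurable h) {G : Euc n → ℝ≥0∞} (hG : Measurable G) :
    ∫⁻ ξ, h ‖ξ‖ * (.ofReal (|ξ i| / ‖ξ‖) * G (‖ξ‖⁻¹ • dropCoord i ξ)) =
      sphereArea (n + 1) * ((∫⁻ τ in Ioi 0, h τ * .ofReal (τ ^ n)) *
        ∫⁻ ω, .ofReal |ω i| * G (dropCoord i ω) ∂sphereMeasure (n + 1)) := by
  rw [lintegral_eq_sphereArea_mul_lintegral (by fun_prop), ← lintegral_mul_const _ (by fun_prop)]
  congr 1
  refine setLIntegral_congr_fun measurableSet_Ioi fun ρ (hρ : 0 < ρ) ↦ ?_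
  dsimp only
  rw [mul_comm (h ρ), mul_assoc, Nat.add_sub_cancel, ← lintegral_const_mul (h ρ) (by fun_prop)]
  congr 1
  refine lintegral_congr_ae ?_
  filter_upwards [sphereMeasure_ae_norm_eq_one (n + 1)] with ω hω
  have : |(ρ • ω) i| / ρ = |ω i| := by
    rw [PiLp.smul_apply, smul_eq_mul, abs_mul, abs_of_pos hρ]
    field_simp
  rw [norm_smul, hω, mul_one, Real.norm_of_nonneg hρ.le, map_smul, inv_smul_smul₀ hρ.ne', this]

theorem lintegral_abs_apply_mul_dropCoord_le {n : ℕ} (i : Fin (n + 1)) {G : Euc n → ℝ≥0∞}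
    (hG : Measurable G) : ∫⁻ ω, .ofReal |ω i| * G (dropCoord i ω) ∂sphereMeasure (n + 1) ≤
      2 * (sphereArea (n + 1))⁻¹ * ∫⁻ y, G y := by
  set h : ℝ → ℝ≥0∞ := (Ioo 0 1).indicator fun τ ↦ (.ofReal (τ ^ n))⁻¹
  have hh : Measurable h := Measurable.indicator (by fun_prop) measurableSet_Ioo
  have hone : ∫⁻ τ in Ioi 0, h τ * .ofReal (τ ^ n) = 1 := by
    have heq : ∀ τ ∈ Ioi (0 : ℝ), h τ * .ofReal (τ ^ n) = (Ioo 0 1).indicator 1 τ := by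
      intro τ (hτ : 0 < τ)
      by_cases h1 : τ ∈ Ioo (0 : ℝ) 1
      · simp only [h, indicator_of_mem h1, Pi.one_apply]
        exact ENNReal.inv_mul_cancel (by simp [hτ]) ENNReal.ofReal_ne_top
      · simp [h, indicator_of_notMem h1]
    rw [setLIntegral_congr_fun measurableSet_Ioi heq, lintegral_indicator_one measurableSet_Ioo,
      Measure.restrict_apply measurableSet_Ioo, inter_eq_left.2 Ioo_subset_Ioi_self,
      Real.volume_Ioo, sub_zero, ENNReal.ofReal_one]
  have hle := lintegral_radial_mul_abs_apply_mul_dropCoord_le i hh hG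
  rw [lintegral_radial_mul_abs_apply_mul_dropCoord i hh hG, hone, one_mul, one_mul] at hle
  rw [mul_comm 2, mul_assoc, mul_comm _⁻¹, ← div_eq_mul_inv]
  exact (ENNReal.le_div_iff_mul_le (.inl (sphereArea_ne_zero _))
    (.inl (sphereArea_ne_top _))).2 (mul_comm _ (sphereArea (n + 1)) ▸ hle)

/-! ### The one-dimensional Hardy–Littlewood–Sobolev inequality -/

theorem lintegral_comp_abs (g : ℝ → ℝ≥0∞) : ∫⁻ r, g |r| = 2 * ∫⁻ r in Ioi 0, g r := by
  have hpos : ∫⁻ r in Ioi 0, g |r| = ∫⁻ r in Ioi 0, g r :=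
    setLIntegral_congr_fun measurableSet_Ioi fun r (hr : 0 < r) ↦ by rw [abs_of_pos hr]
  have hneg : ∫⁻ r in Iio 0, g |r| = ∫⁻ r in Ioi 0, g |r| := by
    rw [← lintegral_indicator measurableSet_Iio, ← lintegral_indicator measurableSet_Ioi,
      ← lintegral_neg_eq_self]
    exact lintegral_congr fun r ↦ by simp [indicator]
  rw [← lintegral_add_compl _ measurableSet_Iio, compl_Iio,
    setLIntegral_congr Ioi_ae_eq_Ici.symm, hneg, hpos, two_mul]

theorem lintegral_comp_abs_sub (t : ℝ) (g : ℝ → ℝ≥0∞) :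
    ∫⁻ s, g |t - s| = 2 * ∫⁻ r in Ioi 0, g r := by
  rw [lintegral_sub_left_eq_self (fun r ↦ g |r|), lintegral_comp_abs]

theorem setLIntegral_comp_abs_sub (t : ℝ) {S : Set ℝ} (hS : MeasurableSet S) (g : ℝ → ℝ≥0∞) :
    ∫⁻ s in {s | |t - s| ∈ S}, g |t - s| = 2 * ∫⁻ r in S ∩ Ioi 0, g r := by
  have hpre : MeasurableSet {s : ℝ | |t - s| ∈ S} :=
    (show Measurable fun s : ℝ ↦ |t - s| by fun_prop) hS
  rw [← lintegral_indicator hpre, ← setLIntegral_indicator hS, ← lintegral_comp_abs_sub t]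
  exact lintegral_congr fun s ↦ by simp [indicator]

theorem setLIntegral_rpow_Ioc {β R : ℝ} (hβ : -1 < β) (hR : 0 ≤ R) :
    ∫⁻ t in Ioc 0 R, .ofReal (t ^ β) = ENNReal.ofReal (R ^ (β + 1) / (β + 1)) := by
  rw [← ofReal_integral_eq_lintegral_ofReal, ← intervalIntegral.integral_of_le hR,
    integral_rpow (.inl hβ), Real.zero_rpow (by linarith), sub_zero]
  · exact (intervalIntegrable_iff_integrableOn_Ioc_of_le hR).1
      (intervalIntegral.intervalIntegrable_rpow' hβ)
  · filter_upwards [ae_restrict_mem measurableSet_Ioc] with t ht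
    exact Real.rpow_nonneg ht.1.le _

theorem setLIntegral_abs_sub_rpow_Iic {α R : ℝ} (hα : α < 1) (hR : 0 < R) (t : ℝ) :
    ∫⁻ s in {s | |t - s| ∈ Iic R}, .ofReal (|t - s| ^ (-α)) =
      .ofReal (2 / (1 - α) * R ^ (1 - α)) := by
  rw [setLIntegral_comp_abs_sub t measurableSet_Iic fun r ↦ .ofReal (r ^ (-α)), Iic_inter_Ioi,
    setLIntegral_rpow_Ioc (by linarith) hR.le, ← ENNReal.ofReal_ofNat 2,
    ← ENNReal.ofReal_mul (by norm_num), neg_add_eq_sub]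
  congr 1
  ring

theorem setLIntegral_abs_sub_rpow_Ioi {β R : ℝ} (hβ : 1 < β) (hR : 0 < R) (t : ℝ) :
    ∫⁻ s in {s | |t - s| ∈ Ioi R}, .ofReal (|t - s| ^ (-β)) =
      .ofReal (2 / (β - 1) * R ^ (1 - β)) := by
  rw [setLIntegral_comp_abs_sub t measurableSet_Ioi fun r ↦ .ofReal (r ^ (-β)), Ioi_inter_Ioi,
    sup_eq_left.2 hR.le, ← ofReal_integral_eq_lintegral_ofReal
      (integrableOn_Ioi_rpow_of_lt (by linarith) hR),
    integral_Ioi_rpow_of_lt (by linarith) hR, ← ENNReal.ofReal_ofNat 2,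
    ← ENNReal.ofReal_mul (by norm_num), neg_add_eq_sub]
  · congr 1
    have : 1 - β ≠ 0 := by linarith
    have : β - 1 ≠ 0 := by linarith
    field_simp
    ring
  · filter_upwards [ae_restrict_mem measurableSet_Ioi] with r hr
    exact Real.rpow_nonneg (hR.trans hr).le _

section HardyLittlewoodSobolev

variable {p N : ℝ} {u : ℝ → ℝ≥0∞}

theorem setLIntegral_le_mul_abs_sub_rpow_near {α a R : ℝ} (hα : α < 1) (ha : 0 ≤ a) (hR : 0 < R)
    (hu : Measurable u) (t : ℝ) :
    ∫⁻ s in {s | u s ≤ .ofReal a} ∩ {s | |t - s| ∈ Iic R}, u s * .ofReal (|t - s| ^ (-α)) ≤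
      .ofReal (a * (2 / (1 - α) * R ^ (1 - α))) := by
  have hm : MeasurableSet {s | u s ≤ .ofReal a} := measurableSet_le hu measurable_const
  have hnear : MeasurableSet {s : ℝ | |t - s| ∈ Iic R} :=
    (show Measurable fun s : ℝ ↦ |t - s| by fun_prop) measurableSet_Iic
  calc _ ≤ ∫⁻ s in {s | u s ≤ .ofReal a} ∩ {s | |t - s| ∈ Iic R},
          .ofReal a * .ofReal (|t - s| ^ (-α)) :=
        setLIntegral_mono' (hm.inter hnear) fun s hs ↦ mul_le_mul_left hs.1 _
    _ ≤ ∫⁻ s in {s | |t - s| ∈ Iic R}, .ofReal a * .ofReal (|t - s| ^ (-α)) :=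
      lintegral_mono_set inter_subset_right
    _ = _ := by
      rw [lintegral_const_mul _ (by fun_prop), setLIntegral_abs_sub_rpow_Iic hα hR,
        ENNReal.ofReal_mul ha]

theorem setLIntegral_mul_abs_sub_rpow_far {α q R : ℝ} (hpq : p.HolderConjugate q)
    (hα : 1 < α * q) (hR : 0 < R) (hu : Measurable u) (hN : 0 ≤ N)
    (huN : ∫⁻ s, u s ^ p ≤ .ofReal (N ^ p)) (t : ℝ) :
    ∫⁻ s in {s | |t - s| ∈ Ioi R}, u s * .ofReal (|t - s| ^ (-α)) ≤
      .ofReal (N * (2 / (α * q - 1) * R ^ (1 - α * q)) ^ (1 / q)) := by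
  have hp := hpq.pos
  have hq := hpq.symm.pos
  have hpos : 0 ≤ 2 / (α * q - 1) * R ^ (1 - α * q) := by
    have : 0 < α * q - 1 := by linarith
    positivity
  calc _ ≤ (∫⁻ s in {s | |t - s| ∈ Ioi R}, u s ^ p) ^ (1 / p) *
        (∫⁻ s in {s | |t - s| ∈ Ioi R}, ENNReal.ofReal (|t - s| ^ (-α)) ^ q) ^ (1 / q) :=
        ENNReal.lintegral_mul_le_Lp_mul_Lq _ hpq hu.aemeasurable (by fun_prop)
    _ ≤ ENNReal.ofReal (N ^ p) ^ (1 / p) *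
        ENNReal.ofReal (2 / (α * q - 1) * R ^ (1 - α * q)) ^ (1 / q) := by
      rw [← setLIntegral_abs_sub_rpow_Ioi hα hR t]
      gcongr with s
      · exact (setLIntegral_le_lintegral _ _).trans huN
      · rw [ENNReal.ofReal_rpow_of_nonneg (by positivity) hq.le, ← Real.rpow_mul (abs_nonneg _),
          neg_mul]
    _ = _ := by
      rw [ENNReal.ofReal_rpow_of_nonneg (by positivity) (by positivity),
        ENNReal.ofReal_rpow_of_nonneg hpos (by positivity), ← ENNReal.ofReal_mul (by positivity),
        ← Real.rpow_mul hN, mul_one_div_cancel hp.ne', Real.rpow_one]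

/- The radius `R = (N / a) ^ p` balances the bound `u ≤ a` used for `|t - s| ≤ R` against Hölder's
inequality used for `|t - s| > R`. -/
theorem setLIntegral_le_mul_abs_sub_rpow_le (hp1 : 1 < p) (hp2 : p < 2) (hu : Measurable u)
    (hN : 0 < N) (huN : ∫⁻ s, u s ^ p ≤ .ofReal (N ^ p)) {a : ℝ} (ha : 0 < a) (t : ℝ) :
    ∫⁻ s in {s | u s ≤ .ofReal a}, u s * .ofReal (|t - s| ^ (-(2 - 2 / p))) ≤
      .ofReal ((2 / (2 / p - 1) + 2) * (a ^ (p - 1) * N ^ (2 - p))) := by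
  have hp0 : 0 < p := by linarith
  have hp10 : 0 < p - 1 := by linarith
  have hα : 0 < 2 / p - 1 := by rw [sub_pos, lt_div_iff₀ hp0]; linarith
  have hpq : p.HolderConjugate (p / (p - 1)) := .conjExponent hp1
  have hαq : (2 - 2 / p) * (p / (p - 1)) = 2 := by field_simp
  set R := (N / a) ^ p
  have hR : 0 < R := by positivity
  have haN : a * R ^ (2 / p - 1) = a ^ (p - 1) * N ^ (2 - p) := by
    rw [← Real.rpow_mul (by positivity), show p * (2 / p - 1) = 2 - p by field_simp,
      Real.div_rpow hN.le ha.le, mul_div_left_comm, mul_comm, ← Real.rpow_one_sub' ha.le,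
      sub_sub_eq_add_sub]
    · ring_nf
    · linarith
  have hNa : N * R⁻¹ ^ (1 / (p / (p - 1))) = a ^ (p - 1) * N ^ (2 - p) := by
    rw [Real.inv_rpow hR.le, ← Real.rpow_mul (by positivity),
      show p * (1 / (p / (p - 1))) = p - 1 by field_simp,
      Real.div_rpow hN.le ha.le, inv_div, mul_div_left_comm, ← Real.rpow_one_sub' hN.le,
      sub_sub_eq_add_sub, one_add_one_eq_two]
    linarith
  have hfar : N * (2 / (2 - 1) * R ^ (1 - 2 : ℝ)) ^ (1 / (p / (p - 1))) ≤
      2 * (a ^ (p - 1) * N ^ (2 - p)) := by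
    have htwo : (2 : ℝ) ^ (1 / (p / (p - 1))) ≤ 2 :=
      Real.rpow_le_self_of_one_le one_le_two (div_le_one_of_le₀ hpq.symm.lt.le hpq.symm.nonneg)
    calc _ = 2 ^ (1 / (p / (p - 1))) * (N * R⁻¹ ^ (1 / (p / (p - 1)))) := by
          norm_num [Real.mul_rpow, Real.rpow_neg_one, hR.le]
          ring
      _ ≤ _ := by rw [hNa]; gcongr
  have hnear : MeasurableSet {s : ℝ | |t - s| ∈ Iic R} :=
    (show Measurable fun s : ℝ ↦ |t - s| by fun_prop) measurableSet_Iic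
  rw [← lintegral_inter_add_sdiff _ _ hnear, add_mul, ENNReal.ofReal_add (by positivity)
    (by positivity)]
  refine add_le_add ?_ ?_
  · refine (setLIntegral_le_mul_abs_sub_rpow_near (by linarith) ha.le hR hu t).trans_eq ?_
    rw [show 1 - (2 - 2 / p) = 2 / p - 1 by ring, mul_left_comm, haN]
  · refine (lintegral_mono_set fun s hs ↦ ?_).trans <|
      (setLIntegral_mul_abs_sub_rpow_far hpq (by rw [hαq]; norm_num) hR hu hN.le huN t).trans ?_
    · simpa using hs.2
    · rw [hαq]
      exact ENNReal.ofReal_le_ofReal hfar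

theorem lintegral_lintegral_le_two_mul_of_symm {α : Type*} [MeasurableSpace α] {μ : Measure α}
    [SFinite μ] {β : Type*} [LinearOrder β] {u : α → β} {K : α → α → ℝ≥0∞}
    (hK : Measurable (Function.uncurry K)) (hsymm : ∀ s t, K s t = K t s)
    (hS : MeasurableSet {x : α × α | u x.2 ≤ u x.1}) :
    ∫⁻ t, ∫⁻ s, K t s ∂μ ∂μ ≤ 2 * ∫⁻ t, ∫⁻ s in {s | u s ≤ u t}, K t s ∂μ ∂μ := by
  set H : α × α → ℝ≥0∞ := {x | u x.2 ≤ u x.1}.indicator (Function.uncurry K)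
  have hH : Measurable H := hK.indicator hS
  have hHt (t : α) : ∫⁻ s, H (t, s) ∂μ = ∫⁻ s in {s | u s ≤ u t}, K t s ∂μ :=
    (lintegral_indicator (hS.preimage measurable_prodMk_left) (K t) :)
  calc _ ≤ ∫⁻ t, ∫⁻ s, (H (t, s) + H (s, t)) ∂μ ∂μ := by
        refine lintegral_mono fun t ↦ lintegral_mono fun s ↦ ?_
        rcases le_total (u s) (u t) with h | h
        · simp [H, indicator, h]
        · simp [H, indicator, h, hsymm s t]
    _ = (∫⁻ t, ∫⁻ s, H (t, s) ∂μ ∂μ) + ∫⁻ t, ∫⁻ s, H (s, t) ∂μ ∂μ := by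
        rw [← lintegral_add_left hH.lintegral_prod_right']
        exact lintegral_congr fun t ↦ lintegral_add_left (by fun_prop) _
    _ = 2 * ∫⁻ t, ∫⁻ s, H (t, s) ∂μ ∂μ := by
        rw [lintegral_lintegral_swap (f := fun t s ↦ H (s, t)) (by fun_prop), two_mul]
    _ = _ := by simp only [hHt]

theorem lintegral_lintegral_mul_abs_sub_rpow_le_of_pos (hp1 : 1 < p) (hp2 : p < 2)
    (hu : Measurable u) (hN : 0 < N) (huN : ∫⁻ s, u s ^ p ≤ .ofReal (N ^ p)) :
    ∫⁻ t, ∫⁻ s, u t * u s * .ofReal (|t - s| ^ (-(2 - 2 / p))) ≤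
      .ofReal (2 * (2 / (2 / p - 1) + 2)) * .ofReal (N ^ 2) := by
  have hp0 : 0 < p := by linarith
  have hα : 0 < 2 / p - 1 := by rw [sub_pos, lt_div_iff₀ hp0]; linarith
  set K := 2 / (2 / p - 1) + 2
  have hK : 0 < K := by positivity
  have hfin : ∀ᵐ t, u t ^ p < ∞ :=
    ae_lt_top (by fun_prop) (huN.trans_lt ENNReal.ofReal_lt_top).ne
  have hrow : ∀ᵐ t, ∫⁻ s in {s | u s ≤ u t}, u t * u s * .ofReal (|t - s| ^ (-(2 - 2 / p))) ≤
      .ofReal (K * N ^ (2 - p)) * u t ^ p := by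
    filter_upwards [hfin] with t ht
    rcases eq_or_ne (u t) 0 with h0 | h0
    · simp [h0]
    have htop : u t ≠ ∞ := by rintro h; simp [h, hp0] at ht
    obtain ⟨a, ha⟩ : ∃ a, u t = .ofReal a := ⟨_, (ENNReal.ofReal_toReal htop).symm⟩
    have ha0 : 0 < a := by simpa [ha] using h0
    simp only [ha, mul_assoc]
    rw [lintegral_const_mul _ (by fun_prop)]
    calc _ ≤ ENNReal.ofReal a * .ofReal (K * (a ^ (p - 1) * N ^ (2 - p))) := by
          gcongr
          exact setLIntegral_le_mul_abs_sub_rpow_le hp1 hp2 hu hN huN ha0 t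
      _ = _ := by
          rw [ENNReal.ofReal_rpow_of_pos ha0, ← ENNReal.ofReal_mul ha0.le,
            ← ENNReal.ofReal_mul (by positivity), Real.rpow_sub_one ha0.ne']
          congr 1
          field_simp
  calc _ ≤ 2 * ∫⁻ t, ∫⁻ s in {s | u s ≤ u t}, u t * u s * .ofReal (|t - s| ^ (-(2 - 2 / p))) :=
        lintegral_lintegral_le_two_mul_of_symm (by fun_prop)
          (fun s t ↦ by rw [abs_sub_comm, mul_comm (u s)])
          (measurableSet_le (by fun_prop) (by fun_prop))
    _ ≤ 2 * (.ofReal (K * N ^ (2 - p)) * .ofReal (N ^ p)) := by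
        gcongr
        refine (lintegral_mono_ae hrow).trans ?_
        rw [lintegral_const_mul _ (by fun_prop)]
        gcongr
    _ = _ := by
        rw [← ENNReal.ofReal_ofNat 2, ← ENNReal.ofReal_mul (by positivity),
          ← ENNReal.ofReal_mul (by positivity), ← ENNReal.ofReal_mul (by positivity), mul_assoc K,
          ← Real.rpow_add hN, sub_add_cancel, Real.rpow_two, mul_assoc]

theorem exists_lintegral_lintegral_mul_abs_sub_rpow_le (hp1 : 1 < p) (hp2 : p < 2) :
    ∃ C : ℝ≥0, ∀ u : ℝ → ℝ≥0∞, Measurable u →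
      ∫⁻ t, ∫⁻ s, u t * u s * .ofReal (|t - s| ^ (-(2 - 2 / p))) ≤
        C * (∫⁻ s, u s ^ p) ^ (2 / p) := by
  have hp0 : 0 < p := by linarith
  have hα : 0 < 2 / p - 1 := by rw [sub_pos, lt_div_iff₀ hp0]; linarith
  refine ⟨(2 * (2 / (2 / p - 1) + 2)).toNNReal, fun u hu ↦ ?_⟩
  rw [← ENNReal.ofReal]
  rcases eq_or_ne (∫⁻ s, u s ^ p) 0 with h0 | h0
  · have hu0 : u =ᵐ[volume] 0 := by
      filter_upwards [(lintegral_eq_zero_iff (by fun_prop)).1 h0] with s hs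
      exact (ENNReal.rpow_eq_zero_iff_of_pos hp0).1 hs
    have : ∫⁻ t, ∫⁻ s, u t * u s * .ofReal (|t - s| ^ (-(2 - 2 / p))) = 0 :=
      lintegral_eq_zero_of_ae_eq_zero <| by
        filter_upwards [hu0] with t ht
        simp [ht]
    rw [this]
    exact zero_le
  rcases eq_or_ne (∫⁻ s, u s ^ p) ∞ with htop | htop
  · rw [htop, ENNReal.top_rpow_of_pos (by positivity), ENNReal.mul_top]
    · exact le_top
    · rw [ne_eq, ENNReal.ofReal_eq_zero, not_le]
      positivity
  obtain ⟨m, hm⟩ : ∃ m, ∫⁻ s, u s ^ p = .ofReal m := ⟨_, (ENNReal.ofReal_toReal htop).symm⟩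
  have hm0 : 0 < m := by simpa [hm] using h0
  refine (lintegral_lintegral_mul_abs_sub_rpow_le_of_pos (N := m ^ (1 / p)) hp1 hp2 hu
    (by positivity) ?_).trans_eq ?_
  · rw [hm, ← Real.rpow_mul hm0.le, one_div_mul_cancel hp0.ne', Real.rpow_one]
  · rw [hm, ENNReal.ofReal_rpow_of_pos hm0, ← Real.rpow_two, ← Real.rpow_mul hm0.le,
      one_div_mul_eq_div]

end HardyLittlewoodSobolev

/-! ### Duality and interpolation on bounded functions with compact support -/

/-- The class of bounded Borel functions with compact support, on which the operators below are
defined by absolutely convergent integrals. -/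
structure IsTestFunction {E : Type*} [TopologicalSpace E] [MeasurableSpace E] (u : E → ℂ) :
    Prop where
  measurable : Measurable u
  bounded : ∃ K : ℝ, ∀ x, ‖u x‖ ≤ K
  hasCompactSupport : HasCompactSupport u

section TestFunction

variable {E : Type*} [TopologicalSpace E] [MeasurableSpace E] {μ : Measure E} {u : E → ℂ}

theorem IsTestFunction.mono {v : E → ℂ} (hu : IsTestFunction u) (hv : Measurable v)
    (h : ∀ x, ‖v x‖ ≤ ‖u x‖) : IsTestFunction v where
  measurable := hv
  bounded := hu.bounded.imp fun _ hK x ↦ (h x).trans (hK x)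
  hasCompactSupport := hu.hasCompactSupport.mono fun x hx hux ↦
    hx (norm_le_zero_iff.1 ((h x).trans_eq (by rw [hux, norm_zero])))

theorem IsTestFunction.indicator (hu : IsTestFunction u) {S : Set E} (hS : MeasurableSet S) :
    IsTestFunction (S.indicator u) :=
  hu.mono (hu.measurable.indicator hS) fun _ ↦ norm_indicator_le_norm_self _ _

theorem IsTestFunction.memLp [IsFiniteMeasureOnCompacts μ] (hu : IsTestFunction u) (p : ℝ≥0∞) :
    MemLp u p μ :=
  let ⟨K, hK⟩ := hu.bounded
  hu.hasCompactSupport.memLp_of_bound hu.measurable.aestronglyMeasurable K (.of_forall hK)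

theorem IsTestFunction.integrable [IsFiniteMeasureOnCompacts μ] (hu : IsTestFunction u) :
    Integrable u μ :=
  memLp_one_iff_integrable.1 (hu.memLp 1)

theorem IsTestFunction.lintegral_enorm_rpow_ne_top [IsFiniteMeasureOnCompacts μ]
    (hu : IsTestFunction u) {p : ℝ} (hp : 0 < p) : ∫⁻ x, ‖u x‖ₑ ^ p ∂μ ≠ ∞ := by
  have := lintegral_rpow_enorm_lt_top_of_eLpNorm_lt_top (by simpa using hp) ENNReal.ofReal_ne_top
    (hu.memLp (μ := μ) (.ofReal p)).2
  rw [ENNReal.toReal_ofReal hp.le] at this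
  exact this.ne

end TestFunction

section Duality

variable {q p : ℝ}

theorem norm_rpow_sub_two_smul_conj (hq : q ≠ 1) (z : ℂ) :
    ‖‖z‖ ^ (q - 2) • starRingEnd ℂ z‖ = ‖z‖ ^ (q - 1) := by
  rcases eq_or_ne z 0 with rfl | hz
  · simp [Real.zero_rpow (sub_ne_zero.2 hq)]
  rw [norm_smul, RCLike.norm_conj, Real.norm_of_nonneg (by positivity),
    ← Real.rpow_add_one (by simpa)]
  ring_nf

theorem rpow_sub_two_smul_conj_mul_self (hq : q ≠ 0) (z : ℂ) :
    (‖z‖ ^ (q - 2) • starRingEnd ℂ z) * z = (‖z‖ ^ q : ℝ) := by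
  rcases eq_or_ne z 0 with rfl | hz
  · simp [hq]
  rw [smul_mul_assoc, ← Complex.normSq_eq_conj_mul_self, Complex.normSq_eq_norm_sq,
    Complex.real_smul, ← Complex.ofReal_mul, ← Real.rpow_two, ← Real.rpow_add (by simpa),
    sub_add_cancel]

theorem le_rpow_of_le_mul_rpow (hpq : q.HolderConjugate p) {I M : ℝ≥0∞} (hI : I ≠ ∞)
    (h : I ≤ M * I ^ (1 / p)) : I ≤ M ^ q := by
  rcases eq_or_ne I 0 with rfl | h0
  · exact zero_le
  rw [← ENNReal.rpow_inv_le_iff hpq.pos]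
  refine (ENNReal.mul_le_mul_iff_left (c := I ^ (1 / p)) ?_ ?_).1 (h.trans_eq' ?_)
  · simp [h0, hI]
  · exact ENNReal.rpow_ne_top_of_nonneg (one_div_nonneg.2 hpq.symm.nonneg) hI
  · rw [← ENNReal.rpow_add _ _ h0 hI, one_div, hpq.inv_add_inv_eq_one, ENNReal.rpow_one]

variable {E : Type*} [TopologicalSpace E] [T2Space E] [MeasurableSpace E] {G : E → ℂ}

theorem isTestFunction_indicator_rpow_sub_two_smul_conj (hq : 1 < q) (hG : Measurable G)
    {S K : Set E} (hS : MeasurableSet S) (hK : IsCompact K) (hSK : S ⊆ K) {b : ℝ}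
    (hb : ∀ x ∈ S, ‖G x‖ ≤ b) :
    IsTestFunction (S.indicator fun x ↦ ‖G x‖ ^ (q - 2) • starRingEnd ℂ (G x)) where
  measurable := by
    have := Complex.continuous_conj.measurable.comp hG
    exact ((hG.norm.pow_const _).smul this).indicator hS
  bounded := by
    refine ⟨|b| ^ (q - 1), fun x ↦ ?_⟩
    by_cases hx : x ∈ S
    · rw [indicator_of_mem hx, norm_rpow_sub_two_smul_conj hq.ne']
      exact Real.rpow_le_rpow (norm_nonneg _) ((hb x hx).trans (le_abs_self b)) (by linarith)
    · rw [indicator_of_notMem hx, norm_zero]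
      positivity
  hasCompactSupport := .intro hK fun _ hx ↦ indicator_of_notMem (fun h ↦ hx (hSK h)) _

variable {μ : Measure E} [IsFiniteMeasureOnCompacts μ] {M : ℝ≥0∞}

theorem setLIntegral_enorm_rpow_le_of_dual (hpq : q.HolderConjugate p) (hG : Measurable G)
    (h : ∀ u, IsTestFunction u → ‖∫ x, u x * G x ∂μ‖ₑ ≤ M * (∫⁻ x, ‖u x‖ₑ ^ p ∂μ) ^ (1 / p))
    {S K : Set E} (hS : MeasurableSet S) (hK : IsCompact K) (hSK : S ⊆ K) {b : ℝ}
    (hb : ∀ x ∈ S, ‖G x‖ ≤ b) : ∫⁻ x in S, ‖G x‖ₑ ^ q ∂μ ≤ M ^ q := by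
  have hq := hpq.lt
  have enorm_rpow : ∀ x, ENNReal.ofReal (‖G x‖ ^ q) = ‖G x‖ₑ ^ q := fun x ↦ by
    rw [← ofReal_norm, ENNReal.ofReal_rpow_of_nonneg (norm_nonneg _) hpq.nonneg]
  set u : E → ℂ := S.indicator fun x ↦ ‖G x‖ ^ (q - 2) • starRingEnd ℂ (G x) with hu
  have hu_test : IsTestFunction u :=
    isTestFunction_indicator_rpow_sub_two_smul_conj hq hG hS hK hSK hb
  have lintegral_u : ∫⁻ x, ‖u x‖ₑ ^ p ∂μ = ∫⁻ x in S, ‖G x‖ₑ ^ q ∂μ := by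
    rw [← lintegral_indicator hS]
    refine lintegral_congr fun x ↦ ?_
    by_cases hx : x ∈ S
    · rw [hu, indicator_of_mem hx, indicator_of_mem hx, ← ofReal_norm,
        norm_rpow_sub_two_smul_conj hq.ne', ← enorm_rpow,
        ENNReal.ofReal_rpow_of_nonneg (by positivity) hpq.symm.nonneg,
        ← Real.rpow_mul (norm_nonneg _), hpq.sub_one_mul_conj]
    · simp [hu, hx, hpq.symm.pos]
  have hint : IntegrableOn (fun x ↦ ‖G x‖ ^ q) S μ := by
    refine Measure.integrableOn_of_bounded (M := |b| ^ q)
      ((measure_mono hSK).trans_lt hK.measure_lt_top).ne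
      (hG.norm.pow_const q).aestronglyMeasurable ?_
    filter_upwards [ae_restrict_mem hS] with x hx
    rw [Real.norm_of_nonneg (by positivity)]
    exact Real.rpow_le_rpow (norm_nonneg _) ((hb x hx).trans (le_abs_self b)) hpq.nonneg
  have integral_u : ‖∫ x, u x * G x ∂μ‖ₑ = ∫⁻ x in S, ‖G x‖ₑ ^ q ∂μ := by
    simp_rw [hu, ← indicator_mul_left, rpow_sub_two_smul_conj_mul_self hpq.ne_zero]
    rw [integral_indicator hS, integral_complex_ofReal, ← ofReal_norm, Complex.norm_real,
      Real.norm_of_nonneg (integral_nonneg fun x ↦ by positivity),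
      ofReal_integral_eq_lintegral_ofReal hint (.of_forall fun x ↦ by positivity)]
    simp_rw [enorm_rpow]
  refine le_rpow_of_le_mul_rpow hpq ?_ ?_
  · exact lintegral_u ▸ hu_test.lintegral_enorm_rpow_ne_top hpq.symm.pos
  · simpa only [integral_u, lintegral_u] using h u hu_test

theorem lintegral_enorm_rpow_le_of_dual [SigmaCompactSpace E] [OpensMeasurableSpace E]
    (hpq : q.HolderConjugate p)
    (hG : Measurable G)
    (h : ∀ u, IsTestFunction u → ‖∫ x, u x * G x ∂μ‖ₑ ≤ M * (∫⁻ x, ‖u x‖ₑ ^ p ∂μ) ^ (1 / p)) :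
    ∫⁻ x, ‖G x‖ₑ ^ q ∂μ ≤ M ^ q := by
  let S : ℕ → Set E := fun n ↦ compactCovering E n ∩ {x | ‖G x‖ ≤ n}
  have hS : Monotone S := fun m n hmn ↦ inter_subset_inter (compactCovering_subset E hmn)
    fun x (hx : ‖G x‖ ≤ m) ↦ hx.trans (mod_cast hmn)
  have hunion : ⋃ n, S n = univ := by
    refine eq_univ_of_forall fun x ↦ ?_
    obtain ⟨m, hm⟩ := exists_mem_compactCovering x
    obtain ⟨n, hn⟩ := exists_nat_ge ‖G x‖
    refine mem_iUnion.2 ⟨max m n, compactCovering_subset E (le_max_left m n) hm, hn.trans ?_⟩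
    exact_mod_cast le_max_right m n
  rw [← setLIntegral_univ, ← hunion, setLIntegral_iUnion_of_directed _ hS.directed_le]
  exact iSup_le fun n ↦ setLIntegral_enorm_rpow_le_of_dual hpq hG h
    ((isCompact_compactCovering E n).measurableSet.inter (measurableSet_le hG.norm (by fun_prop)))
    (isCompact_compactCovering E n) inter_subset_left fun x hx ↦ hx.2

end Duality

section Interpolation

variable {q p : ℝ}

theorem setLIntegral_enorm_le_of_lt_mul_rpow {E : Type*} [MeasurableSpace E] {μ : Measure E}
    {u : E → ℂ} (hu : Measurable u) {a b : ℝ} (ha : 0 < a) (hb : 0 < b) :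
    ∫⁻ x in {x | a * ‖u x‖ ^ (p - 1) ≤ b}ᶜ, ‖u x‖ₑ ∂μ ≤
      .ofReal (a / b) * ∫⁻ x, ‖u x‖ₑ ^ p ∂μ := by
  have hS : MeasurableSet {x | a * ‖u x‖ ^ (p - 1) ≤ b} :=
    measurableSet_le ((hu.norm.pow_const _).const_mul a) measurable_const
  rw [← lintegral_const_mul _ (hu.enorm.pow_const p)]
  refine (setLIntegral_mono' hS.compl fun x hx ↦ ?_).trans (setLIntegral_le_lintegral _ _)
  rcases eq_or_ne (u x) 0 with h0 | h0
  · simp [h0]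
  replace hx : b < a * ‖u x‖ ^ (p - 1) := not_le.1 hx
  rw [Real.rpow_sub_one (by simpa), mul_div_assoc', lt_div_iff₀ (by simpa)] at hx
  rw [← ofReal_norm, ENNReal.ofReal_rpow_of_pos (by simpa), ← ENNReal.ofReal_mul (by positivity),
    div_mul_eq_mul_div]
  refine ENNReal.ofReal_le_ofReal ?_
  rw [le_div_iff₀' hb]
  exact hx.le

theorem lintegral_Ioi_rpow_mul_indicator_enorm_rpow_two (hpq : q.HolderConjugate p) (hq : 2 < q)
    {L : ℝ} (hL : 0 < L) (z : ℂ) :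
    ∫⁻ t in Ioi 0, .ofReal (t ^ (q - 3)) *
        {t | t * ‖z‖ ^ (p - 1) ≤ L}.indicator (fun _ ↦ ‖z‖ₑ ^ (2 : ℝ)) t =
      .ofReal (L ^ (q - 2) / (q - 2)) * ‖z‖ₑ ^ p := by
  rcases eq_or_ne z 0 with rfl | hz
  · simp [hpq.symm.pos, indicator]
  have hz' : 0 < ‖z‖ := by simpa
  have hset : {t | t * ‖z‖ ^ (p - 1) ≤ L} = Iic (L / ‖z‖ ^ (p - 1)) := by
    ext t
    rw [mem_ofPred_eq, mem_Iic, le_div_iff₀ (by positivity)]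
  simp_rw [hset, ← indicator_mul_right _ fun t : ℝ ↦ ENNReal.ofReal (t ^ (q - 3))]
  rw [setLIntegral_indicator measurableSet_Iic, Iic_inter_Ioi,
    lintegral_mul_const _ (by fun_prop), setLIntegral_rpow_Ioc (by linarith) (by positivity),
    ← ofReal_norm, ENNReal.ofReal_rpow_of_pos hz', ENNReal.ofReal_rpow_of_pos hz',
    ← ENNReal.ofReal_mul' (by positivity), ← ENNReal.ofReal_mul' (by positivity),
    show q - 3 + 1 = q - 2 by ring, Real.div_rpow hL.le (by positivity), ← Real.rpow_mul hz'.le]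
  have hexp : 2 = (p - 1) * (q - 2) + p := by linarith [hpq.mul_eq_add]
  have hsq : ‖z‖ ^ (2 : ℝ) = ‖z‖ ^ ((p - 1) * (q - 2)) * ‖z‖ ^ p := by
    rw [← Real.rpow_add hz', ← hexp]
  rw [hsq]
  congr 1
  field_simp

theorem lintegral_Ioi_rpow_mul_setLIntegral_enorm_rpow_two {E : Type*} [MeasurableSpace E]
    {μ : Measure E} [SFinite μ] {u : E → ℂ} (hu : Measurable u) (hpq : q.HolderConjugate p)
    (hq : 2 < q) {L : ℝ} (hL : 0 < L) :
    ∫⁻ t in Ioi (0 : ℝ), .ofReal (t ^ (q - 3)) *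
        ∫⁻ x in {x | t * ‖u x‖ ^ (p - 1) ≤ L}, ‖u x‖ₑ ^ (2 : ℝ) ∂μ =
      .ofReal (L ^ (q - 2) / (q - 2)) * ∫⁻ x, ‖u x‖ₑ ^ p ∂μ := by
  have : Measurable fun x ↦ ‖u x‖ ^ (p - 1) := hu.norm.pow_const _
  have hS : MeasurableSet {z : ℝ × E | z.1 * ‖u z.2‖ ^ (p - 1) ≤ L} :=
    measurableSet_le (by fun_prop) measurable_const
  calc
    _ = ∫⁻ t in Ioi (0 : ℝ), ∫⁻ x, .ofReal (t ^ (q - 3)) *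
          {t | t * ‖u x‖ ^ (p - 1) ≤ L}.indicator (fun _ ↦ ‖u x‖ₑ ^ (2 : ℝ)) t ∂μ := by
      refine lintegral_congr fun t ↦ ?_
      rw [lintegral_const_mul' _ _ ENNReal.ofReal_ne_top,
        ← lintegral_indicator (measurableSet_le (by fun_prop) measurable_const)]
      rfl
    _ = ∫⁻ x, (∫⁻ t in Ioi (0 : ℝ), .ofReal (t ^ (q - 3)) *
          {t | t * ‖u x‖ ^ (p - 1) ≤ L}.indicator (fun _ ↦ ‖u x‖ₑ ^ (2 : ℝ)) t) ∂μ := by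
      refine lintegral_lintegral_swap (Measurable.aemeasurable ?_)
      have : Measurable fun z : ℝ × E ↦ ‖u z.2‖ₑ ^ (2 : ℝ) := by fun_prop
      exact .mul (by fun_prop) (this.indicator hS)
    _ = _ := by
      simp_rw [lintegral_Ioi_rpow_mul_indicator_enorm_rpow_two hpq hq hL]
      rw [lintegral_const_mul _ (hu.enorm.pow_const p)]

theorem lintegral_enorm_rpow_eq_zero_of_two {E Y : Type*} [MeasurableSpace E] {μ : Measure E}
    [MeasurableSpace Y] {ν : Measure Y} {u : E → ℂ} {v : Y → ℂ} {A : ℝ≥0∞} (hu : Measurable u)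
    (hv : Measurable v)
    (hTwo : ∫⁻ y, ‖v y‖ₑ ^ (2 : ℝ) ∂ν ≤ A * ∫⁻ x, ‖u x‖ₑ ^ (2 : ℝ) ∂μ) (hp : 0 < p)
    (hq : 0 < q) (h : ∫⁻ x, ‖u x‖ₑ ^ p ∂μ = 0) : ∫⁻ y, ‖v y‖ₑ ^ q ∂ν = 0 := by
  have rpow_eq_zero : ∀ {r : ℝ}, 0 < r → ∀ z : ℂ, ‖z‖ₑ ^ r = 0 ↔ z = 0 := fun hr z ↦ by
    rw [ENNReal.rpow_eq_zero_iff_of_pos hr, enorm_eq_zero]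
  have u_sq : ∫⁻ x, ‖u x‖ₑ ^ (2 : ℝ) ∂μ = 0 := by
    rw [lintegral_eq_zero_iff (hu.enorm.pow_const _)] at h ⊢
    filter_upwards [h] with x hx
    exact (rpow_eq_zero two_pos _).2 ((rpow_eq_zero hp _).1 hx)
  rw [u_sq, mul_zero, nonpos_iff_eq_zero, lintegral_eq_zero_iff (hv.enorm.pow_const _)] at hTwo
  rw [lintegral_eq_zero_iff (hv.enorm.pow_const _)]
  filter_upwards [hTwo] with y hy
  exact (rpow_eq_zero hq _).2 ((rpow_eq_zero two_pos _).1 hy)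

variable {E Y : Type*} [TopologicalSpace E] [MeasurableSpace E] {μ : Measure E}
  [MeasurableSpace Y] {ν : Measure Y} {T : (E → ℂ) → Y → ℂ} {A : ℝ≥0} {B : ℝ} {u : E → ℂ}

theorem measure_lt_norm_add_div_two_le {f g : Y → ℂ} (hf : Measurable f) {a : ℝ} (ha : 0 < a)
    (hg : ∀ y, ‖g y‖ ≤ a) :
    ν {y | a < ‖f y + g y‖ / 2} ≤ .ofReal (a ^ (-2 : ℝ)) * ∫⁻ y, ‖f y‖ₑ ^ (2 : ℝ) ∂ν := by
  rw [Real.rpow_neg ha.le, ENNReal.ofReal_inv_of_pos (by positivity), mul_comm,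
    ← div_eq_mul_inv, ENNReal.le_div_iff_mul_le (.inl (by simpa using ha.ne')) (.inl (by simp)),
    mul_comm, ← ENNReal.ofReal_rpow_of_pos ha]
  refine le_trans ?_ (mul_meas_ge_le_lintegral (hf.enorm.pow_const _) (ENNReal.ofReal a ^ (2 : ℝ)))
  refine mul_le_mul_right (measure_mono fun y (hy : a < ‖f y + g y‖ / 2) ↦ ?_) _
  refine ENNReal.rpow_le_rpow ?_ zero_le_two
  rw [← ofReal_norm]
  refine ENNReal.ofReal_le_ofReal ?_
  linarith [norm_add_le (f y) (g y), hg y]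

theorem measure_lt_enorm_div_two_le
    (hadd : ∀ u v, IsTestFunction u → IsTestFunction v → ∀ y, T (u + v) y = T u y + T v y)
    (hT : ∀ u, IsTestFunction u → Measurable (T u))
    (hTwo : ∀ u, IsTestFunction u → ∫⁻ y, ‖T u y‖ₑ ^ (2 : ℝ) ∂ν ≤ A * ∫⁻ x, ‖u x‖ₑ ^ (2 : ℝ) ∂μ)
    (hOne : ∀ u, IsTestFunction u → ∀ y, ‖T u y‖ₑ ≤ .ofReal B * ∫⁻ x, ‖u x‖ₑ ∂μ)
    (hB : 0 < B) (hu : IsTestFunction u) {P : ℝ} (hP : 0 < P)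
    (huP : ∫⁻ x, ‖u x‖ₑ ^ p ∂μ = .ofReal P) {a : ℝ} (ha : 0 < a) :
    ν {y | a < ‖T u y‖ / 2} ≤ .ofReal (a ^ (-2 : ℝ)) *
      (A * ∫⁻ x in {x | a * ‖u x‖ ^ (p - 1) ≤ B * P}, ‖u x‖ₑ ^ (2 : ℝ) ∂μ) := by
  set S := {x | a * ‖u x‖ ^ (p - 1) ≤ B * P}
  have hS : MeasurableSet S :=
    measurableSet_le ((hu.measurable.norm.pow_const _).const_mul a) measurable_const
  have hlow := hu.indicator hS
  have hhigh := hu.indicator hS.compl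
  have T_high_le : ∀ y, ‖T (Sᶜ.indicator u) y‖ₑ ≤ .ofReal a := fun y ↦ by
    refine (hOne _ hhigh y).trans ?_
    simp_rw [enorm_indicator_eq_indicator_enorm]
    rw [lintegral_indicator hS.compl]
    calc _ ≤ ENNReal.ofReal B * (.ofReal (a / (B * P)) * .ofReal P) := by
          gcongr
          exact huP ▸ setLIntegral_enorm_le_of_lt_mul_rpow hu.measurable ha (by positivity)
      _ = _ := by
          rw [← ENNReal.ofReal_mul (by positivity), ← ENNReal.ofReal_mul (by positivity)]
          congr 1
          field_simp
  have low_sq : ∫⁻ x, ‖S.indicator u x‖ₑ ^ (2 : ℝ) ∂μ = ∫⁻ x in S, ‖u x‖ₑ ^ (2 : ℝ) ∂μ := by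
    rw [← lintegral_indicator hS]
    refine lintegral_congr fun x ↦ ?_
    by_cases hx : x ∈ S <;> simp [hx]
  calc ν {y | a < ‖T u y‖ / 2}
      = ν {y | a < ‖T (S.indicator u) y + T (Sᶜ.indicator u) y‖ / 2} := by
        simp only [← hadd _ _ hlow hhigh, indicator_self_add_compl]
    _ ≤ .ofReal (a ^ (-2 : ℝ)) * ∫⁻ y, ‖T (S.indicator u) y‖ₑ ^ (2 : ℝ) ∂ν :=
        measure_lt_norm_add_div_two_le (hT _ hlow) ha fun y ↦ by
          simpa [← ofReal_norm, ENNReal.ofReal_le_ofReal_iff ha.le] using T_high_le y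
    _ ≤ _ := by
        rw [← low_sq]
        gcongr
        exact hTwo _ hlow

theorem lintegral_enorm_rpow_eq_lintegral_meas_lt_norm_div_two_mul {f : Y → ℂ} (hf : Measurable f)
    (hq : 0 < q) :
    ∫⁻ y, ‖f y‖ₑ ^ q ∂ν = .ofReal (2 ^ q) * (.ofReal q *
      ∫⁻ t in Ioi (0 : ℝ), ν {y | t < ‖f y‖ / 2} * .ofReal (t ^ (q - 1))) := by
  rw [← lintegral_rpow_eq_lintegral_meas_lt_mul ν (.of_forall fun y ↦ by positivity)
    (hf.norm.div_const 2).aemeasurable hq, ← lintegral_const_mul' _ _ ENNReal.ofReal_ne_top]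
  refine lintegral_congr fun y ↦ ?_
  rw [← ENNReal.ofReal_mul (by positivity), ← ofReal_norm,
    ENNReal.ofReal_rpow_of_nonneg (norm_nonneg _) hq.le,
    ← Real.mul_rpow zero_le_two (by positivity), mul_div_cancel₀ _ two_ne_zero]

theorem lintegral_enorm_rpow_le_of_two_of_one_top [SFinite μ] [IsFiniteMeasureOnCompacts μ]
    (hadd : ∀ u v, IsTestFunction u → IsTestFunction v → ∀ y, T (u + v) y = T u y + T v y)
    (hT : ∀ u, IsTestFunction u → Measurable (T u))
    (hTwo : ∀ u, IsTestFunction u → ∫⁻ y, ‖T u y‖ₑ ^ (2 : ℝ) ∂ν ≤ A * ∫⁻ x, ‖u x‖ₑ ^ (2 : ℝ) ∂μ)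
    (hOne : ∀ u, IsTestFunction u → ∀ y, ‖T u y‖ₑ ≤ .ofReal B * ∫⁻ x, ‖u x‖ₑ ∂μ)
    (hB : 0 < B) (hpq : q.HolderConjugate p) (hq : 2 < q) (hu : IsTestFunction u) :
    ∫⁻ y, ‖T u y‖ₑ ^ q ∂ν ≤ .ofReal (2 ^ q * q / (q - 2)) *
      (A * .ofReal (B ^ (q - 2)) * (∫⁻ x, ‖u x‖ₑ ^ p ∂μ) ^ (q - 1)) := by
  have : 0 < q - 2 := sub_pos.2 hq
  obtain ⟨P, hP0, huP⟩ : ∃ P : ℝ, 0 ≤ P ∧ ∫⁻ x, ‖u x‖ₑ ^ p ∂μ = .ofReal P :=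
    ⟨_, ENNReal.toReal_nonneg,
      (ENNReal.ofReal_toReal (hu.lintegral_enorm_rpow_ne_top hpq.symm.pos)).symm⟩
  rcases hP0.eq_or_lt with rfl | hP
  · have h0 : ∫⁻ x, ‖u x‖ₑ ^ p ∂μ = 0 := by rw [huP, ENNReal.ofReal_zero]
    rw [lintegral_enorm_rpow_eq_zero_of_two hu.measurable (hT u hu) (hTwo u hu) hpq.symm.pos
      hpq.pos h0]
    exact zero_le
  calc ∫⁻ y, ‖T u y‖ₑ ^ q ∂ν
      = .ofReal (2 ^ q) * (.ofReal q *
          ∫⁻ t in Ioi (0 : ℝ), ν {y | t < ‖T u y‖ / 2} * .ofReal (t ^ (q - 1))) :=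
        lintegral_enorm_rpow_eq_lintegral_meas_lt_norm_div_two_mul (hT u hu) hpq.pos
    _ ≤ .ofReal (2 ^ q) * (.ofReal q * ∫⁻ t in Ioi (0 : ℝ), A * (.ofReal (t ^ (q - 3)) *
          ∫⁻ x in {x | t * ‖u x‖ ^ (p - 1) ≤ B * P}, ‖u x‖ₑ ^ (2 : ℝ) ∂μ)) := by
        gcongr ENNReal.ofReal (2 ^ q) * (ENNReal.ofReal q * ?_)
        refine setLIntegral_mono' measurableSet_Ioi fun t (ht : 0 < t) ↦ ?_
        refine (mul_le_mul_left
          (measure_lt_enorm_div_two_le hadd hT hTwo hOne hB hu hP huP ht) _).trans_eq ?_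
        rw [show q - 3 = -2 + (q - 1) by ring, Real.rpow_add ht,
          ENNReal.ofReal_mul (by positivity)]
        ring
    _ = .ofReal (2 ^ q) * (.ofReal q * (A * (.ofReal ((B * P) ^ (q - 2) / (q - 2)) *
          .ofReal P))) := by
        rw [lintegral_const_mul' _ _ ENNReal.coe_ne_top,
          lintegral_Ioi_rpow_mul_setLIntegral_enorm_rpow_two hu.measurable hpq hq (by positivity),
          huP]
    _ = _ := by
        have hP_rpow : P ^ (q - 1) = P ^ (q - 2) * P := by
          rw [← Real.rpow_add_one hP.ne']
          ring_nf
        rw [huP, ENNReal.ofReal_rpow_of_pos hP, hP_rpow, Real.mul_rpow hB.le hP.le,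
          show B ^ (q - 2) * P ^ (q - 2) / (q - 2) = (q - 2)⁻¹ * B ^ (q - 2) * P ^ (q - 2) by ring,
          div_eq_mul_inv]
        simp_rw [ENNReal.ofReal_mul' hP.le]
        repeat rw [ENNReal.ofReal_mul (by positivity)]
        ring

end Interpolation

/-! ### The Stein–Tomas restriction theorem -/

section FourierOfMeasures

theorem measurable_fourierChar_comp {Ω : Type*} [MeasurableSpace Ω] {θ : Ω → ℝ}
    (hθ : Measurable θ) : Measurable fun ω ↦ (Real.fourierChar (θ ω) : ℂ) :=
  (by fun_prop : Continuous fun x : ℝ ↦ (Real.fourierChar x : ℂ)).measurable.comp hθ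

variable {Ω : Type*} [MeasurableSpace Ω] {μ : Measure Ω}

theorem integrable_fourierChar_smul {f : Ω → ℂ} (hf : Integrable f μ) {θ : Ω → ℝ}
    (hθ : Measurable θ) : Integrable (fun ω ↦ Real.fourierChar (θ ω) • f ω) μ :=
  hf.congr' (by
    simp only [Circle.smul_def]
    exact (measurable_fourierChar_comp hθ).aestronglyMeasurable.smul hf.aestronglyMeasurable)
    (.of_forall fun ω ↦ (Circle.norm_smul _ _).symm)

variable {F : Type*} [NormedAddCommGroup F] [InnerProductSpace ℝ F] [FiniteDimensional ℝ F]
  [MeasurableSpace F] [BorelSpace F] {u v : F → ℂ}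

theorem norm_fourier_le (u : F → ℂ) (ξ : F) : ‖𝓕 u ξ‖ ≤ ∫ x, ‖u x‖ :=
  VectorFourier.norm_fourierIntegral_le_integral_norm _ _ _ _ _

theorem fourier_conj_neg (u : F → ℂ) (ξ : F) :
    𝓕 (fun x ↦ starRingEnd ℂ (u x)) (-ξ) = starRingEnd ℂ (𝓕 u ξ) := by
  simp only [Real.fourier_eq, ← integral_conj, Circle.smul_def, smul_eq_mul, map_mul,
    inner_neg_right, neg_neg, ← Circle.coe_inv_eq_conj, ← AddChar.map_neg_eq_inv]

variable [SFinite μ] {w : Ω → ℂ} {D : Ω → F}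

theorem integral_mul_fourier_comp (hw : Integrable w μ) (hD : Measurable D) (hu : Integrable u) :
    ∫ ω, w ω * 𝓕 u (D ω) ∂μ = ∫ x, u x * ∫ ω, Real.fourierChar (-inner ℝ x (D ω)) • w ω ∂μ := by
  have hint := integrable_fourierChar_smul (hw.mul_prod hu)
    (θ := fun p ↦ -inner ℝ p.2 (D p.1)) (by fun_prop)
  simp only [Real.fourier_eq, ← integral_const_mul]
  simp only [Circle.smul_def, smul_eq_mul, mul_left_comm (w _), mul_left_comm (u _)] at hint ⊢
  rw [integral_integral_swap hint]
  simp only [mul_comm (w _)]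

theorem integral_mul_fourier_mul_fourier_neg (hw : Integrable w μ) (hD : Measurable D)
    (hu : Integrable u) (hv : Integrable v) :
    ∫ ω, w ω * 𝓕 u (D ω) * 𝓕 v (-D ω) ∂μ =
      ∫ y, v y * ∫ x, u x * ∫ ω, Real.fourierChar (inner ℝ (y - x) (D ω)) • w ω ∂μ := by
  have huD : Measurable fun ω ↦ 𝓕 u (D ω) := (continuous_fourier u).measurable.comp hD
  rw [integral_mul_fourier_comp (w := fun ω ↦ w ω * 𝓕 u (D ω)) (D := fun ω ↦ -D ω)
    (hw.mul_bdd huD.aestronglyMeasurable (.of_forall fun ω ↦ norm_fourier_le u (D ω))) hD.neg hv]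
  congr! 3 with y
  simp only [inner_neg_right, neg_neg, ← smul_mul_assoc]
  rw [integral_mul_fourier_comp (integrable_fourierChar_smul hw (by fun_prop)) hD hu]
  simp only [smul_smul, ← AddChar.map_add_eq_mul, inner_sub_left, neg_add_eq_sub]

end FourierOfMeasures

section EvenWeights

variable {E : Type*} [NormedAddCommGroup E] [InnerProductSpace ℝ E] [MeasurableSpace E]
  [BorelSpace E] {μ : Measure E} [μ.IsNegInvariant] {w : E → ℝ}

theorem integral_fourierChar_inner_smul_of_even (hw : Integrable w μ) (heven : w.Even) (z : E) :
    ∫ ω, Real.fourierChar (inner ℝ ω z) • (w ω : ℂ) ∂μ =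
      (∫ ω, w ω * Real.cos (inner ℝ ω ((2 * Real.pi) • z)) ∂μ : ℝ) := by
  set I := ∫ ω, Real.fourierChar (inner ℝ ω z) • (w ω : ℂ) ∂μ with hI
  have hconj : starRingEnd ℂ I = I := by
    rw [← integral_conj, ← integral_neg_eq_self]
    simp [Circle.smul_def, heven _, AddChar.map_neg_eq_inv, I]
  rw [← Complex.conj_eq_iff_re.1 hconj, ← RCLike.re_eq_complex_re, hI, ← integral_re
    (integrable_fourierChar_smul (f := fun ω ↦ (w ω : ℂ)) hw.ofReal (by fun_prop))]
  simp [Circle.smul_def, Real.fourierChar_apply, Complex.exp_re, inner_smul_right,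
    mul_comm]

end EvenWeights

instance (d : ℕ) [NeZero d] : (sphereMeasure d).IsNegInvariant :=
  ⟨map_sphereMeasure (LinearIsometryEquiv.neg ℝ)⟩

section SphereFourier

variable {d : ℕ} [NeZero d]

theorem integral_fourierChar_inner_sphereMeasure (z : Euc d) :
    ∫ ω, (Real.fourierChar (inner ℝ ω z) : ℂ) ∂sphereMeasure d =
      sphereFourier d (2 * Real.pi * ‖z‖) := by
  have := integral_fourierChar_inner_smul_of_even (μ := sphereMeasure d)
    (integrable_const (1 : ℝ)) (fun _ ↦ rfl) z
  simpa [Circle.smul_def, integral_cos_inner_sphereMeasure, norm_smul, abs_of_pos Real.pi_pos]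
    using this

theorem integral_fourierChar_inner_smul_sq (v z : Euc d) :
    ∫ ω, Real.fourierChar (inner ℝ ω z) • ((inner ℝ ω v ^ 2 : ℝ) : ℂ) ∂sphereMeasure d =
      sphereKernel v ((2 * Real.pi) • z) :=
  integral_fourierChar_inner_smul_of_even
    (by simpa only [sq] using integrable_inner_mul_inner_sphereMeasure v) (fun ω ↦ by simp) z

end SphereFourier

section CoordKernel

variable {d : ℕ}

/-- The inverse Fourier transform of the measure `ωᵢ² dσ(ω)`. The weight is what makes the
projection of the sphere along the `i`-th coordinate harmless, and the weights `ωᵢ²` add up to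
one. -/
def coordKernel (i : Fin d) (z : Euc d) : ℂ :=
  ∫ ω, Real.fourierChar (inner ℝ z ω) • ((ω i ^ 2 : ℝ) : ℂ) ∂sphereMeasure d

variable [NeZero d]

theorem coordKernel_eq_sphereKernel (i : Fin d) (z : Euc d) :
    coordKernel i z = sphereKernel (EuclideanSpace.single i 1) ((2 * Real.pi) • z) := by
  rw [← integral_fourierChar_inner_smul_sq]
  simp [coordKernel, EuclideanSpace.inner_single_right, real_inner_comm]

theorem norm_coordKernel_le_one (i : Fin d) (z : Euc d) : ‖coordKernel i z‖ ≤ 1 := by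
  rw [coordKernel_eq_sphereKernel, Complex.norm_real]
  simpa using abs_sphereKernel_le (EuclideanSpace.single i (1 : ℝ)) ((2 * Real.pi) • z)

theorem measurable_coordKernel (i : Fin d) : Measurable (coordKernel i) := by
  refine (StronglyMeasurable.integral_prod_right' (f := fun p : Euc d × Euc d ↦
    Real.fourierChar (inner ℝ p.1 p.2) • ((p.2 i ^ 2 : ℝ) : ℂ)) ?_).measurable
  simp only [Circle.smul_def]
  exact ((measurable_fourierChar_comp (by fun_prop)).smul (by fun_prop)).stronglyMeasurable

theorem integrable_apply_sq_sphereMeasure (i : Fin d) :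
    Integrable (fun ω : Euc d ↦ ((ω i ^ 2 : ℝ) : ℂ)) (sphereMeasure d) := by
  refine .of_bound (C := 1) (by fun_prop) ?_
  filter_upwards [sphereMeasure_ae_abs_apply_le_one i] with ω hω
  rwa [Complex.norm_real, norm_pow, sq_le_one_iff₀ (norm_nonneg _)]

theorem exists_norm_coordKernel_le_rpow (d : ℕ) [NeZero d] :
    ∃ C, 0 < C ∧ ∀ (i : Fin d) (z : Euc d), z ≠ 0 →
      ‖coordKernel i z‖ ≤ C * ‖z‖ ^ (-((d - 1) / 2 : ℝ)) := by
  obtain ⟨C, hC, h⟩ := exists_abs_sphereKernel_le_rpow (d := d)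
  have := Real.pi_pos
  refine ⟨C * (2 * Real.pi) ^ (-((d - 1) / 2 : ℝ)), by positivity, fun i z hz ↦ ?_⟩
  rw [coordKernel_eq_sphereKernel, Complex.norm_real, mul_assoc,
    ← Real.mul_rpow (by positivity) (by positivity)]
  refine (h _ (by simp) _ (smul_ne_zero (by positivity) hz)).trans_eq ?_
  rw [norm_smul, Real.norm_of_nonneg (by positivity)]

end CoordKernel

section SliceOperator

variable {n : ℕ}

/-- Convolution on `ℝⁿ` with the slice of `coordKernel i` at height `s` in the `i`-th variable. -/
def sliceOperator (i : Fin (n + 1)) (s : ℝ) (u : Euc n → ℂ) (y : Euc n) : ℂ :=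
  ∫ x, u x * coordKernel i (insertCoord i (s, y - x))

section

variable (i : Fin (n + 1)) (s : ℝ) {u v : Euc n → ℂ}

theorem measurable_sliceOperator (hu : Measurable u) : Measurable (sliceOperator i s u) := by
  have := measurable_coordKernel i
  refine (StronglyMeasurable.integral_prod_right' (f := fun p : Euc n × Euc n ↦
    u p.2 * coordKernel i (insertCoord i (s, p.1 - p.2))) ?_).measurable
  fun_prop

theorem integrable_mul_coordKernel {α : Type*} [MeasurableSpace α] {μ : Measure α} {w : α → ℂ}
    (hw : Integrable w μ) {g : α → Euc (n + 1)} (hg : Measurable g) :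
    Integrable (fun x ↦ w x * coordKernel i (g x)) μ :=
  hw.mul_bdd ((measurable_coordKernel i).comp hg).aestronglyMeasurable
    (.of_forall fun _ ↦ norm_coordKernel_le_one i _)

theorem norm_integral_mul_coordKernel_le {α : Type*} [MeasurableSpace α] {μ : Measure α}
    {w : α → ℂ} (hw : Integrable w μ) (g : α → Euc (n + 1)) :
    ‖∫ x, w x * coordKernel i (g x) ∂μ‖ ≤ ∫ x, ‖w x‖ ∂μ :=
  norm_integral_le_of_norm_le hw.norm (.of_forall fun x ↦ by
    rw [norm_mul]
    exact mul_le_of_le_one_right (norm_nonneg _) (norm_coordKernel_le_one i _))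

theorem sliceOperator_add (hu : Integrable u) (hv : Integrable v) (y : Euc n) :
    sliceOperator i s (u + v) y = sliceOperator i s u y + sliceOperator i s v y := by
  simp only [sliceOperator, Pi.add_apply, add_mul]
  exact integral_add (integrable_mul_coordKernel i hu (by fun_prop))
    (integrable_mul_coordKernel i hv (by fun_prop))

theorem integral_mul_sliceOperator (hu : Integrable u) (hv : Integrable v) :
    ∫ y, v y * sliceOperator i s u y =
      ∫ ω, (Real.fourierChar (s * ω i) • ((ω i ^ 2 : ℝ) : ℂ)) * 𝓕 u (dropCoord i ω) *
        𝓕 v (-dropCoord i ω) ∂sphereMeasure (n + 1) := by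
  rw [integral_mul_fourier_mul_fourier_neg
    (integrable_fourierChar_smul (integrable_apply_sq_sphereMeasure i) (by fun_prop))
    (dropCoord i).continuous.measurable hu hv]
  simp only [smul_smul, ← AddChar.map_add_eq_mul, sliceOperator, coordKernel, inner_insertCoord,
    add_comm]

end

theorem exists_enorm_integral_mul_sliceOperator_le (n : ℕ) :
    ∃ C : ℝ≥0, ∀ (i : Fin (n + 1)) (s : ℝ) {u v : Euc n → ℂ}, IsTestFunction u →
      IsTestFunction v → ‖∫ y, v y * sliceOperator i s u y‖ₑ ≤
        C * (∫⁻ x, ‖u x‖ₑ ^ (2 : ℝ)) ^ (1 / 2 : ℝ) * (∫⁻ x, ‖v x‖ₑ ^ (2 : ℝ)) ^ (1 / 2 : ℝ) := by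
  have hC : 2 * (sphereArea (n + 1))⁻¹ ≠ ∞ :=
    ENNReal.mul_ne_top (by simp) (ENNReal.inv_ne_top.2 (sphereArea_ne_zero _))
  refine ⟨(2 * (sphereArea (n + 1))⁻¹).toNNReal, fun i s u v hu hv ↦ ?_⟩
  have hFu := (continuous_fourier u).measurable
  have hFv := (continuous_fourier v).measurable
  rw [ENNReal.coe_toNNReal hC, integral_mul_sliceOperator i s hu.integrable hv.integrable,
    mul_assoc]
  calc _ ≤ ∫⁻ ω, ‖(Real.fourierChar (s * ω i) • ((ω i ^ 2 : ℝ) : ℂ)) * 𝓕 u (dropCoord i ω) *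
          𝓕 v (-dropCoord i ω)‖ₑ ∂sphereMeasure (n + 1) := enorm_integral_le_lintegral_enorm _
    _ ≤ ∫⁻ ω, .ofReal |ω i| * ((fun η ↦ ‖𝓕 u η‖ₑ * ‖𝓕 v (-η)‖ₑ) (dropCoord i ω))
          ∂sphereMeasure (n + 1) := by
        refine lintegral_mono_ae ?_
        filter_upwards [sphereMeasure_ae_abs_apply_le_one i] with ω hω
        rw [enorm_mul, enorm_mul, mul_assoc, ← ofReal_norm, Circle.norm_smul, Complex.norm_real,
          norm_pow, Real.norm_eq_abs]
        gcongr
        exact pow_le_of_le_one (abs_nonneg _) hω two_ne_zero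
    _ ≤ 2 * (sphereArea (n + 1))⁻¹ * ∫⁻ η, ‖𝓕 u η‖ₑ * ‖𝓕 v (-η)‖ₑ :=
        lintegral_abs_apply_mul_dropCoord_le i (by fun_prop)
    _ ≤ 2 * (sphereArea (n + 1))⁻¹ * ((∫⁻ η, ‖𝓕 u η‖ₑ ^ (2 : ℝ)) ^ (1 / 2 : ℝ) *
          (∫⁻ η, ‖𝓕 v (-η)‖ₑ ^ (2 : ℝ)) ^ (1 / 2 : ℝ)) := by
        gcongr
        exact ENNReal.lintegral_mul_le_Lp_mul_Lq volume .two_two (by fun_prop) (by fun_prop)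
    _ = _ := by
        rw [lintegral_neg_eq_self fun η ↦ ‖𝓕 v η‖ₑ ^ (2 : ℝ),
          lintegral_enorm_fourier_rpow_two hu.integrable (hu.memLp 2),
          lintegral_enorm_fourier_rpow_two hv.integrable (hv.memLp 2)]

theorem exists_lintegral_enorm_sliceOperator_rpow_two_le (n : ℕ) :
    ∃ C : ℝ≥0, ∀ (i : Fin (n + 1)) (s : ℝ) {u : Euc n → ℂ}, IsTestFunction u →
      ∫⁻ y, ‖sliceOperator i s u y‖ₑ ^ (2 : ℝ) ≤ C * ∫⁻ x, ‖u x‖ₑ ^ (2 : ℝ) := by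
  obtain ⟨C, hC⟩ := exists_enorm_integral_mul_sliceOperator_le n
  refine ⟨C ^ 2, fun i s u hu ↦ (lintegral_enorm_rpow_le_of_dual .two_two
    (measurable_sliceOperator i s hu.measurable) fun v hv ↦ hC i s hu hv).trans_eq ?_⟩
  rw [ENNReal.mul_rpow_of_nonneg _ _ (by norm_num), ← ENNReal.rpow_mul]
  norm_num

theorem exists_enorm_sliceOperator_le (n : ℕ) :
    ∃ D, 0 < D ∧ ∀ (i : Fin (n + 1)) {s : ℝ}, s ≠ 0 → ∀ {u : Euc n → ℂ}, Measurable u → ∀ y,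
      ‖sliceOperator i s u y‖ₑ ≤ .ofReal (D * |s| ^ (-(n / 2 : ℝ))) * ∫⁻ x, ‖u x‖ₑ := by
  obtain ⟨D, hD, hdecay⟩ := exists_norm_coordKernel_le_rpow (n + 1)
  refine ⟨D, hD, fun i s hs u hu y ↦ (enorm_integral_le_lintegral_enorm _).trans ?_⟩
  rw [← lintegral_const_mul _ hu.enorm]
  refine lintegral_mono fun x ↦ ?_
  have hs0 := abs_pos.2 hs
  have hle : |s| ≤ ‖insertCoord i (s, y - x)‖ := by
    rw [norm_insertCoord]
    exact Real.abs_le_sqrt (by simp)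
  have hker := hdecay i _ (norm_pos_iff.1 (hs0.trans_le hle))
  rw [Nat.cast_succ, add_sub_cancel_right] at hker
  rw [enorm_mul, mul_comm, ← ofReal_norm (coordKernel _ _)]
  gcongr
  refine hker.trans ?_
  gcongr D * ?_
  exact Real.rpow_le_rpow_of_nonpos hs0 hle (neg_nonpos.2 (by positivity))

variable {q p : ℝ}

theorem two_lt_of_eq_two_add_four_div [NeZero n] (hq : q = 2 + 4 / n) : 2 < q := by
  have : (0 : ℝ) < n := Nat.cast_pos.2 (NeZero.pos n)
  rw [hq, lt_add_iff_pos_right]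
  positivity

theorem neg_half_mul_sub_two_eq [NeZero n] (hqp : q.HolderConjugate p) (hq : q = 2 + 4 / n) :
    (-(n / 2 : ℝ)) * (q - 2) = -(2 - 2 / p) * q := by
  have : (n : ℝ) ≠ 0 := NeZero.ne _
  have := hqp.ne_zero
  rw [div_eq_mul_inv 2 p, ← hqp.one_sub_inv]
  rw [show -(2 - 2 * (1 - q⁻¹)) * q = -2 by field_simp; ring, hq]
  field_simp
  ring

theorem exists_lintegral_enorm_sliceOperator_rpow_le [NeZero n] (hqp : q.HolderConjugate p)
    (hq : q = 2 + 4 / n) :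
    ∃ C : ℝ≥0, ∀ (i : Fin (n + 1)) {s : ℝ}, s ≠ 0 → ∀ {u : Euc n → ℂ}, IsTestFunction u →
      (∫⁻ y, ‖sliceOperator i s u y‖ₑ ^ q) ^ (1 / q) ≤
        C * .ofReal (|s| ^ (-(2 - 2 / p))) * (∫⁻ x, ‖u x‖ₑ ^ p) ^ (1 / p) := by
  obtain ⟨A, hA⟩ := exists_lintegral_enorm_sliceOperator_rpow_two_le n
  obtain ⟨D, hD, hdecay⟩ := exists_enorm_sliceOperator_le n
  have hq2 := two_lt_of_eq_two_add_four_div hq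
  have hq0 := hqp.pos
  set K : ℝ≥0∞ := .ofReal (2 ^ q * q / (q - 2)) * A * .ofReal (D ^ (q - 2))
  have hK : K ^ (1 / q) ≠ ∞ := ENNReal.rpow_ne_top_of_nonneg (by positivity) (by finiteness)
  refine ⟨(K ^ (1 / q)).toNNReal, fun i s hs u hu ↦ ?_⟩
  rw [ENNReal.coe_toNNReal hK]
  have hs0 := abs_pos.2 hs
  have hexp : (q - 1) * (1 / q) = 1 / p := by
    rw [one_div p, ← hqp.one_sub_inv]
    field_simp
  have hscale : (D * |s| ^ (-(n / 2 : ℝ))) ^ (q - 2) =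
      D ^ (q - 2) * (|s| ^ (-(2 - 2 / p))) ^ q := by
    rw [Real.mul_rpow hD.le (by positivity), ← Real.rpow_mul hs0.le, ← Real.rpow_mul hs0.le,
      neg_half_mul_sub_two_eq hqp hq]
  calc _ ≤ (.ofReal (2 ^ q * q / (q - 2)) * (A * .ofReal ((D * |s| ^ (-(n / 2 : ℝ))) ^ (q - 2)) *
          (∫⁻ x, ‖u x‖ₑ ^ p) ^ (q - 1))) ^ (1 / q) := by
        gcongr
        exact lintegral_enorm_rpow_le_of_two_of_one_top
          (fun u v hu hv ↦ sliceOperator_add i s hu.integrable hv.integrable)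
          (fun u hu ↦ measurable_sliceOperator i s hu.measurable) (fun u hu ↦ hA i s hu)
          (fun u hu ↦ hdecay i hs hu.measurable) (by positivity) hqp hq2 hu
    _ = (K * .ofReal (|s| ^ (-(2 - 2 / p))) ^ q * (∫⁻ x, ‖u x‖ₑ ^ p) ^ (q - 1)) ^ (1 / q) := by
        rw [hscale, ENNReal.ofReal_mul (by positivity),
          ← ENNReal.ofReal_rpow_of_nonneg (by positivity) hq0.le]
        simp only [K, mul_assoc]
    _ = _ := by
        rw [ENNReal.mul_rpow_of_nonneg _ _ (by positivity),
          ENNReal.mul_rpow_of_nonneg _ _ (by positivity), ← ENNReal.rpow_mul, ← ENNReal.rpow_mul,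
          hexp, mul_one_div_cancel hq0.ne', ENNReal.rpow_one]

end SliceOperator

section Restriction

variable {n : ℕ}

section

variable (i : Fin (n + 1)) {φ ψ : Euc (n + 1) → ℂ}

theorem insertCoord_sub (a b : ℝ × Euc n) :
    insertCoord i a - insertCoord i b = insertCoord i (a - b) :=
  ext_inner_right ℝ fun ω ↦ by
    simp only [inner_sub_left, inner_insertCoord, Prod.fst_sub, Prod.snd_sub]
    ring

theorem IsTestFunction.comp_insertCoord (hφ : IsTestFunction φ) (s : ℝ) :
    IsTestFunction fun x ↦ φ (insertCoord i (s, x)) where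
  measurable := hφ.measurable.comp (by fun_prop)
  bounded := hφ.bounded.imp fun _ hK x ↦ hK _
  hasCompactSupport := by
    obtain ⟨R, hR⟩ := hφ.hasCompactSupport.isCompact.isBounded.exists_norm_le
    refine .intro (isCompact_closedBall (0 : Euc n) R) fun x hx ↦ ?_
    by_contra h
    refine hx (mem_closedBall_zero_iff.2 (le_trans ?_ (hR _ (subset_tsupport _ h))))
    rw [norm_insertCoord]
    exact Real.le_sqrt_of_sq_le (by simp [sq_nonneg])

theorem integral_eq_integral_integral_insertCoord {f : Euc (n + 1) → ℂ} (hf : Integrable f) :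
    ∫ x, f x = ∫ s, ∫ y, f (insertCoord i (s, y)) := by
  have hmp := measurePreserving_insertCoord i
  rw [← hmp.integral_comp (insertCoord i).measurableEmbedding, Measure.volume_eq_prod,
    integral_prod (fun z ↦ f (insertCoord i z))
      ((hmp.integrable_comp_emb (insertCoord i).measurableEmbedding).2 hf)]

theorem integral_mul_coordKernel_sub (hφ : Integrable φ) (t : ℝ) (y : Euc n) :
    ∫ x, φ x * coordKernel i (insertCoord i (t, y) - x) =
      ∫ s, sliceOperator i (t - s) (fun x ↦ φ (insertCoord i (s, x))) y := by
  rw [integral_eq_integral_integral_insertCoord i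
    (integrable_mul_coordKernel i hφ (by fun_prop))]
  simp only [insertCoord_sub]
  rfl

theorem integral_slice_mul_integral_coordKernel (hφ : IsTestFunction φ) (hψ : IsTestFunction ψ)
    (t : ℝ) :
    ∫ y, ψ (insertCoord i (t, y)) * ∫ x, φ x * coordKernel i (insertCoord i (t, y) - x) =
      ∫ s, ∫ y, ψ (insertCoord i (t, y)) *
        sliceOperator i (t - s) (fun x ↦ φ (insertCoord i (s, x))) y := by
  have hmeas := measurable_coordKernel i
  have hφm := hφ.measurable
  have hψm := hψ.measurable
  have hψt := hψ.comp_insertCoord i t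
  simp only [integral_mul_coordKernel_sub i hφ.integrable, ← integral_const_mul]
  refine integral_integral_swap ?_
  have hint : Integrable fun p : ℝ × Euc n ↦ φ (insertCoord i p) :=
    ((measurePreserving_insertCoord i).integrable_comp_emb (insertCoord i).measurableEmbedding).2
      hφ.integrable
  refine (hψt.integrable.norm.mul_prod hint.norm.integral_prod_left).mono' ?_
    (.of_forall fun p ↦ ?_)
  · refine (Measurable.mul (by fun_prop) (StronglyMeasurable.integral_prod_right' (f := fun
      r : (Euc n × ℝ) × Euc n ↦ φ (insertCoord i (r.1.2, r.2)) *
        coordKernel i (insertCoord i (t - r.1.2, r.1.1 - r.2))) ?_).measurable).aestronglyMeasurable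
    fun_prop
  · exact (norm_mul_le _ _).trans <| by
      gcongr
      exact norm_integral_mul_coordKernel_le i (hφ.comp_insertCoord i p.2).integrable _

theorem integral_apply_sq_mul_fourier_mul_fourier_neg (hφ : IsTestFunction φ)
    (hψ : IsTestFunction ψ) :
    ∫ ω, ((ω i ^ 2 : ℝ) : ℂ) * 𝓕 φ ω * 𝓕 ψ (-ω) ∂sphereMeasure (n + 1) =
      ∫ t, ∫ s, ∫ y, ψ (insertCoord i (t, y)) *
        sliceOperator i (t - s) (fun x ↦ φ (insertCoord i (s, x))) y := by
  have hmeas := measurable_coordKernel i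
  have hφm := hφ.measurable
  have hint : Integrable fun z ↦ ψ z * ∫ x, φ x * coordKernel i (z - x) :=
    hψ.integrable.mul_bdd (StronglyMeasurable.integral_prod_right' (f := fun
      p : Euc (n + 1) × Euc (n + 1) ↦ φ p.2 * coordKernel i (p.1 - p.2))
      (by fun_prop)).aestronglyMeasurable
      (.of_forall fun z ↦ norm_integral_mul_coordKernel_le i hφ.integrable _)
  rw [integral_mul_fourier_mul_fourier_neg (D := fun ω ↦ ω) (integrable_apply_sq_sphereMeasure i)
    measurable_id hφ.integrable hψ.integrable]
  simp only [← integral_slice_mul_integral_coordKernel i hφ hψ]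
  exact integral_eq_integral_integral_insertCoord i hint

theorem lintegral_apply_sq_mul_enorm_fourier_rpow_two (φ : Euc (n + 1) → ℂ) :
    ∫⁻ ω, .ofReal (ω i ^ 2) * ‖𝓕 φ ω‖ₑ ^ (2 : ℝ) ∂sphereMeasure (n + 1) =
      ‖∫ ω, ((ω i ^ 2 : ℝ) : ℂ) * 𝓕 φ ω * 𝓕 (fun x ↦ starRingEnd ℂ (φ x)) (-ω)
        ∂sphereMeasure (n + 1)‖ₑ := by
  have hcont := continuous_fourier φ
  have hsq (ω : Euc (n + 1)) : ((ω i ^ 2 : ℝ) : ℂ) * 𝓕 φ ω * 𝓕 (fun x ↦ starRingEnd ℂ (φ x)) (-ω) =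
      (ω i ^ 2 * ‖𝓕 φ ω‖ ^ 2 : ℝ) := by
    rw [fourier_conj_neg, mul_assoc, Complex.mul_conj, Complex.normSq_eq_norm_sq,
      ← Complex.ofReal_mul]
  have hint : Integrable (fun ω : Euc (n + 1) ↦ ω i ^ 2 * ‖𝓕 φ ω‖ ^ 2) (sphereMeasure (n + 1)) := by
    refine Integrable.mul_bdd (c := (∫ x, ‖φ x‖) ^ 2) (integrable_apply_sq_sphereMeasure i).re
      (by fun_prop) (.of_forall fun ω ↦ ?_)
    rw [norm_pow, norm_norm]
    gcongr
    exact norm_fourier_le _ _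
  simp only [hsq]
  rw [integral_complex_ofReal, ← ofReal_norm, Complex.norm_real,
    Real.norm_of_nonneg (integral_nonneg fun ω ↦ by positivity),
    ofReal_integral_eq_lintegral_ofReal hint (.of_forall fun ω ↦ by positivity)]
  refine lintegral_congr fun ω ↦ ?_
  rw [ENNReal.ofReal_mul (by positivity), ENNReal.ofReal_pow (norm_nonneg _), ofReal_norm,
    ENNReal.rpow_ofNat]

theorem lintegral_lintegral_insertCoord_rpow (hφ : Measurable φ) {p : ℝ} (hp : p ≠ 0) :
    ∫⁻ s, ((∫⁻ y, ‖φ (insertCoord i (s, y))‖ₑ ^ p) ^ (1 / p)) ^ p = ∫⁻ x, ‖φ x‖ₑ ^ p := by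
  rw [← (measurePreserving_insertCoord i).lintegral_comp (hφ.enorm.pow_const p),
    Measure.volume_eq_prod, lintegral_prod _ (by fun_prop)]
  simp only [← ENNReal.rpow_mul, one_div_mul_cancel hp, ENNReal.rpow_one]

end

variable {q p : ℝ}

theorem exists_enorm_integral_mul_sliceOperator_le_rpow [NeZero n] (hqp : q.HolderConjugate p)
    (hq : q = 2 + 4 / n) :
    ∃ C : ℝ≥0, ∀ (i : Fin (n + 1)) {s : ℝ}, s ≠ 0 → ∀ {u v : Euc n → ℂ}, IsTestFunction u →
      IsTestFunction v → ‖∫ y, v y * sliceOperator i s u y‖ₑ ≤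
        C * .ofReal (|s| ^ (-(2 - 2 / p))) *
          ((∫⁻ x, ‖v x‖ₑ ^ p) ^ (1 / p) * (∫⁻ x, ‖u x‖ₑ ^ p) ^ (1 / p)) := by
  obtain ⟨C, hC⟩ := exists_lintegral_enorm_sliceOperator_rpow_le hqp hq
  refine ⟨C, fun i s hs u v hu hv ↦ ?_⟩
  have hTu := measurable_sliceOperator i s hu.measurable
  calc _ ≤ ∫⁻ y, ‖v y * sliceOperator i s u y‖ₑ := enorm_integral_le_lintegral_enorm _
    _ = ∫⁻ y, ‖v y‖ₑ * ‖sliceOperator i s u y‖ₑ := by simp only [enorm_mul]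
    _ ≤ (∫⁻ y, ‖v y‖ₑ ^ p) ^ (1 / p) * (∫⁻ y, ‖sliceOperator i s u y‖ₑ ^ q) ^ (1 / q) :=
        ENNReal.lintegral_mul_le_Lp_mul_Lq volume hqp.symm hv.measurable.enorm.aemeasurable
          hTu.enorm.aemeasurable
    _ ≤ (∫⁻ y, ‖v y‖ₑ ^ p) ^ (1 / p) *
          (C * .ofReal (|s| ^ (-(2 - 2 / p))) * (∫⁻ x, ‖u x‖ₑ ^ p) ^ (1 / p)) := by
        gcongr
        exact hC i hs hu
    _ = _ := mul_left_comm _ _ _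

theorem exists_lintegral_apply_sq_mul_enorm_fourier_le [NeZero n] (hqp : q.HolderConjugate p)
    (hq : q = 2 + 4 / n) :
    ∃ C : ℝ≥0, ∀ (i : Fin (n + 1)) {φ : Euc (n + 1) → ℂ}, IsTestFunction φ →
      ∫⁻ ω, .ofReal (ω i ^ 2) * ‖𝓕 φ ω‖ₑ ^ (2 : ℝ) ∂sphereMeasure (n + 1) ≤
        C * (∫⁻ x, ‖φ x‖ₑ ^ p) ^ (2 / p) := by
  have hp2 : p < 2 := by
    nlinarith [hqp.sub_one_mul_conj, two_lt_of_eq_two_add_four_div hq]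
  obtain ⟨C, hC⟩ := exists_enorm_integral_mul_sliceOperator_le_rpow hqp hq
  obtain ⟨K, hHLS⟩ := exists_lintegral_lintegral_mul_abs_sub_rpow_le hqp.symm.lt hp2
  refine ⟨C * K, fun i φ hφ ↦ ?_⟩
  have hφm := hφ.measurable
  set N : ℝ → ℝ≥0∞ := fun s ↦ (∫⁻ y, ‖φ (insertCoord i (s, y))‖ₑ ^ p) ^ (1 / p) with hN
  have hNm : Measurable N := (Measurable.lintegral_prod_right' (f := fun z : ℝ × Euc n ↦
    ‖φ (insertCoord i z)‖ₑ ^ p) (by fun_prop)).pow_const _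
  have hψ : IsTestFunction fun x ↦ starRingEnd ℂ (φ x) :=
    hφ.mono (by fun_prop) fun x ↦ (RCLike.norm_conj _).le
  have hpair (t s : ℝ) (hst : t - s ≠ 0) : ‖∫ y, starRingEnd ℂ (φ (insertCoord i (t, y))) *
      sliceOperator i (t - s) (fun x ↦ φ (insertCoord i (s, x))) y‖ₑ ≤
        C * (N t * N s * .ofReal (|t - s| ^ (-(2 - 2 / p)))) := by
    refine (hC i hst (hφ.comp_insertCoord i s) (hψ.comp_insertCoord i t)).trans_eq ?_
    simp only [enorm_eq_nnnorm, RCLike.nnnorm_conj, hN]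
    ring
  rw [lintegral_apply_sq_mul_enorm_fourier_rpow_two i φ,
    integral_apply_sq_mul_fourier_mul_fourier_neg i hφ hψ, ENNReal.coe_mul, mul_assoc]
  calc _ ≤ ∫⁻ t, ∫⁻ s, ‖∫ y, starRingEnd ℂ (φ (insertCoord i (t, y))) *
          sliceOperator i (t - s) (fun x ↦ φ (insertCoord i (s, x))) y‖ₑ :=
        (enorm_integral_le_lintegral_enorm _).trans
          (lintegral_mono fun t ↦ enorm_integral_le_lintegral_enorm _)
    _ ≤ ∫⁻ t, ∫⁻ s, C * (N t * N s * .ofReal (|t - s| ^ (-(2 - 2 / p)))) := by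
        refine lintegral_mono fun t ↦ lintegral_mono_ae ?_
        filter_upwards [Measure.ae_ne volume t] with s hs
        exact hpair t s (sub_ne_zero.2 hs.symm)
    _ = C * ∫⁻ t, ∫⁻ s, N t * N s * .ofReal (|t - s| ^ (-(2 - 2 / p))) := by
        simp only [lintegral_const_mul' _ _ ENNReal.coe_ne_top]
    _ ≤ C * (K * (∫⁻ s, N s ^ p) ^ (2 / p)) := by
        gcongr
        exact hHLS N hNm
    _ = _ := by rw [lintegral_lintegral_insertCoord_rpow i hφm hqp.symm.ne_zero]

end Restriction

section Extension

variable {d : ℕ} {q p : ℝ}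

theorem exists_lintegral_enorm_fourier_sphereMeasure_le {n : ℕ} [NeZero n]
    (hqp : q.HolderConjugate p) (hq : q = 2 + 4 / n) :
    ∃ C : ℝ≥0, ∀ {φ : Euc (n + 1) → ℂ}, IsTestFunction φ →
      ∫⁻ ω, ‖𝓕 φ ω‖ₑ ^ (2 : ℝ) ∂sphereMeasure (n + 1) ≤ C * (∫⁻ x, ‖φ x‖ₑ ^ p) ^ (2 / p) := by
  obtain ⟨C, hC⟩ := exists_lintegral_apply_sq_mul_enorm_fourier_le hqp hq
  refine ⟨(n + 1 : ℕ) * C, fun {φ} hφ ↦ ?_⟩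
  have hcont := continuous_fourier φ
  calc ∫⁻ ω, ‖𝓕 φ ω‖ₑ ^ (2 : ℝ) ∂sphereMeasure (n + 1)
      = ∫⁻ ω, ∑ i, .ofReal (ω i ^ 2) * ‖𝓕 φ ω‖ₑ ^ (2 : ℝ) ∂sphereMeasure (n + 1) := by
        refine lintegral_congr_ae ?_
        filter_upwards [sphereMeasure_ae_norm_eq_one (n + 1)] with ω hω
        rw [← Finset.sum_mul, ← ENNReal.ofReal_sum_of_nonneg fun i _ ↦ sq_nonneg _,
          ← EuclideanSpace.real_norm_sq_eq, hω]
        simp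
    _ = ∑ i, ∫⁻ ω, .ofReal (ω i ^ 2) * ‖𝓕 φ ω‖ₑ ^ (2 : ℝ) ∂sphereMeasure (n + 1) :=
        lintegral_finsetSum _ fun i _ ↦ by fun_prop
    _ ≤ ∑ _i : Fin (n + 1), C * (∫⁻ x, ‖φ x‖ₑ ^ p) ^ (2 / p) :=
        Finset.sum_le_sum fun i _ ↦ hC i hφ
    _ = _ := by simp [mul_assoc]

/-- The inverse Fourier transform of the measure `g dσ` (the extension operator of the sphere). -/
def sphereExtension (g : Euc d → ℂ) (x : Euc d) : ℂ :=
  ∫ ω, Real.fourierChar (inner ℝ x ω) • g ω ∂sphereMeasure d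

variable {g : Euc d → ℂ}

theorem continuous_sphereExtension (hg : Integrable g (sphereMeasure d)) :
    Continuous (sphereExtension g) :=
  continuous_of_dominated (fun x ↦ (integrable_fourierChar_smul hg
    (θ := fun ω ↦ inner ℝ x ω) (by fun_prop)).aestronglyMeasurable)
    (fun x ↦ .of_forall fun ω ↦ (Circle.norm_smul _ _).le) hg.norm
    (.of_forall fun ω ↦ by fun_prop)

theorem enorm_sphereExtension_le [NeZero d] (hg : AEStronglyMeasurable g (sphereMeasure d))
    (x : Euc d) :
    ‖sphereExtension g x‖ₑ ≤ (∫⁻ ω, ‖g ω‖ₑ ^ (2 : ℝ) ∂sphereMeasure d) ^ (1 / 2 : ℝ) :=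
  calc ‖sphereExtension g x‖ₑ
      ≤ ∫⁻ ω, ‖Real.fourierChar (inner ℝ x ω) • g ω‖ₑ ∂sphereMeasure d :=
        enorm_integral_le_lintegral_enorm _
    _ = ∫⁻ ω, ‖g ω‖ₑ * 1 ∂sphereMeasure d := by simp [← ofReal_norm, Circle.norm_smul]
    _ ≤ (∫⁻ ω, ‖g ω‖ₑ ^ (2 : ℝ) ∂sphereMeasure d) ^ (1 / 2 : ℝ) *
          (∫⁻ _, 1 ^ (2 : ℝ) ∂sphereMeasure d) ^ (1 / 2 : ℝ) :=
        ENNReal.lintegral_mul_le_Lp_mul_Lq _ .two_two hg.enorm aemeasurable_const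
    _ = _ := by simp

theorem integral_mul_sphereExtension [NeZero d] {u : Euc d → ℂ} (hu : Integrable u)
    (hg : Integrable g (sphereMeasure d)) :
    ∫ x, u x * sphereExtension g x = ∫ ω, g ω * 𝓕 u (-ω) ∂sphereMeasure d := by
  simp [integral_mul_fourier_comp hg measurable_neg hu, sphereExtension]

theorem exists_lintegral_enorm_sphereExtension_rpow_le {n : ℕ} [NeZero n]
    (hqp : q.HolderConjugate p) (hq : q = 2 + 4 / n) :
    ∃ C : ℝ≥0, ∀ {g : Euc (n + 1) → ℂ}, Integrable g (sphereMeasure (n + 1)) →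
      ∫⁻ x, ‖sphereExtension g x‖ₑ ^ q ≤
        C * (∫⁻ ω, ‖g ω‖ₑ ^ (2 : ℝ) ∂sphereMeasure (n + 1)) ^ (q / 2) := by
  obtain ⟨C, hC⟩ := exists_lintegral_enorm_fourier_sphereMeasure_le hqp hq
  refine ⟨C ^ (q / 2), fun {g} hg ↦ ?_⟩
  refine (lintegral_enorm_rpow_le_of_dual hqp (continuous_sphereExtension hg).measurable
    (M := (C * ∫⁻ ω, ‖g ω‖ₑ ^ (2 : ℝ) ∂sphereMeasure (n + 1)) ^ (1 / 2 : ℝ)) fun u hu ↦ ?_).trans_eq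
    (by
      rw [← ENNReal.rpow_mul, one_div_mul_eq_div, ENNReal.mul_rpow_of_nonneg _ _ (by
        linarith [hqp.pos]), ENNReal.coe_rpow_of_nonneg _ (by linarith [hqp.pos])])
  have hcont := continuous_fourier u
  rw [integral_mul_sphereExtension hu.integrable hg]
  calc ‖∫ ω, g ω * 𝓕 u (-ω) ∂sphereMeasure (n + 1)‖ₑ
      ≤ ∫⁻ ω, ‖g ω‖ₑ * ‖𝓕 u (-ω)‖ₑ ∂sphereMeasure (n + 1) :=
        (enorm_integral_le_lintegral_enorm _).trans_eq (by simp only [enorm_mul])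
    _ ≤ (∫⁻ ω, ‖g ω‖ₑ ^ (2 : ℝ) ∂sphereMeasure (n + 1)) ^ (1 / 2 : ℝ) *
          (∫⁻ ω, ‖𝓕 u (-ω)‖ₑ ^ (2 : ℝ) ∂sphereMeasure (n + 1)) ^ (1 / 2 : ℝ) :=
        ENNReal.lintegral_mul_le_Lp_mul_Lq _ .two_two hg.aestronglyMeasurable.enorm
          (by fun_prop)
    _ ≤ (∫⁻ ω, ‖g ω‖ₑ ^ (2 : ℝ) ∂sphereMeasure (n + 1)) ^ (1 / 2 : ℝ) *
          (C * (∫⁻ x, ‖u x‖ₑ ^ p) ^ (2 / p)) ^ (1 / 2 : ℝ) := by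
        rw [lintegral_neg_eq_self (fun ω ↦ ‖𝓕 u ω‖ₑ ^ (2 : ℝ))]
        gcongr
        exact hC hu
    _ = _ := by
        simp only [ENNReal.mul_rpow_of_nonneg _ _ one_half_pos.le, ← ENNReal.rpow_mul]
        ring_nf

theorem exists_lintegral_enorm_sphereExtension_rpow_le_of_le {n : ℕ} [NeZero n]
    (hq : 2 + 4 / n ≤ q) :
    ∃ C : ℝ≥0, ∀ {g : Euc (n + 1) → ℂ}, Integrable g (sphereMeasure (n + 1)) →
      ∫⁻ x, ‖sphereExtension g x‖ₑ ^ q ≤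
        C * (∫⁻ ω, ‖g ω‖ₑ ^ (2 : ℝ) ∂sphereMeasure (n + 1)) ^ (q / 2) := by
  set r : ℝ := 2 + 4 / n with hr
  have hr2 : 2 < r := two_lt_of_eq_two_add_four_div hr
  obtain ⟨C, hC⟩ := exists_lintegral_enorm_sphereExtension_rpow_le
    (.conjExponent (one_lt_two.trans hr2)) hr
  refine ⟨C, fun {g} hg ↦ ?_⟩
  set I := ∫⁻ ω, ‖g ω‖ₑ ^ (2 : ℝ) ∂sphereMeasure (n + 1)
  have hext := (continuous_sphereExtension hg).measurable
  calc ∫⁻ x, ‖sphereExtension g x‖ₑ ^ q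
      = ∫⁻ x, ‖sphereExtension g x‖ₑ ^ (q - r) * ‖sphereExtension g x‖ₑ ^ r := by
        refine lintegral_congr fun x ↦ ?_
        rw [← ENNReal.rpow_add_of_nonneg _ _ (by linarith) (by linarith), sub_add_cancel]
    _ ≤ ∫⁻ x, (I ^ (1 / 2 : ℝ)) ^ (q - r) * ‖sphereExtension g x‖ₑ ^ r := by
        gcongr with x
        exact enorm_sphereExtension_le hg.aestronglyMeasurable x
    _ = (I ^ (1 / 2 : ℝ)) ^ (q - r) * ∫⁻ x, ‖sphereExtension g x‖ₑ ^ r :=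
        lintegral_const_mul _ (by fun_prop)
    _ ≤ (I ^ (1 / 2 : ℝ)) ^ (q - r) * (C * I ^ (r / 2)) := by
        gcongr
        exact hC hg
    _ = C * I ^ (q / 2) := by
        rw [← ENNReal.rpow_mul, mul_left_comm,
          ← ENNReal.rpow_add_of_nonneg _ _ (by linarith) (by linarith)]
        ring_nf

end Extension

/-! ### Minkowski's integral inequality -/

section Minkowski

variable {α β : Type*} [MeasurableSpace α] [MeasurableSpace β] {μ : Measure α} {ν : Measure β}
  {p q : ℝ}

theorem exists_simpleFunc_lt_lintegral [SigmaFinite μ] {f : α → ℝ≥0∞} {c : ℝ≥0∞}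
    (hc : c < ∫⁻ x, f x ∂μ) :
    ∃ g : SimpleFunc α ℝ≥0, (∀ x, g x ≤ f x) ∧ ∫⁻ x, g x ∂μ < ∞ ∧ c < ∫⁻ x, g x ∂μ := by
  simp only [lintegral_eq_nnreal, lt_iSup_iff] at hc
  obtain ⟨g, hgf, hcg⟩ := hc
  rw [← SimpleFunc.lintegral_eq_lintegral] at hcg
  obtain ⟨g', hg', htop, hcg'⟩ := exists_lt_lintegral_simpleFunc_of_lt_lintegral hcg
  exact ⟨g', fun x ↦ (ENNReal.coe_le_coe.2 (hg' x)).trans (hgf x), htop, hcg'⟩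

theorem lintegral_lintegral_mul_le [SFinite μ] [SFinite ν] (hpq : p.HolderConjugate q)
    {F : α → β → ℝ≥0∞} (hF : Measurable (Function.uncurry F)) {u : α → ℝ≥0∞} (hu : Measurable u)
    (hutop : ∫⁻ x, u x ^ q ∂μ ≠ ∞) :
    ∫⁻ x, (∫⁻ y, F x y ∂ν) * u x ∂μ ≤
      (∫⁻ y, (∫⁻ x, F x y ^ p ∂μ) ^ (1 / p) ∂ν) * (∫⁻ x, u x ^ q ∂μ) ^ (1 / q) :=
  calc ∫⁻ x, (∫⁻ y, F x y ∂ν) * u x ∂μ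
      = ∫⁻ x, ∫⁻ y, F x y * u x ∂ν ∂μ :=
        lintegral_congr fun _ ↦ (lintegral_mul_const _ hF.of_uncurry_left).symm
    _ = ∫⁻ y, ∫⁻ x, F x y * u x ∂μ ∂ν :=
        lintegral_lintegral_swap (hF.mul (hu.comp measurable_fst)).aemeasurable
    _ ≤ ∫⁻ y, (∫⁻ x, F x y ^ p ∂μ) ^ (1 / p) * (∫⁻ x, u x ^ q ∂μ) ^ (1 / q) ∂ν :=
        lintegral_mono fun _ ↦ ENNReal.lintegral_mul_le_Lp_mul_Lq μ hpq
          hF.of_uncurry_right.aemeasurable hu.aemeasurable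
    _ = _ := lintegral_mul_const' _ _ <|
        ENNReal.rpow_ne_top_of_nonneg (one_div_nonneg.2 hpq.symm.nonneg) hutop

theorem rpow_lintegral_lintegral_rpow_le [SigmaFinite μ] [SFinite ν] (hp : 1 < p)
    {F : α → β → ℝ≥0∞} (hF : Measurable (Function.uncurry F)) :
    (∫⁻ x, (∫⁻ y, F x y ∂ν) ^ p ∂μ) ^ (1 / p) ≤ ∫⁻ y, (∫⁻ x, F x y ^ p ∂μ) ^ (1 / p) ∂ν := by
  have hpq := Real.HolderConjugate.conjExponent hp
  set q := p.conjExponent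
  rw [one_div, ENNReal.rpow_inv_le_iff hpq.pos, ← one_div]
  refine le_of_forall_lt fun c hc ↦ ?_
  obtain ⟨g, hgF, hgtop, hcg⟩ := exists_simpleFunc_lt_lintegral hc
  refine hcg.trans_le (le_rpow_of_le_mul_rpow hpq hgtop.ne ?_)
  have hpow (x : α) : ((g x : ℝ≥0∞) ^ (1 / q)) ^ q = g x := by
    rw [← ENNReal.rpow_mul, one_div_mul_cancel hpq.symm.ne_zero, ENNReal.rpow_one]
  have hmul (x : α) : (g x : ℝ≥0∞) ≤ (∫⁻ y, F x y ∂ν) * (g x : ℝ≥0∞) ^ (1 / q) :=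
    calc (g x : ℝ≥0∞) = (g x : ℝ≥0∞) ^ p⁻¹ * (g x : ℝ≥0∞) ^ (1 / q) := by
          rw [one_div, ← ENNReal.rpow_add_of_nonneg _ _ (inv_nonneg.2 hpq.nonneg)
            (inv_nonneg.2 hpq.symm.nonneg), hpq.inv_add_inv_eq_one, ENNReal.rpow_one]
      _ ≤ _ := by
          gcongr
          exact (ENNReal.rpow_inv_le_iff hpq.pos).2 (hgF x)
  have h := lintegral_lintegral_mul_le (ν := ν) hpq hF
    (u := fun x ↦ (g x : ℝ≥0∞) ^ (1 / q)) (by fun_prop) (by simpa only [hpow] using hgtop.ne)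
  simp only [hpow] at h
  exact (lintegral_mono hmul).trans h

theorem rpow_lintegral_lintegral_mul_enorm_rpow_two_le [SigmaFinite μ] [SFinite ν] (hq : 2 < q)
    {w : β → ℝ≥0∞} (hw : Measurable w) {G : α → β → ℂ} (hG : Measurable (Function.uncurry G)) :
    (∫⁻ x, (∫⁻ y, w y * ‖G x y‖ₑ ^ (2 : ℝ) ∂ν) ^ (q / 2) ∂μ) ^ (2 / q) ≤
      ∫⁻ y, w y * (∫⁻ x, ‖G x y‖ₑ ^ q ∂μ) ^ (2 / q) ∂ν := by
  have hF : Measurable (Function.uncurry fun x y ↦ w y * ‖G x y‖ₑ ^ (2 : ℝ)) :=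
    (hw.comp measurable_snd).mul (hG.enorm.pow_const _)
  have hq' : 0 ≤ q / 2 := by linarith
  have hmink := rpow_lintegral_lintegral_rpow_le (μ := μ) (ν := ν) (p := q / 2) (by linarith) hF
  rw [one_div_div] at hmink
  refine hmink.trans_eq (lintegral_congr fun y ↦ ?_)
  have hGy : Measurable fun x ↦ G x y := hG.of_uncurry_right
  simp_rw [ENNReal.mul_rpow_of_nonneg _ _ hq', ← ENNReal.rpow_mul, mul_div_cancel₀ q two_ne_zero]
  rw [lintegral_const_mul _ (by fun_prop), ENNReal.mul_rpow_of_nonneg _ _ (by positivity),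
    ← ENNReal.rpow_mul, div_mul_div_cancel₀ two_ne_zero, div_self (by linarith), ENNReal.rpow_one]

end Minkowski

/-! ### The time integral -/

section TrigonometricIntegral

variable {h : ℝ → ℂ}

theorem integral_cos_add_sin_mul_eq (A B : ℝ) (hh : Integrable h) (t : ℝ) :
    ∫ ρ, ((A * Real.cos (2 * Real.pi * (t * ρ)) + B * Real.sin (2 * Real.pi * (t * ρ)) : ℝ) : ℂ) *
        h ρ =
      (A + B * Complex.I) / 2 * 𝓕 h t + (A - B * Complex.I) / 2 * 𝓕 h (-t) := by
  have hint (s : ℝ) : Integrable fun ρ ↦ Real.fourierChar (-inner ℝ ρ s) • h ρ :=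
    integrable_fourierChar_smul hh (by fun_prop)
  rw [Real.fourier_eq, Real.fourier_eq, ← integral_const_mul, ← integral_const_mul,
    ← integral_add ((hint t).const_mul _) ((hint (-t)).const_mul _)]
  refine integral_congr_ae (.of_forall fun ρ ↦ ?_)
  simp only [Circle.smul_def, Real.fourierChar_apply, Complex.exp_mul_I, inner_neg_right, neg_neg,
    Real.inner_apply, smul_eq_mul, mul_neg, Complex.ofReal_neg, Complex.cos_neg, Complex.sin_neg,
    mul_comm ρ t]
  push_cast
  linear_combination (B * Complex.sin (2 * Real.pi * (t * ρ)) * h ρ) * Complex.I_sq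

theorem enorm_add_rpow_two_le (a b : ℂ) :
    ‖a + b‖ₑ ^ (2 : ℝ) ≤ 2 * ‖a‖ₑ ^ (2 : ℝ) + 2 * ‖b‖ₑ ^ (2 : ℝ) := by
  rw [← mul_add]
  refine (ENNReal.rpow_le_rpow (enorm_add_le a b) two_pos.le).trans ?_
  have h := ENNReal.rpow_add_le_mul_rpow_add_rpow ‖a‖ₑ ‖b‖ₑ one_le_two
  norm_num at h ⊢
  exact h

theorem exists_lintegral_enorm_integral_cos_add_sin_mul_le (A B : ℝ) :
    ∃ K : ℝ≥0, ∀ {h : ℝ → ℂ}, Integrable h → MemLp h 2 →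
      ∫⁻ t, ‖∫ ρ, ((A * Real.cos (2 * Real.pi * (t * ρ)) +
          B * Real.sin (2 * Real.pi * (t * ρ)) : ℝ) : ℂ) * h ρ‖ₑ ^ (2 : ℝ) ≤
        K * ∫⁻ ρ, ‖h ρ‖ₑ ^ (2 : ℝ) := by
  refine ⟨2 * ‖(A + B * Complex.I) / 2‖₊ ^ (2 : ℝ) + 2 * ‖(A - B * Complex.I) / 2‖₊ ^ (2 : ℝ),
    fun {h} hh hh2 ↦ ?_⟩
  have hmeas := (continuous_fourier h).measurable
  simp only [integral_cos_add_sin_mul_eq A B hh]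
  refine (lintegral_mono fun t ↦ enorm_add_rpow_two_le _ _).trans_eq ?_
  simp only [enorm_mul, ENNReal.mul_rpow_of_nonneg _ _ two_pos.le, ← mul_assoc]
  rw [lintegral_add_left (by fun_prop), lintegral_const_mul _ (by fun_prop),
    lintegral_const_mul _ (by fun_prop), lintegral_neg_eq_self (fun t ↦ ‖𝓕 h t‖ₑ ^ (2 : ℝ)),
    lintegral_enorm_fourier_rpow_two hh hh2, ← add_mul]
  simp [enorm_eq_nnnorm]

end TrigonometricIntegral

theorem rpow_neg_le_mul_one_add_rpow_neg {b ρ : ℝ} (hb : 0 ≤ b) (hρ : 1 ≤ ρ) :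
    ρ ^ (-b) ≤ 2 ^ b * (1 + ρ) ^ (-b) :=
  calc ρ ^ (-b) ≤ ((1 + ρ) / 2) ^ (-b) :=
        Real.rpow_le_rpow_of_nonpos (by linarith) (by linarith) (by linarith)
    _ = 2 ^ b * (1 + ρ) ^ (-b) := by
        rw [Real.div_rpow (by linarith) two_pos.le, Real.rpow_neg two_pos.le, div_inv_eq_mul,
          mul_comm]

theorem exists_abs_sphereFourier_sub_indicator_le (d : ℕ) [NeZero d] : ∃ A B C : ℝ, 0 ≤ C ∧
    ∀ t ≥ 1 / 2, ∀ ρ > 0, |sphereFourier d (2 * Real.pi * (t * ρ)) - (2 * Real.pi * t) ^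
      (-((d - 1) / 2 : ℝ)) * (Ici 1).indicator (fun ρ ↦ ρ ^ (-((d - 1) / 2 : ℝ))) ρ *
        (A * Real.cos (2 * Real.pi * (t * ρ)) + B * Real.sin (2 * Real.pi * (t * ρ)))| ≤
      C * (1 + ρ) ^ (-((d + 1) / 2 : ℝ)) := by
  obtain ⟨A, B, C, hC, -, hM⟩ := exists_abs_sphereFourier_sub_cos_sin_le (d := d)
  refine ⟨A, B, (1 + C) * 2 ^ ((d + 1) / 2 : ℝ), by positivity, fun t ht ρ hρ ↦ ?_⟩
  have hpi := Real.pi_gt_three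
  have hexp : -((d - 1) / 2 : ℝ) - 1 = -((d + 1) / 2 : ℝ) := by ring
  rw [mul_assoc (1 + C)]
  rcases le_or_gt 1 ρ with h1 | h1
  · have hr : ρ ≤ 2 * Real.pi * (t * ρ) := by nlinarith [mul_pos (by linarith : 0 < t) hρ]
    calc _ ≤ C * (2 * Real.pi * (t * ρ)) ^ (-((d - 1) / 2 : ℝ)) / (2 * Real.pi * (t * ρ)) := by
          rw [indicator_of_mem (mem_Ici.2 h1), ← Real.mul_rpow (by positivity) hρ.le, mul_assoc _ t]
          exact hM _ (h1.trans hr)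
      _ = C * (2 * Real.pi * (t * ρ)) ^ (-((d + 1) / 2 : ℝ)) := by
          rw [mul_div_assoc, ← Real.rpow_sub_one (hρ.trans_le hr).ne', hexp]
      _ ≤ (1 + C) * ρ ^ (-((d + 1) / 2 : ℝ)) := by
          gcongr ?_ * ?_
          · linarith
          · exact Real.rpow_le_rpow_of_nonpos hρ hr (neg_nonpos.2 (by positivity))
      _ ≤ _ := by
          gcongr
          exact rpow_neg_le_mul_one_add_rpow_neg (by positivity) h1
  · rw [indicator_of_notMem (notMem_Ici.2 h1), mul_zero, zero_mul, sub_zero]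
    calc _ ≤ (1 : ℝ) := abs_sphereFourier_le_one _
      _ = 1 * (2 ^ ((d + 1) / 2 : ℝ) * 2 ^ (-((d + 1) / 2 : ℝ))) := by
          rw [← Real.rpow_add two_pos, add_neg_cancel, Real.rpow_zero, one_mul]
      _ ≤ _ := by
          gcongr ?_ * (_ * ?_)
          · linarith
          · exact Real.rpow_le_rpow_of_nonpos (by positivity) (by linarith)
              (neg_nonpos.2 (by positivity))

theorem lintegral_rpow_mul_enorm_rpow_two_le {b : ℝ} {H : ℝ → ℂ} (hH : AEStronglyMeasurable H) :
    (∫⁻ ρ in Ioi (0 : ℝ), .ofReal ((1 + ρ) ^ (-(b + 1))) * ‖H ρ‖ₑ) ^ (2 : ℝ) ≤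
      (∫⁻ ρ : ℝ, .ofReal ((1 + ‖ρ‖) ^ (-2 : ℝ))) *
        ∫⁻ ρ in Ioi (0 : ℝ), .ofReal ((1 + ρ) ^ (-(2 * b))) * ‖H ρ‖ₑ ^ (2 : ℝ) := by
  have hsq (c : ℝ) {ρ : ℝ} (hρ : 0 < ρ) :
      ENNReal.ofReal ((1 + ρ) ^ (-c)) ^ (2 : ℝ) = .ofReal ((1 + ρ) ^ (-(2 * c))) := by
    rw [ENNReal.ofReal_rpow_of_nonneg (by positivity) two_pos.le,
      ← Real.rpow_mul (by positivity), neg_mul, mul_comm c]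
  calc _ = (∫⁻ ρ in Ioi (0 : ℝ), .ofReal ((1 + ρ) ^ (-1 : ℝ)) *
          (.ofReal ((1 + ρ) ^ (-b)) * ‖H ρ‖ₑ)) ^ (2 : ℝ) := by
        congr 1
        refine setLIntegral_congr_fun measurableSet_Ioi fun ρ (hρ : 0 < ρ) ↦ ?_
        rw [← mul_assoc, ← ENNReal.ofReal_mul (by positivity), ← Real.rpow_add (by positivity),
          neg_add_rev]
    _ ≤ ((∫⁻ ρ in Ioi (0 : ℝ), .ofReal ((1 + ρ) ^ (-1 : ℝ)) ^ (2 : ℝ)) ^ (1 / 2 : ℝ) *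
          (∫⁻ ρ in Ioi (0 : ℝ), (.ofReal ((1 + ρ) ^ (-b)) * ‖H ρ‖ₑ) ^ (2 : ℝ)) ^ (1 / 2 : ℝ)) ^
            (2 : ℝ) := by
        gcongr
        exact ENNReal.lintegral_mul_le_Lp_mul_Lq _ .two_two (by fun_prop)
          ((by fun_prop : Measurable _).aemeasurable.mul hH.enorm.restrict)
    _ = (∫⁻ ρ in Ioi (0 : ℝ), .ofReal ((1 + ρ) ^ (-1 : ℝ)) ^ (2 : ℝ)) *
          ∫⁻ ρ in Ioi (0 : ℝ), (.ofReal ((1 + ρ) ^ (-b)) * ‖H ρ‖ₑ) ^ (2 : ℝ) := by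
        rw [ENNReal.mul_rpow_of_nonneg _ _ two_pos.le, ← ENNReal.rpow_mul, ← ENNReal.rpow_mul,
          one_div_mul_cancel two_ne_zero, ENNReal.rpow_one, ENNReal.rpow_one]
    _ ≤ _ := by
        refine mul_le_mul' ((setLIntegral_mono' measurableSet_Ioi fun ρ (hρ : 0 < ρ) ↦ ?_).trans
          (setLIntegral_le_lintegral _ _)) (setLIntegral_mono' measurableSet_Ioi
            fun ρ (hρ : 0 < ρ) ↦ ?_)
        · rw [hsq 1 hρ, mul_one, Real.norm_of_nonneg hρ.le]
        · rw [ENNReal.mul_rpow_of_nonneg _ _ two_pos.le, hsq b hρ]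

theorem abs_indicator_Ici_rpow_neg_le_one {b : ℝ} (hb : 0 ≤ b) (ρ : ℝ) :
    |(Ici 1).indicator (fun ρ : ℝ ↦ ρ ^ (-b)) ρ| ≤ 1 := by
  by_cases hρ : 1 ≤ ρ
  · rw [indicator_of_mem (mem_Ici.2 hρ), abs_of_nonneg (by positivity)]
    exact Real.rpow_le_one_of_one_le_of_nonpos hρ (neg_nonpos.2 hb)
  · simp [indicator_of_notMem (notMem_Ici.2 (not_le.1 hρ))]

theorem memLp_indicator_Ici_rpow_neg_mul {b : ℝ} (hb : 0 ≤ b) {H : ℝ → ℂ} {p : ℝ≥0∞}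
    (hH : MemLp H p) :
    MemLp (fun ρ ↦ (((Ici 1).indicator (fun ρ : ℝ ↦ ρ ^ (-b)) ρ : ℝ) : ℂ) * H ρ) p := by
  have : Measurable ((Ici 1).indicator fun ρ : ℝ ↦ ρ ^ (-b)) :=
    (by fun_prop : Measurable _).indicator measurableSet_Ici
  refine hH.mono ((by fun_prop : Measurable _).aestronglyMeasurable.mul hH.1)
    (.of_forall fun ρ ↦ ?_)
  rw [norm_mul, Complex.norm_real]
  exact mul_le_of_le_one_left (norm_nonneg _) (abs_indicator_Ici_rpow_neg_le_one hb ρ)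

theorem enorm_setIntegral_mul_le {S : Set ℝ} (hS : MeasurableSet S) {M T w e : ℝ → ℝ} {c : ℝ}
    {H : ℝ → ℂ} (hMH : Integrable fun ρ ↦ (M ρ : ℂ) * H ρ)
    (hTH : Integrable fun ρ ↦ (T ρ : ℂ) * (w ρ * H ρ)) (hw : ∀ ρ ∉ S, w ρ = 0) (hc : |c| ≤ 1)
    (he : ∀ ρ ∈ S, |M ρ - c * w ρ * T ρ| ≤ e ρ) :
    ‖∫ ρ in S, (M ρ : ℂ) * H ρ‖ₑ ≤
      ‖∫ ρ, (T ρ : ℂ) * (w ρ * H ρ)‖ₑ + ∫⁻ ρ in S, .ofReal (e ρ) * ‖H ρ‖ₑ := by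
  have main : ∫ ρ in S, (T ρ : ℂ) * (w ρ * H ρ) = ∫ ρ, (T ρ : ℂ) * (w ρ * H ρ) :=
    setIntegral_eq_integral_of_forall_compl_eq_zero fun ρ hρ ↦ by simp [hw ρ hρ]
  have split : ∫ ρ in S, (M ρ : ℂ) * H ρ = c * (∫ ρ, (T ρ : ℂ) * (w ρ * H ρ)) +
      ∫ ρ in S, ((M ρ - c * w ρ * T ρ : ℝ) : ℂ) * H ρ := by
    rw [← main, ← integral_const_mul, ← sub_eq_iff_eq_add',
      ← integral_sub hMH.restrict (hTH.const_mul _).restrict]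
    congr with ρ
    push_cast
    ring
  rw [split]
  refine (enorm_add_le _ _).trans (add_le_add ?_ ?_)
  · rw [enorm_mul]
    refine mul_le_of_le_one_left' ?_
    rwa [← ofReal_norm, Complex.norm_real, ENNReal.ofReal_le_one]
  · refine (enorm_integral_le_lintegral_enorm _).trans (setLIntegral_mono' hS fun ρ hρ ↦ ?_)
    rw [enorm_mul, ← ofReal_norm, Complex.norm_real]
    gcongr
    exact he ρ hρ

theorem exists_enorm_setIntegral_sphereFourier_mul_le (d : ℕ) [NeZero d] :
    ∃ A B : ℝ, ∃ C : ℝ≥0, ∀ t ≥ 1 / 2, ∀ {H : ℝ → ℂ}, Integrable H →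
      ‖∫ ρ in Ioi 0, (sphereFourier d (2 * Real.pi * (t * ρ)) : ℂ) * H ρ‖ₑ ≤
        ‖∫ ρ, ((A * Real.cos (2 * Real.pi * (t * ρ)) + B * Real.sin (2 * Real.pi * (t * ρ)) :
          ℝ) : ℂ) * (((Ici 1).indicator (fun ρ ↦ ρ ^ (-((d - 1) / 2 : ℝ))) ρ : ℝ) * H ρ)‖ₑ +
        C * ∫⁻ ρ in Ioi 0, .ofReal ((1 + ρ) ^ (-((d + 1) / 2 : ℝ))) * ‖H ρ‖ₑ := by
  obtain ⟨A, B, C, hC, hM⟩ := exists_abs_sphereFourier_sub_indicator_le d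
  have ha : (0 : ℝ) ≤ (d - 1) / 2 := by
    have : (1 : ℝ) ≤ d := mod_cast NeZero.one_le
    linarith
  refine ⟨A, B, C.toNNReal, fun t ht H hH ↦ ?_⟩
  have hconst (ρ : ℝ) : C.toNNReal * (.ofReal ((1 + ρ) ^ (-((d + 1) / 2 : ℝ))) * ‖H ρ‖ₑ) =
      .ofReal (C * (1 + ρ) ^ (-((d + 1) / 2 : ℝ))) * ‖H ρ‖ₑ := by
    rw [ENNReal.ofReal_mul hC, ENNReal.ofNNReal_toNNReal, mul_assoc]
  simp only [← lintegral_const_mul' _ _ ENNReal.coe_ne_top, hconst]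
  have hdecay : |(2 * Real.pi * t) ^ (-((d - 1) / 2 : ℝ))| ≤ 1 := by
    rw [abs_of_nonneg (Real.rpow_nonneg (by positivity) _)]
    exact Real.rpow_le_one_of_one_le_of_nonpos (by nlinarith [Real.pi_gt_three])
      (neg_nonpos.2 ha)
  refine enorm_setIntegral_mul_le measurableSet_Ioi ?_ ?_ (fun ρ hρ ↦ ?_) hdecay (hM t ht)
  · have := (differentiable_sphereFourier (d := d)).continuous
    refine hH.bdd_mul (c := 1) (by fun_prop) (.of_forall fun ρ ↦ ?_)
    simpa using abs_sphereFourier_le_one _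
  · refine (memLp_one_iff_integrable.1 (memLp_indicator_Ici_rpow_neg_mul ha
      (memLp_one_iff_integrable.2 hH))).bdd_mul (c := |A| + |B|) (by fun_prop)
        (.of_forall fun ρ ↦ ?_)
    rw [Complex.norm_real]
    refine (abs_add_le _ _).trans ?_
    rw [abs_mul, abs_mul]
    gcongr
    · exact mul_le_of_le_one_right (abs_nonneg _) (Real.abs_cos_le_one _)
    · exact mul_le_of_le_one_right (abs_nonneg _) (Real.abs_sin_le_one _)
  · exact indicator_of_notMem (fun h ↦ hρ (zero_lt_one.trans_le (mem_Ici.1 h))) _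

theorem lintegral_enorm_indicator_Ici_rpow_neg_mul_rpow_two_le {b : ℝ} (hb : 0 ≤ b)
    (H : ℝ → ℂ) :
    ∫⁻ ρ, ‖(((Ici 1).indicator (fun ρ : ℝ ↦ ρ ^ (-b)) ρ : ℝ) : ℂ) * H ρ‖ₑ ^ (2 : ℝ) ≤
      .ofReal (2 ^ (2 * b)) *
        ∫⁻ ρ in Ioi (0 : ℝ), .ofReal ((1 + ρ) ^ (-(2 * b))) * ‖H ρ‖ₑ ^ (2 : ℝ) := by
  rw [← lintegral_const_mul' _ _ ENNReal.ofReal_ne_top, ← lintegral_indicator measurableSet_Ioi]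
  refine lintegral_mono fun ρ ↦ ?_
  by_cases hρ : 1 ≤ ρ
  · have hρ0 : 0 < ρ := zero_lt_one.trans_le hρ
    rw [indicator_of_mem (mem_Ioi.2 hρ0), indicator_of_mem (mem_Ici.2 hρ), enorm_mul,
      ENNReal.mul_rpow_of_nonneg _ _ two_pos.le, ← mul_assoc, ← ofReal_norm,
      Complex.norm_of_nonneg (by positivity), ENNReal.ofReal_rpow_of_nonneg (by positivity)
      two_pos.le, ← ENNReal.ofReal_mul (by positivity), ← Real.rpow_mul hρ0.le, neg_mul,
      mul_comm b]
    gcongr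
    exact rpow_neg_le_mul_one_add_rpow_neg (by positivity) hρ
  · simp [indicator_of_notMem (notMem_Ici.2 (not_le.1 hρ))]

theorem setLIntegral_rpow_two_le_of_le_add_const {α : Type*} [MeasurableSpace α] {μ : Measure α}
    {S : Set α} (hS : MeasurableSet S) {f g : α → ℝ≥0∞} {c : ℝ≥0∞} (h : ∀ t ∈ S, f t ≤ g t + c) :
    ∫⁻ t in S, f t ^ (2 : ℝ) ∂μ ≤ 2 * ((∫⁻ t, g t ^ (2 : ℝ) ∂μ) + c ^ (2 : ℝ) * μ S) :=
  calc _ ≤ ∫⁻ t in S, 2 * (g t ^ (2 : ℝ) + c ^ (2 : ℝ)) ∂μ := by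
        refine setLIntegral_mono' hS fun t ht ↦ ?_
        refine (ENNReal.rpow_le_rpow (h t ht) two_pos.le).trans
          ((ENNReal.rpow_add_le_mul_rpow_add_rpow _ _ one_le_two).trans_eq ?_)
        norm_num
    _ ≤ _ := by
        rw [lintegral_const_mul' _ _ (by simp), lintegral_add_right _ measurable_const,
          setLIntegral_const]
        gcongr
        exact Measure.restrict_le_self

theorem exists_lintegral_enorm_setIntegral_sphereFourier_mul_le (d : ℕ) [NeZero d] :
    ∃ K : ℝ≥0, ∀ {H : ℝ → ℂ}, Integrable H → MemLp H 2 →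
      ∫⁻ t in Icc (1 / 2) 4,
          ‖∫ ρ in Ioi 0, (sphereFourier d (2 * Real.pi * (t * ρ)) : ℂ) * H ρ‖ₑ ^ (2 : ℝ) ≤
        K * ∫⁻ ρ in Ioi 0, .ofReal ((1 + ρ) ^ (-(d - 1 : ℝ))) * ‖H ρ‖ₑ ^ (2 : ℝ) := by
  have ha : (0 : ℝ) ≤ (d - 1) / 2 := by
    have : (1 : ℝ) ≤ d := mod_cast NeZero.one_le
    linarith
  obtain ⟨A, B, C, hC⟩ := exists_enorm_setIntegral_sphereFourier_mul_le d
  obtain ⟨K, hK⟩ := exists_lintegral_enorm_integral_cos_add_sin_mul_le A B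
  obtain ⟨I, hI⟩ : ∃ I : ℝ≥0, ∫⁻ ρ : ℝ, .ofReal ((1 + ‖ρ‖) ^ (-2 : ℝ)) = (I : ℝ≥0∞) :=
    ⟨_, (ENNReal.coe_toNNReal (finite_integral_one_add_norm (by norm_num)).ne).symm⟩
  refine ⟨2 * (K * (2 ^ (d - 1 : ℝ) : ℝ).toNNReal + C ^ (2 : ℝ) * I * 4),
    fun {H} hH hH2 ↦ ?_⟩
  have hw := memLp_indicator_Ici_rpow_neg_mul ha (memLp_one_iff_integrable.2 hH)
  have hmain := (hK (memLp_one_iff_integrable.1 hw)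
    (memLp_indicator_Ici_rpow_neg_mul ha hH2)).trans
      (mul_le_mul_right (lintegral_enorm_indicator_Ici_rpow_neg_mul_rpow_two_le ha H) _)
  have herr := lintegral_rpow_mul_enorm_rpow_two_le (b := (d - 1) / 2) hH.1
  rw [hI] at herr
  have hexp : ((d - 1) / 2 + 1 : ℝ) = (d + 1) / 2 := by ring
  rw [mul_div_cancel₀ _ (two_ne_zero' ℝ)] at hmain herr
  rw [hexp] at herr
  refine (setLIntegral_rpow_two_le_of_le_add_const measurableSet_Icc fun t ht ↦
    hC t ht.1 hH).trans ?_
  rw [ENNReal.mul_rpow_of_nonneg _ _ two_pos.le, Real.volume_Icc]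
  have hvol : ENNReal.ofReal (4 - 1 / 2) ≤ 4 :=
    (ENNReal.ofReal_le_ofReal (by norm_num : (4 - 1 / 2 : ℝ) ≤ 4)).trans_eq (by simp)
  refine (mul_le_mul_right (add_le_add hmain
    (mul_le_mul' (mul_le_mul_right herr _) hvol)) _).trans_eq ?_
  push_cast
  rw [← ENNReal.coe_rpow_of_nonneg _ two_pos.le, ENNReal.ofNNReal_toNNReal]
  ring

/-! ### Spherical means of band-limited functions -/

section RadialProfile

variable {d : ℕ} {h : Euc d → ℂ}

/-- The function `H_x` of the radial frequency `ρ` for which the spherical mean of radius `t` of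
`𝓕⁻ h` at `x` is `∫ σ̂(tρ) H_x(ρ) dρ` over `ρ > 0`; polar coordinates in frequency space express it
through the extension operator. -/
def radialProfile (h : Euc d → ℂ) (x : Euc d) (ρ : ℝ) : ℂ :=
  ((sphereArea d).toReal * ρ ^ (d - 1) : ℝ) * sphereExtension (fun ω ↦ h (ρ • ω)) (ρ • x)

theorem enorm_radialProfile (h : Euc d → ℂ) (x : Euc d) {ρ : ℝ} (hρ : 0 ≤ ρ) :
    ‖radialProfile h x ρ‖ₑ = sphereArea d * .ofReal (ρ ^ (d - 1)) *
      ‖sphereExtension (fun ω ↦ h (ρ • ω)) (ρ • x)‖ₑ := by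
  rw [radialProfile, enorm_mul, ← ofReal_norm, Complex.norm_of_nonneg (by positivity),
    ENNReal.ofReal_mul ENNReal.toReal_nonneg, ENNReal.ofReal_toReal (sphereArea_ne_top d)]

variable [NeZero d]

theorem measurable_radialProfile (hh : Measurable h) :
    Measurable (Function.uncurry (radialProfile h)) := by
  have hphase : Measurable fun p : (Euc d × ℝ) × Euc d ↦
      (Real.fourierChar (inner ℝ (p.1.2 • p.1.1) p.2) : ℂ) :=
    measurable_fourierChar_comp (by fun_prop)
  have hext : Measurable fun p : Euc d × ℝ ↦ sphereExtension (fun ω ↦ h (p.2 • ω)) (p.2 • p.1) :=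
    (StronglyMeasurable.integral_prod_right' (ν := sphereMeasure d)
      (f := fun p : (Euc d × ℝ) × Euc d ↦
        (Real.fourierChar (inner ℝ (p.1.2 • p.1.1) p.2) : ℂ) * h (p.1.2 • p.2))
      (hphase.mul (by fun_prop)).stronglyMeasurable).measurable
  exact .mul (by fun_prop) hext

theorem isTestFunction_radialProfile (hh : IsTestFunction h) (x : Euc d) :
    IsTestFunction (radialProfile h x) := by
  obtain ⟨K, hK⟩ := hh.bounded
  obtain ⟨R, hR⟩ := hh.hasCompactSupport.isBounded.subset_closedBall 0
  have hsupp : ∀ ρ ∉ Icc (-R) R, radialProfile h x ρ = 0 := fun ρ hρ ↦ by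
    rw [radialProfile, sphereExtension, integral_eq_zero_of_ae, mul_zero]
    filter_upwards [sphereMeasure_ae_norm_eq_one d] with ω hω
    have hnot : ρ • ω ∉ tsupport h := fun hmem ↦ hρ <| abs_le.1 <| by
      simpa [norm_smul, hω] using hR hmem
    simp [image_eq_zero_of_notMem_tsupport hnot]
  have hK0 : 0 ≤ K := (norm_nonneg _).trans (hK 0)
  refine ⟨(measurable_radialProfile hh.measurable).of_uncurry_left,
    ⟨(sphereArea d).toReal * |R| ^ (d - 1) * K, fun ρ ↦ ?_⟩, .intro isCompact_Icc hsupp⟩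
  by_cases hρ : ρ ∈ Icc (-R) R
  · have hρR : |ρ| ≤ |R| := (abs_le.2 hρ).trans (le_abs_self R)
    rw [radialProfile, norm_mul, Complex.norm_real, norm_mul, norm_pow,
      Real.norm_of_nonneg ENNReal.toReal_nonneg, Real.norm_eq_abs]
    gcongr
    refine (norm_integral_le_of_norm_le_const (C := K)
      (.of_forall fun ω ↦ (Circle.norm_smul _ _).trans_le (hK _))).trans_eq (by simp)
  · rw [hsupp ρ hρ, norm_zero]
    positivity

theorem sphAvg_fourierInv (hh : Integrable h) {t : ℝ} (ht : 0 ≤ t) (x : Euc d) :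
    sphAvg (𝓕⁻ h) t x = ∫ ξ, (sphereFourier d (2 * Real.pi * (t * ‖ξ‖)) : ℂ) *
      Real.fourierChar (inner ℝ ξ x) • h ξ := by
  have hswap := integral_mul_fourier_comp (μ := sphereMeasure d) (integrable_const (1 : ℂ))
    (D := fun y ↦ t • y - x) (by fun_prop) hh
  simp only [one_mul] at hswap
  simp only [sphAvg, Real.fourierInv_eq_fourier_neg, neg_sub, hswap]
  congr with ξ
  have hphase (y : Euc d) : Real.fourierChar (-inner ℝ ξ (t • y - x)) • (1 : ℂ) =
      Real.fourierChar (inner ℝ ξ x) * Real.fourierChar (inner ℝ y (-(t • ξ))) := by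
    rw [Circle.smul_def, smul_eq_mul, mul_one, ← Circle.coe_mul, ← AddChar.map_add_eq_mul]
    congr 2
    rw [inner_sub_right, inner_smul_right, inner_neg_right, inner_smul_right, real_inner_comm ξ y]
    ring
  simp only [hphase, integral_const_mul, integral_fourierChar_inner_sphereMeasure, norm_neg,
    norm_smul, Real.norm_of_nonneg ht, Circle.smul_def, smul_eq_mul]
  ring

theorem sphAvg_fourierInv_eq_setIntegral_radialProfile (hh : Integrable h) {t : ℝ} (ht : 0 ≤ t)
    (x : Euc d) : sphAvg (𝓕⁻ h) t x =
      ∫ ρ in Ioi 0, (sphereFourier d (2 * Real.pi * (t * ρ)) : ℂ) * radialProfile h x ρ := by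
  have hint : Integrable fun ξ ↦ (sphereFourier d (2 * Real.pi * (t * ‖ξ‖)) : ℂ) *
      Real.fourierChar (inner ℝ ξ x) • h ξ := by
    have := (differentiable_sphereFourier (d := d)).continuous
    refine (integrable_fourierChar_smul hh (by fun_prop)).bdd_mul (c := 1) (by fun_prop)
      (.of_forall fun ξ ↦ ?_)
    simpa using abs_sphereFourier_le_one _
  rw [sphAvg_fourierInv hh ht, integral_eq_integral_Ioi_integral_sphereMeasure hint]
  refine setIntegral_congr_fun measurableSet_Ioi fun ρ (hρ : 0 < ρ) ↦ ?_
  have hsphere : ∫ ω, (sphereFourier d (2 * Real.pi * (t * ‖ρ • ω‖)) : ℂ) *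
      Real.fourierChar (inner ℝ (ρ • ω) x) • h (ρ • ω) ∂sphereMeasure d =
        sphereFourier d (2 * Real.pi * (t * ρ)) *
          sphereExtension (fun ω ↦ h (ρ • ω)) (ρ • x) := by
    rw [sphereExtension, ← integral_const_mul]
    refine integral_congr_ae ?_
    filter_upwards [sphereMeasure_ae_norm_eq_one d] with ω hω
    rw [norm_smul, hω, mul_one, Real.norm_of_nonneg hρ.le, real_inner_smul_left,
      real_inner_smul_left, real_inner_comm]
  simp only [hsphere, radialProfile, Complex.real_smul]
  ring

theorem exists_setLIntegral_enorm_sphAvg_fourierInv_le (d : ℕ) [NeZero d] :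
    ∃ K : ℝ≥0, ∀ {h : Euc d → ℂ}, IsTestFunction h → ∀ x,
      ∫⁻ t in Icc (1 / 2) 4, ‖sphAvg (𝓕⁻ h) t x‖ₑ ^ (2 : ℝ) ≤
        K * ∫⁻ ρ in Ioi 0, .ofReal ((1 + ρ) ^ (-(d - 1 : ℝ))) *
          ‖radialProfile h x ρ‖ₑ ^ (2 : ℝ) := by
  obtain ⟨K, hK⟩ := exists_lintegral_enorm_setIntegral_sphereFourier_mul_le d
  refine ⟨K, fun {h} hh x ↦ ?_⟩
  have hprofile := isTestFunction_radialProfile hh x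
  refine (setLIntegral_congr_fun measurableSet_Icc fun t ht ↦ ?_).trans_le
    (hK hprofile.integrable (hprofile.memLp 2))
  rw [sphAvg_fourierInv_eq_setIntegral_radialProfile hh.integrable
    (one_half_pos.le.trans ht.1)]

end RadialProfile

section MixedNorm

theorem rpow_neg_mul_rpow_le {n a ρ : ℝ} (ha : a ≤ n) (hρ : 0 < ρ) :
    (1 + ρ) ^ (-n) * ρ ^ (2 * n - a) ≤ ρ ^ n * (1 + ρ) ^ (-a) :=
  calc (1 + ρ) ^ (-n) * ρ ^ (2 * n - a)
      = (1 + ρ) ^ (-n) * (ρ ^ n * ρ ^ (n - a)) := by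
        rw [← Real.rpow_add hρ]
        ring_nf
    _ ≤ (1 + ρ) ^ (-n) * (ρ ^ n * (1 + ρ) ^ (n - a)) := by
        gcongr
        linarith
    _ = ρ ^ n * (1 + ρ) ^ (-a) := by
        rw [mul_left_comm, ← Real.rpow_add (by positivity)]
        ring_nf

variable {n : ℕ} {h : Euc (n + 1) → ℂ} {a q : ℝ}

theorem sphereArea_mul_setLIntegral_le (ha : a ≤ n) (hh : Measurable h) :
    sphereArea (n + 1) * ∫⁻ ρ in Ioi (0 : ℝ), .ofReal ((1 + ρ) ^ (-(n : ℝ))) *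
        (.ofReal (ρ ^ (2 * n - a)) * ∫⁻ ω, ‖h (ρ • ω)‖ₑ ^ (2 : ℝ) ∂sphereMeasure (n + 1)) ≤
      ∫⁻ ξ, .ofReal ((1 + ‖ξ‖) ^ (-a)) * ‖h ξ‖ₑ ^ (2 : ℝ) := by
  rw [lintegral_eq_sphereArea_mul_lintegral (by fun_prop)]
  gcongr sphereArea (n + 1) * ?_
  refine setLIntegral_mono' measurableSet_Ioi fun ρ (hρ : 0 < ρ) ↦ ?_
  have hsphere : ∫⁻ ω, .ofReal ((1 + ‖ρ • ω‖) ^ (-a)) * ‖h (ρ • ω)‖ₑ ^ (2 : ℝ)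
      ∂sphereMeasure (n + 1) = .ofReal ((1 + ρ) ^ (-a)) *
        ∫⁻ ω, ‖h (ρ • ω)‖ₑ ^ (2 : ℝ) ∂sphereMeasure (n + 1) := by
    rw [← lintegral_const_mul' _ _ ENNReal.ofReal_ne_top]
    refine lintegral_congr_ae ?_
    filter_upwards [sphereMeasure_ae_norm_eq_one (n + 1)] with ω hω
    rw [norm_smul, hω, mul_one, Real.norm_of_nonneg hρ.le]
  rw [hsphere, ← mul_assoc, ← mul_assoc, ← ENNReal.ofReal_mul (by positivity),
    ← ENNReal.ofReal_mul (by positivity)]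
  gcongr ENNReal.ofReal ?_ * _
  simpa only [Nat.add_sub_cancel, Real.rpow_natCast] using rpow_neg_mul_rpow_le ha hρ

theorem enorm_radialProfile_rpow_two_le (hh : Measurable h) (x : Euc (n + 1)) {ρ : ℝ}
    (hρ : 0 ≤ ρ) : ‖radialProfile h x ρ‖ₑ ^ (2 : ℝ) ≤
      sphereArea (n + 1) ^ (2 : ℝ) * (.ofReal (ρ ^ (2 * n : ℝ)) *
        ∫⁻ ω, ‖h (ρ • ω)‖ₑ ^ (2 : ℝ) ∂sphereMeasure (n + 1)) := by
  have hext := ENNReal.rpow_le_rpow (enorm_sphereExtension_le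
    (hh.comp (measurable_const_smul ρ)).aestronglyMeasurable (ρ • x)) zero_le_two
  rw [← ENNReal.rpow_mul, one_div_mul_cancel two_ne_zero, ENNReal.rpow_one] at hext
  rw [enorm_radialProfile h x hρ, Nat.add_sub_cancel, ENNReal.mul_rpow_of_nonneg _ _ zero_le_two,
    ENNReal.mul_rpow_of_nonneg _ _ zero_le_two, mul_assoc,
    ENNReal.ofReal_rpow_of_nonneg (by positivity) zero_le_two, ← Real.rpow_natCast,
    ← Real.rpow_mul hρ, mul_comm (n : ℝ)]
  gcongr
  exact hext

theorem exists_setLIntegral_enorm_sphAvg_fourierInv_le_lintegral (n : ℕ) :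
    ∃ K : ℝ≥0, ∀ {h : Euc (n + 1) → ℂ}, IsTestFunction h → ∀ x,
      ∫⁻ t in Icc (1 / 2) 4, ‖sphAvg (𝓕⁻ h) t x‖ₑ ^ (2 : ℝ) ≤
        K * ∫⁻ ξ, ‖h ξ‖ₑ ^ (2 : ℝ) := by
  obtain ⟨K, hK⟩ := exists_setLIntegral_enorm_sphAvg_fourierInv_le (n + 1)
  refine ⟨K * (sphereArea (n + 1)).toNNReal, fun {h} hh x ↦ (hK hh x).trans ?_⟩
  rw [ENNReal.coe_mul, ENNReal.coe_toNNReal (sphereArea_ne_top _), mul_assoc]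
  gcongr K * ?_
  calc
    _ ≤ ∫⁻ ρ in Ioi (0 : ℝ), sphereArea (n + 1) ^ (2 : ℝ) * (.ofReal ((1 + ρ) ^ (-(n : ℝ))) *
          (.ofReal (ρ ^ (2 * n - 0 : ℝ)) *
            ∫⁻ ω, ‖h (ρ • ω)‖ₑ ^ (2 : ℝ) ∂sphereMeasure (n + 1))) := by
        refine setLIntegral_mono' measurableSet_Ioi fun ρ (hρ : 0 < ρ) ↦ ?_
        rw [mul_left_comm, sub_zero, Nat.cast_add_one, add_sub_cancel_right]
        gcongr
        exact enorm_radialProfile_rpow_two_le hh.measurable x hρ.le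
    _ = sphereArea (n + 1) * (sphereArea (n + 1) * ∫⁻ ρ in Ioi (0 : ℝ),
          .ofReal ((1 + ρ) ^ (-(n : ℝ))) * (.ofReal (ρ ^ (2 * n - 0 : ℝ)) *
            ∫⁻ ω, ‖h (ρ • ω)‖ₑ ^ (2 : ℝ) ∂sphereMeasure (n + 1))) := by
        rw [lintegral_const_mul' _ _
          (ENNReal.rpow_ne_top_of_nonneg zero_le_two (sphereArea_ne_top _)), ENNReal.rpow_two,
          sq, mul_assoc]
    _ ≤ _ := by
        gcongr
        simpa using sphereArea_mul_setLIntegral_le n.cast_nonneg hh.measurable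

theorem rpow_lintegral_enorm_radialProfile_eq {ρ : ℝ} (hρ : 0 < ρ)
    (hh : Integrable (fun ω ↦ h (ρ • ω)) (sphereMeasure (n + 1))) (hq : 0 < q) :
    (∫⁻ x, ‖radialProfile h x ρ‖ₑ ^ q) ^ (2 / q) =
      sphereArea (n + 1) ^ (2 : ℝ) * .ofReal (ρ ^ (2 * n - 2 * (n + 1) / q)) *
        (∫⁻ x, ‖sphereExtension (fun ω ↦ h (ρ • ω)) x‖ₑ ^ q) ^ (2 / q) := by
  have hext := (continuous_sphereExtension hh).measurable
  have hscale := lintegral_comp_inv_smul volume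
    (fun x ↦ ‖sphereExtension (fun ω ↦ h (ρ • ω)) x‖ₑ ^ q) (inv_pos.2 hρ)
  rw [inv_inv, finrank_euclideanSpace_fin] at hscale
  have hpow : ENNReal.ofReal (ρ ^ n) ^ (2 : ℝ) * .ofReal (ρ⁻¹ ^ (n + 1)) ^ (2 / q) =
      .ofReal (ρ ^ (2 * n - 2 * (n + 1) / q)) := by
    rw [ENNReal.ofReal_rpow_of_pos (by positivity), ENNReal.ofReal_rpow_of_pos (by positivity),
      ← ENNReal.ofReal_mul (by positivity), ← Real.rpow_natCast, ← Real.rpow_natCast,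
      Real.inv_rpow hρ.le, ← Real.rpow_neg hρ.le, ← Real.rpow_mul hρ.le, ← Real.rpow_mul hρ.le,
      ← Real.rpow_add hρ]
    push_cast
    ring_nf
  have hq2 : 0 ≤ 2 / q := by positivity
  simp_rw [enorm_radialProfile h _ hρ.le, ENNReal.mul_rpow_of_nonneg _ _ hq.le]
  rw [lintegral_const_mul _ (by fun_prop), hscale, Nat.add_sub_cancel]
  simp only [ENNReal.mul_rpow_of_nonneg _ _ hq2, ← ENNReal.rpow_mul, mul_div_cancel₀ _ hq.ne']
  rw [← hpow]
  ring

variable [NeZero n]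

theorem exists_rpow_lintegral_enorm_radialProfile_le (hq : 2 + 4 / n ≤ q) :
    ∃ C : ℝ≥0, ∀ {h : Euc (n + 1) → ℂ}, IsTestFunction h → ∀ {ρ : ℝ}, 0 < ρ →
      (∫⁻ x, ‖radialProfile h x ρ‖ₑ ^ q) ^ (2 / q) ≤ C * (.ofReal (ρ ^ (2 * n - 2 * (n + 1) / q)) *
        ∫⁻ ω, ‖h (ρ • ω)‖ₑ ^ (2 : ℝ) ∂sphereMeasure (n + 1)) := by
  obtain ⟨C, hC⟩ := exists_lintegral_enorm_sphereExtension_rpow_le_of_le hq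
  have hq0 : 0 < q := lt_of_lt_of_le (by positivity) hq
  refine ⟨(sphereArea (n + 1)).toNNReal ^ (2 : ℝ) * C ^ (2 / q), fun {h} hh {ρ} hρ ↦ ?_⟩
  obtain ⟨K, hK⟩ := hh.bounded
  have hg : Integrable (fun ω ↦ h (ρ • ω)) (sphereMeasure (n + 1)) :=
    .of_bound (hh.measurable.comp (measurable_const_smul ρ)).aestronglyMeasurable K
      (.of_forall fun ω ↦ hK _)
  rw [rpow_lintegral_enorm_radialProfile_eq hρ hg hq0]
  refine (mul_le_mul_right (ENNReal.rpow_le_rpow (hC hg) (by positivity)) _).trans_eq ?_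
  rw [ENNReal.mul_rpow_of_nonneg _ _ (by positivity), ← ENNReal.rpow_mul,
    div_mul_div_cancel₀ two_ne_zero, div_self hq0.ne', ENNReal.rpow_one, ENNReal.coe_mul,
    ENNReal.coe_rpow_of_nonneg _ two_pos.le, ENNReal.coe_rpow_of_nonneg _ (by positivity),
    ENNReal.coe_toNNReal (sphereArea_ne_top (n + 1))]
  ring

theorem exists_rpow_lintegral_enorm_sphAvg_le_lintegral_radialProfile (n : ℕ) (hq : 2 < q) :
    ∃ K : ℝ≥0, ∀ {h : Euc (n + 1) → ℂ}, IsTestFunction h →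
      (∫⁻ x, (∫⁻ t in Icc (1 / 2) 4, ‖sphAvg (𝓕⁻ h) t x‖ₑ ^ (2 : ℝ)) ^ (q / 2)) ^ (2 / q) ≤
        K * ∫⁻ ρ in Ioi 0, .ofReal ((1 + ρ) ^ (-(n : ℝ))) *
          (∫⁻ x, ‖radialProfile h x ρ‖ₑ ^ q) ^ (2 / q) := by
  obtain ⟨K, hK⟩ := exists_setLIntegral_enorm_sphAvg_fourierInv_le (n + 1)
  have hq2 : 0 ≤ q / 2 := by linarith
  refine ⟨K, fun {h} hh ↦ ?_⟩
  calc
    _ ≤ (∫⁻ x, (K * ∫⁻ ρ in Ioi 0, .ofReal ((1 + ρ) ^ (-(n : ℝ))) *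
          ‖radialProfile h x ρ‖ₑ ^ (2 : ℝ)) ^ (q / 2)) ^ (2 / q) := by
        gcongr with x
        simpa using hK hh x
    _ = K * (∫⁻ x, (∫⁻ ρ in Ioi 0, .ofReal ((1 + ρ) ^ (-(n : ℝ))) *
          ‖radialProfile h x ρ‖ₑ ^ (2 : ℝ)) ^ (q / 2)) ^ (2 / q) := by
        simp_rw [ENNReal.mul_rpow_of_nonneg _ _ hq2]
        rw [lintegral_const_mul' _ _ (by finiteness),
          ENNReal.mul_rpow_of_nonneg _ _ (by positivity), ← ENNReal.rpow_mul,
          div_mul_div_cancel₀ two_ne_zero, div_self (by linarith), ENNReal.rpow_one]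
    _ ≤ _ := by
        gcongr
        exact rpow_lintegral_lintegral_mul_enorm_rpow_two_le hq (by fun_prop)
          (measurable_radialProfile hh.measurable)

theorem two_mul_add_one_div_le (hq : 2 + 4 / n ≤ q) : 2 * (n + 1) / q ≤ n := by
  have hn : (0 : ℝ) < n := Nat.cast_pos.2 (NeZero.pos n)
  rw [div_le_iff₀ (lt_of_lt_of_le (by positivity) hq)]
  rw [add_div' _ _ _ hn.ne', div_le_iff₀ hn] at hq
  linarith

theorem exists_rpow_lintegral_setLIntegral_enorm_sphAvg_le (hq : 2 + 4 / n ≤ q) :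
    ∃ K : ℝ≥0, ∀ {h : Euc (n + 1) → ℂ}, IsTestFunction h →
      (∫⁻ x, (∫⁻ t in Icc (1 / 2) 4, ‖sphAvg (𝓕⁻ h) t x‖ₑ ^ (2 : ℝ)) ^ (q / 2)) ^ (2 / q) ≤
        K * ∫⁻ ξ, .ofReal ((1 + ‖ξ‖) ^ (-(2 * (n + 1) / q))) * ‖h ξ‖ₑ ^ (2 : ℝ) := by
  obtain ⟨K, hK⟩ := exists_rpow_lintegral_enorm_sphAvg_le_lintegral_radialProfile n
    ((two_lt_of_eq_two_add_four_div rfl).trans_le hq)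
  obtain ⟨C, hC⟩ := exists_rpow_lintegral_enorm_radialProfile_le hq
  refine ⟨K * C / (sphereArea (n + 1)).toNNReal, fun {h} hh ↦ (hK hh).trans ?_⟩
  rw [ENNReal.coe_div (by simp [ENNReal.toNNReal_eq_zero_iff, sphereArea_ne_zero,
    sphereArea_ne_top]), ENNReal.coe_mul, ENNReal.coe_toNNReal (sphereArea_ne_top _)]
  calc
    _ ≤ K * ∫⁻ ρ in Ioi (0 : ℝ), C * (.ofReal ((1 + ρ) ^ (-(n : ℝ))) *
          (.ofReal (ρ ^ (2 * n - 2 * (n + 1) / q)) *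
            ∫⁻ ω, ‖h (ρ • ω)‖ₑ ^ (2 : ℝ) ∂sphereMeasure (n + 1))) := by
        gcongr K * ?_
        refine setLIntegral_mono' measurableSet_Ioi fun ρ hρ ↦ ?_
        rw [mul_left_comm]
        gcongr
        exact hC hh hρ
    _ = K * C / sphereArea (n + 1) * (sphereArea (n + 1) * ∫⁻ ρ in Ioi (0 : ℝ),
          .ofReal ((1 + ρ) ^ (-(n : ℝ))) * (.ofReal (ρ ^ (2 * n - 2 * (n + 1) / q)) *
            ∫⁻ ω, ‖h (ρ • ω)‖ₑ ^ (2 : ℝ) ∂sphereMeasure (n + 1))) := by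
        rw [lintegral_const_mul' _ _ ENNReal.coe_ne_top, ← mul_assoc, ← mul_assoc,
          ENNReal.div_mul_cancel (sphereArea_ne_zero _) (sphereArea_ne_top _)]
    _ ≤ _ := by
        gcongr
        exact sphereArea_mul_setLIntegral_le (two_mul_add_one_div_le hq) hh.measurable

theorem exists_lqNorm_setLIntegral_enorm_sphAvg_le {q : ℝ≥0∞} (hq : .ofReal (2 + 4 / n) ≤ q) :
    ∃ K : ℝ≥0, ∀ {h : Euc (n + 1) → ℂ}, IsTestFunction h →
      lqNorm q (fun x ↦ (∫⁻ t in Icc (1 / 2) 4, ‖sphAvg (𝓕⁻ h) t x‖ₑ ^ (2 : ℝ)) ^ (1 / 2 : ℝ))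
          volume ≤
        (K * ∫⁻ ξ, .ofReal ((1 + ‖ξ‖) ^ (-(2 * (n + 1) / q.toReal))) * ‖h ξ‖ₑ ^ (2 : ℝ)) ^
          (1 / 2 : ℝ) := by
  rcases eq_or_ne q ∞ with rfl | hq_top
  · obtain ⟨K, hK⟩ := exists_setLIntegral_enorm_sphAvg_fourierInv_le_lintegral n
    refine ⟨K, fun {h} hh ↦ ?_⟩
    rw [lqNorm, if_pos rfl]
    refine essSup_le_of_ae_le _ (.of_forall fun x ↦ ENNReal.rpow_le_rpow ?_ (by positivity))
    simpa using hK hh x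
  · have hq_le := (ENNReal.ofReal_le_iff_le_toReal hq_top).1 hq
    have : 0 < q.toReal := lt_of_lt_of_le (by positivity) hq_le
    obtain ⟨K, hK⟩ := exists_rpow_lintegral_setLIntegral_enorm_sphAvg_le hq_le
    refine ⟨K, fun {h} hh ↦ ?_⟩
    have hhalf := ENNReal.rpow_le_rpow (hK hh) (one_half_pos (α := ℝ)).le
    rw [← ENNReal.rpow_mul, show 2 / q.toReal * (1 / 2) = 1 / q.toReal by ring] at hhalf
    simp_rw [lqNorm, if_neg hq_top, ← ENNReal.rpow_mul, one_div_mul_eq_div]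
    exact hhalf

end MixedNorm

/-! ### The dyadic pieces -/

section BetaJ

variable {β₀ : ℝ → ℝ} {b : ℝ}

theorem measurable_betaJ (hβ : Measurable β₀) (j : ℕ) : Measurable (betaJ β₀ j) := by
  cases j with
  | zero => exact hβ
  | succ j => exact (hβ.comp (measurable_const_mul _)).sub (hβ.comp (measurable_const_mul _))

theorem abs_betaJ_le (hβ : ∀ s, |β₀ s| ≤ b) (j : ℕ) (s : ℝ) : |betaJ β₀ j s| ≤ 2 * b := by
  cases j with
  | zero => exact (hβ s).trans (by linarith [(abs_nonneg _).trans (hβ s)])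
  | succ j => exact (abs_sub _ _).trans ((add_le_add (hβ _) (hβ _)).trans_eq (two_mul b).symm)

theorem betaJ_succ_apply (β₀ : ℝ → ℝ) (j : ℕ) (s : ℝ) :
    betaJ β₀ (j + 1) s = β₀ (s / 2 ^ (j + 1)) - β₀ (s / 2 ^ j) := by
  simp only [betaJ, ← Nat.cast_add_one, zpow_neg, zpow_natCast, inv_mul_eq_div]

theorem betaJ_eq_zero_of_two_pow_lt (hβ : ∀ s, 1 < |s| → β₀ s = 0) {j : ℕ} {s : ℝ}
    (hs : 2 ^ j < |s|) : betaJ β₀ j s = 0 := by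
  have hvanish : ∀ i ≤ j, β₀ (s / 2 ^ i) = 0 := fun i hij ↦ by
    apply hβ
    rw [abs_div, abs_of_pos (a := (2 : ℝ) ^ i) (by positivity), one_lt_div (by positivity)]
    exact (pow_le_pow_right₀ one_le_two hij).trans_lt hs
  cases j with
  | zero => simpa [betaJ] using hvanish 0 le_rfl
  | succ j => rw [betaJ_succ_apply, hvanish _ le_rfl, hvanish j j.le_succ, sub_zero]

theorem betaJ_eq_zero_of_one_add_lt (hβ : ∀ s, |s| < 1 / 2 → β₀ s = 1) {j : ℕ} {s : ℝ}
    (hs : 1 + |s| < 2 ^ j / 4) : betaJ β₀ j s = 0 := by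
  have habs := abs_nonneg s
  cases j with
  | zero => norm_num at hs; linarith
  | succ j =>
    have hone : ∀ i ≥ j, β₀ (s / 2 ^ i) = 1 := fun i hij ↦ by
      have := pow_le_pow_right₀ (one_le_two (α := ℝ)) hij
      apply hβ
      rw [abs_div, abs_of_pos (a := (2 : ℝ) ^ i) (by positivity), div_lt_iff₀ (by positivity)]
      rw [pow_succ] at hs
      linarith
    rw [betaJ_succ_apply, hone _ j.le_succ, hone j le_rfl, sub_self]

end BetaJ

section FrequencyLocalization

variable {d : ℕ} {β₀ : ℝ → ℝ} {b : ℝ}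

theorem norm_betaJ_mul_fourier_le (hβ : ∀ s, |β₀ s| ≤ b) (j : ℕ) (f : Euc d → ℂ) (ξ : Euc d) :
    ‖(betaJ β₀ j ‖ξ‖ : ℂ) * 𝓕 f ξ‖ ≤ 2 * b * ‖𝓕 f ξ‖ := by
  rw [norm_mul, Complex.norm_real]
  gcongr
  exact abs_betaJ_le hβ j _

theorem isTestFunction_betaJ_mul_fourier (hβ : Measurable β₀) (hβ_le : ∀ s, |β₀ s| ≤ b)
    (hβ_zero : ∀ s, 1 < |s| → β₀ s = 0) (j : ℕ) (f : Euc d → ℂ) :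
    IsTestFunction fun ξ ↦ (betaJ β₀ j ‖ξ‖ : ℂ) * 𝓕 f ξ where
  measurable := (((measurable_betaJ hβ j).comp measurable_norm).complex_ofReal).mul
    (continuous_fourier f).measurable
  bounded := by
    have hb : 0 ≤ b := (abs_nonneg _).trans (hβ_le 0)
    refine ⟨2 * b * ∫ x, ‖f x‖, fun ξ ↦ (norm_betaJ_mul_fourier_le hβ_le j f ξ).trans ?_⟩
    gcongr
    exact norm_fourier_le f ξ
  hasCompactSupport := by
    refine .intro (isCompact_closedBall 0 (2 ^ j)) fun ξ hξ ↦ ?_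
    rw [betaJ_eq_zero_of_two_pow_lt hβ_zero (by simpa using hξ), Complex.ofReal_zero, zero_mul]

theorem lintegral_weight_mul_enorm_betaJ_mul_fourier_le (hβ_le : ∀ s, |β₀ s| ≤ b)
    (hβ_one : ∀ s, |s| < 1 / 2 → β₀ s = 1) {a : ℝ} (ha : 0 ≤ a) (j : ℕ) (f : Euc d → ℂ) :
    ∫⁻ ξ, .ofReal ((1 + ‖ξ‖) ^ (-a)) * ‖(betaJ β₀ j ‖ξ‖ : ℂ) * 𝓕 f ξ‖ₑ ^ (2 : ℝ) ≤
      .ofReal ((2 ^ j / 4) ^ (-a)) * (.ofReal (2 * b) ^ (2 : ℝ) * ∫⁻ x, ‖f x‖ₑ ^ (2 : ℝ)) := by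
  have hb : 0 ≤ 2 * b := (abs_nonneg _).trans (abs_betaJ_le hβ_le j 0)
  calc
    _ ≤ ∫⁻ ξ, .ofReal ((2 ^ j / 4) ^ (-a)) *
          (.ofReal (2 * b) ^ (2 : ℝ) * ‖𝓕 f ξ‖ₑ ^ (2 : ℝ)) := by
        refine lintegral_mono fun ξ ↦ ?_
        rcases lt_or_ge (1 + ‖ξ‖) (2 ^ j / 4) with hξ | hξ
        · simp [betaJ_eq_zero_of_one_add_lt hβ_one (s := ‖ξ‖) (by simpa using hξ)]
        · rw [← ENNReal.mul_rpow_of_nonneg _ _ zero_le_two, ← ofReal_norm (𝓕 f ξ),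
            ← ENNReal.ofReal_mul hb, ← ofReal_norm]
          gcongr ENNReal.ofReal ?_ * ENNReal.ofReal ?_ ^ (2 : ℝ)
          · exact Real.rpow_le_rpow_of_nonpos (by positivity) hξ (neg_nonpos.2 ha)
          · exact norm_betaJ_mul_fourier_le hβ_le j f ξ
    _ ≤ _ := by
        rw [lintegral_const_mul' _ _ (by finiteness), lintegral_const_mul' _ _ (by finiteness)]
        gcongr _ * (_ * ?_)
        exact lintegral_enorm_fourier_rpow_two_le f

end FrequencyLocalization

section MixedNormCutoff

variable {α : Type*} [MeasurableSpace α] {μ : Measure α} {g g' : α → ℝ≥0∞} {q : ℝ≥0∞}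

theorem lqNorm_mono (h : ∀ x, g x ≤ g' x) : lqNorm q g μ ≤ lqNorm q g' μ := by
  rw [lqNorm, lqNorm]
  split_ifs
  · exact essSup_mono_ae (.of_forall h)
  · gcongr with x
    exact h x

theorem lqNorm_const_mul (hq : q ≠ 0) {c : ℝ≥0∞} (hc : c ≠ ∞) (g : α → ℝ≥0∞) :
    lqNorm q (fun x ↦ c * g x) μ = c * lqNorm q g μ := by
  rw [lqNorm, lqNorm]
  split_ifs with hq_top
  · exact ENNReal.essSup_const_mul
  · have hq_pos : 0 < q.toReal := ENNReal.toReal_pos hq hq_top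
    simp_rw [ENNReal.mul_rpow_of_nonneg _ _ hq_pos.le]
    rw [lintegral_const_mul' _ _ (ENNReal.rpow_ne_top_of_nonneg hq_pos.le hc),
      ENNReal.mul_rpow_of_nonneg _ _ (by positivity), ← ENNReal.rpow_mul,
      mul_one_div_cancel hq_pos.ne', ENNReal.rpow_one]

theorem mixedNorm_two_ofReal_mul_le {d : ℕ} (hq : q ≠ 0) {χ : ℝ → ℝ} {a : ℝ} {S : Set ℝ}
    (hχ : ∀ t, |χ t| ≤ a) (hS : MeasurableSet S) (hχS : Function.support χ ⊆ S)
    (F : Euc d → ℝ → ℂ) : mixedNorm d q 2 (fun x t ↦ (χ t : ℂ) * F x t) ≤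
      .ofReal a * lqNorm q (fun x ↦ (∫⁻ t in S, ‖F x t‖ₑ ^ (2 : ℝ)) ^ (1 / 2 : ℝ)) volume := by
  rw [mixedNorm, ← lqNorm_const_mul hq ENNReal.ofReal_ne_top]
  refine lqNorm_mono fun x ↦ ?_
  rw [lqNorm, if_neg ENNReal.ofNat_ne_top, ENNReal.toReal_ofNat, one_div,
    ENNReal.rpow_inv_le_iff two_pos, ENNReal.mul_rpow_of_nonneg _ _ zero_le_two,
    ← ENNReal.rpow_mul, inv_mul_cancel₀ two_ne_zero, ENNReal.rpow_one,
    ← lintegral_const_mul' _ _ (by finiteness),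
    ← lintegral_indicator hS]
  refine lintegral_mono fun t ↦ ?_
  by_cases ht : t ∈ S
  · rw [indicator_of_mem ht, ← ENNReal.mul_rpow_of_nonneg _ _ zero_le_two]
    gcongr
    rw [← enorm_eq_nnnorm, enorm_mul, ← ofReal_norm (χ t : ℂ), Complex.norm_real]
    gcongr
    exact hχ t
  · simp [ht, Function.notMem_support.1 fun h ↦ ht (hχS h)]

end MixedNormCutoff

theorem rpow_half_ofReal_two_pow_div_four (j : ℕ) (a : ℝ) :
    ENNReal.ofReal ((2 ^ j / 4) ^ (-(2 * a))) ^ (1 / 2 : ℝ) =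
      4 ^ a * (2 : ℝ≥0∞) ^ (-(j * a)) := by
  rw [ENNReal.ofReal_rpow_of_pos (by positivity), ← Real.rpow_mul (by positivity),
    Real.div_rpow (by positivity) (by positivity), ← Real.rpow_natCast, ← Real.rpow_mul two_pos.le,
    div_eq_mul_inv, ← Real.rpow_neg (by positivity), mul_comm, ENNReal.ofReal_mul (by positivity),
    ← ENNReal.ofReal_rpow_of_pos two_pos, ← ENNReal.ofReal_rpow_of_pos four_pos,
    ENNReal.ofReal_ofNat, ENNReal.ofReal_ofNat]
  ring_nf

theorem exists_lqNorm_setLIntegral_enorm_sphAvg_freqLoc_le {n : ℕ} [NeZero n] {β₀ : ℝ → ℝ} {b : ℝ}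
    (hβ : Measurable β₀) (hβ_le : ∀ s, |β₀ s| ≤ b) (hβ_one : ∀ s, |s| < 1 / 2 → β₀ s = 1)
    (hβ_zero : ∀ s, 1 < |s| → β₀ s = 0) {q : ℝ≥0∞} (hq : .ofReal (2 + 4 / n) ≤ q) :
    ∃ C : ℝ≥0, ∀ (j : ℕ) (f : Euc (n + 1) → ℂ),
      lqNorm q (fun x ↦ (∫⁻ t in Icc (1 / 2) 4,
          ‖sphAvg (freqLoc (n + 1) β₀ j f) t x‖ₑ ^ (2 : ℝ)) ^ (1 / 2 : ℝ)) volume ≤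
        C * (2 : ℝ≥0∞) ^ (-(j * ((n + 1) / q.toReal))) * eLpNorm f 2 volume := by
  obtain ⟨K, hK⟩ := exists_lqNorm_setLIntegral_enorm_sphAvg_le hq
  set e : ℝ := (n + 1) / q.toReal with he
  have he0 : 0 ≤ 2 * e := by positivity
  refine ⟨K ^ (1 / 2 : ℝ) * (4 ^ e) * (2 * b).toNNReal, fun j f ↦ ?_⟩
  calc
    _ ≤ (K * ∫⁻ ξ, .ofReal ((1 + ‖ξ‖) ^ (-(2 * (n + 1) / q.toReal))) *
          ‖(betaJ β₀ j ‖ξ‖ : ℂ) * 𝓕 f ξ‖ₑ ^ (2 : ℝ)) ^ (1 / 2 : ℝ) :=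
        hK (isTestFunction_betaJ_mul_fourier hβ hβ_le hβ_zero j f)
    _ ≤ (K * (.ofReal ((2 ^ j / 4) ^ (-(2 * e))) *
          (.ofReal (2 * b) ^ (2 : ℝ) * ∫⁻ x, ‖f x‖ₑ ^ (2 : ℝ)))) ^ (1 / 2 : ℝ) := by
        rw [mul_div_assoc, ← he]
        gcongr
        exact lintegral_weight_mul_enorm_betaJ_mul_fourier_le hβ_le hβ_one he0 j f
    _ = K ^ (1 / 2 : ℝ) * (4 ^ e * (2 : ℝ≥0∞) ^ (-(j * e)) *
          (.ofReal (2 * b) * eLpNorm f 2 volume)) := by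
        have hhalf : (0 : ℝ) ≤ 1 / 2 := by positivity
        rw [eLpNorm_eq_lintegral_rpow_enorm_toReal two_ne_zero ENNReal.ofNat_ne_top,
          ENNReal.toReal_ofNat]
        simp only [ENNReal.mul_rpow_of_nonneg _ _ hhalf, rpow_half_ofReal_two_pow_div_four,
          ← ENNReal.rpow_mul, mul_one_div_cancel (two_ne_zero (α := ℝ)), ENNReal.rpow_one]
    _ = _ := by
        rw [ENNReal.coe_mul, ENNReal.coe_mul, ENNReal.coe_rpow_of_nonneg _ (by positivity),
          ENNReal.coe_rpow_of_nonneg _ (by positivity), ENNReal.coe_ofNat, ← ENNReal.ofReal]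
        ring

theorem IsCutoff.exists_abs_le {χ : ℝ → ℝ} (hχ : IsCutoff χ) : ∃ a, ∀ t, |χ t| ≤ a :=
  hχ.1.continuous.bounded_above_of_compact_support
    (.of_support_subset_isCompact isCompact_Icc hχ.2.2)

theorem IsBump.exists_abs_le {β₀ : ℝ → ℝ} (hβ : IsBump β₀) : ∃ b, ∀ s, |β₀ s| ≤ b :=
  hβ.1.continuous.bounded_above_of_compact_support <|
    .intro (isCompact_closedBall 0 1) fun s hs ↦ hβ.2.2 s (by simpa using hs)

theorem stein_tomas_mixed_norm_general {d : ℕ} (hd : 2 ≤ d) {χ β₀ : ℝ → ℝ} {a b : ℝ}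
    (hχ : ∀ t, |χ t| ≤ a) (hχ_supp : Function.support χ ⊆ Icc (1 / 2) 4) (hβ : Measurable β₀)
    (hβ_le : ∀ s, |β₀ s| ≤ b) (hβ_one : ∀ s, |s| < 1 / 2 → β₀ s = 1)
    (hβ_zero : ∀ s, 1 < |s| → β₀ s = 0) {q : ℝ≥0∞}
    (hq : ENNReal.ofReal (2 * ((d : ℝ) + 1) / ((d : ℝ) - 1)) ≤ q) :
    ∃ C : ℝ≥0, ∀ (j : ℕ) (f : Euc d → ℂ), mixedNorm d q 2 (Aj d χ β₀ j f) ≤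
      C * (2 : ℝ≥0∞) ^ (-(j * d / q.toReal)) * eLpNorm f 2 volume := by
  obtain ⟨n, rfl⟩ : ∃ n, d = n + 1 := ⟨d - 1, by lia⟩
  have : NeZero n := ⟨by lia⟩
  have hn : (n : ℝ) ≠ 0 := NeZero.ne _
  rw [show 2 * (((n + 1 : ℕ) : ℝ) + 1) / (((n + 1 : ℕ) : ℝ) - 1) = 2 + 4 / n by
    push_cast [add_sub_cancel_right]
    field_simp
    ring] at hq
  have hq0 : q ≠ 0 := (lt_of_lt_of_le (ENNReal.ofReal_pos.2 (by positivity)) hq).ne'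
  obtain ⟨C, hC⟩ := exists_lqNorm_setLIntegral_enorm_sphAvg_freqLoc_le hβ hβ_le hβ_one hβ_zero hq
  refine ⟨a.toNNReal * C, fun j f ↦
    (mixedNorm_two_ofReal_mul_le hq0 hχ measurableSet_Icc hχ_supp _).trans ?_⟩
  rw [ENNReal.coe_mul, mul_assoc, mul_assoc, ← mul_assoc (C : ℝ≥0∞), mul_div_assoc]
  exact mul_le_mul_right (mod_cast hC j f) _

/-- Lemma 2.4 (Stein–Tomas estimate): for `d ≥ 2` and `2(d+1)/(d-1) ≤ q ≤ ∞`,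
`‖𝒜_j f‖_{L^q(L^2)} ≲ 2^{-jd/q} ‖f‖_{L^2}` uniformly in `j ≥ 0`. -/
theorem stein_tomas_mixed_norm (d : ℕ) (hd : 2 ≤ d) (χ β₀ : ℝ → ℝ)
    (hχ : IsCutoff χ) (hβ : IsBump β₀) (q : ℝ≥0∞)
    (hq : ENNReal.ofReal (2 * ((d : ℝ) + 1) / ((d : ℝ) - 1)) ≤ q) :
    ∃ C : ℝ≥0, ∀ (j : ℕ) (f : Euc d → ℂ),
      mixedNorm d q 2 (Aj d χ β₀ j f) ≤
        C * (2 : ℝ≥0∞) ^ (-(((j : ℝ) * d) / q.toReal)) * eLpNorm f 2 volume := by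
  obtain ⟨a, ha⟩ := hχ.exists_abs_le
  obtain ⟨b, hb⟩ := hβ.exists_abs_le
  exact stein_tomas_mixed_norm_general hd ha hχ.2.2 hβ.1.continuous.measurable hb hβ.2.1 hβ.2.2 hq
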